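/- (Decision-tree complexity of the line towering problem in ℝ³.) There exist constants C and D such that for every n ≥ 1 there is an algebraic decision tree of degree at most D over ℝ^{12n}, whose input encodes n red lines and n blue lines in ℝ³, each line given by a pair of points spanning it, of depth at most C·n^{4/3}, that decides, on every input in which each line's two defining points have distinct projections onto the first two coordinates (so every line is non-vertical), whether some red line passes above some blue line, i.e., whether there exist a red line ℓ, a blue line ℓ', and points (x, y, z) ∈ ℓ and (x, y, z') ∈ ℓ' with the same first two coordinates such that z > z'. -/

import Mathlib

/-!
A line that is not vertical has, after a shear making its projection a graph over the first axis,
the form `y = m x + c`, `z = s x + d`. For two lines with slopes `m < m'` the sign of a bilinear form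
in Plücker-type vectors of `ℝ⁶` decides whether the first passes above the second (`above_iff`).
Sorting the lines by slope and dividing recursively by slope (`dec_sort`, `dec_divide`) reduces the
problem to the following one: given `N` red and `N` blue vectors of `ℝ⁶`, is some red-blue inner
product negative? The recursion keeps the cost `O(N^{4/3})` of that problem, and lines parallel in
projection are dealt with by sorting. Degenerate inputs are handled by running the procedure on an
infinitesimal perturbation: the sign of a polynomial in `ε` near `0⁺` is the sign of its first
non-zero coefficient, and these coefficients are polynomials in the input (`core_pert`).

For vectors in general position the red vectors cut out a polyhedral cone in `ℝ⁶`, and the question is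
whether all blue vectors lie in it. A cone with `k` facets has `O(k²)` extreme rays (`card_Vx_le`),
because every ray is the lowest or the highest one of a face of small codimension. By random
sampling (`exists_good_sample`) there are `r` red vectors whose cone, divided into `O(r²)` simplicial
cells, is such that a cell is crossed by few red vectors and contains few blue vectors on average.
This has two uses.

* If no pair is bad, a certificate made of `O(N^{4/3})` polynomial sign tests of constant degree
  exists (`pair_cert`, with `N = t³` and `r = t`): it certifies the cells, the location of the blue
  vectors, and the red vectors missing each cell.
* A primal and a dual step with samples of size `r = N^{1/(3p)}`, for a large constant `p`, reduce a
  problem of size `N` to `O(r⁴)` problems of size `N / r³` (`cut_step`, `solve_rec`). The samples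
  are taken from a pool of `r⁶` vectors that approximates the whole set (`pool`), so that finding
  them costs little.

Only the number of questions counts, so a configuration may be regarded as one of a finite set of
candidates, one for each sign pattern of the tests. The logarithm of the number of patterns is
`O(N log N)` by a bound of Warren type (`card_patterns_le`). In the entropy game `Can`, questions
whose answer is not predictable are charged to this logarithm, at the rate of `w`. On a small
subproblem, either some test splits the candidates, or some candidate agrees with the majority on all
tests and the questions of its certificate are asked (`Can.unit`): an unexpected answer eliminates
most candidates, and otherwise the certificate is confirmed at its own cost. Subproblems of size
`r^{3c}` are solved in this way; with `p = c + k` they are reached after the constant number `k` of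
levels of recursion, so no factor growing with `N` is lost. The rate `w` is a power of `r^c`, and
`p` is chosen so large compared with `c` that the entropy term `w N log N` is `O(N^{4/3})`
(`core_generic`).
-/

/-- An algebraic decision tree over `ℝ^N` with output values in `β`:
each internal node is labeled by a polynomial in `N` variables and has three
children corresponding to the sign (negative / zero / positive) of the
polynomial at the input; each leaf is labeled by an output value. -/
inductive ADT (N : ℕ) (β : Type) : Type
  | leaf : β → ADT N β
  | node : MvPolynomial (Fin N) ℝ → ADT N β → ADT N β → ADT N β → ADT N β

namespace ADT

/-- Evaluating an algebraic decision tree on an input `x ∈ ℝ^N`. -/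
noncomputable def eval {N : ℕ} {β : Type} : ADT N β → (Fin N → ℝ) → β
  | leaf b, _ => b
  | node p tneg tzero tpos, x =>
      if MvPolynomial.eval x p < 0 then tneg.eval x
      else if MvPolynomial.eval x p = 0 then tzero.eval x
      else tpos.eval x

/-- The depth of an algebraic decision tree: the maximum number of internal
nodes on a root-to-leaf path. -/
def depth {N : ℕ} {β : Type} : ADT N β → ℕ
  | leaf _ => 0
  | node _ tneg tzero tpos => 1 + max (max tneg.depth tzero.depth) tpos.depth

/-- All node polynomials of the tree have total degree at most `D`. -/
def DegLE {N : ℕ} {β : Type} (D : ℕ) : ADT N β → Prop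
  | leaf _ => True
  | node p tneg tzero tpos => p.totalDegree ≤ D ∧ tneg.DegLE D ∧ tzero.DegLE D ∧ tpos.DegLE D

end ADT

/-- Index of the `c`-th coordinate of one of the two defining points
(`k = 0` or `1`) of the `i`-th red line. -/
def redIdx (n : ℕ) (i : Fin n) (k : Fin 2) (c : Fin 3) : Fin (12 * n) :=
  ⟨6 * (i : ℕ) + 3 * (k : ℕ) + (c : ℕ), by
    have := i.isLt; have := k.isLt; have := c.isLt; omega⟩

/-- Index of the `c`-th coordinate of one of the two defining points
(`k = 0` or `1`) of the `i`-th blue line. -/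
def blueIdx (n : ℕ) (i : Fin n) (k : Fin 2) (c : Fin 3) : Fin (12 * n) :=
  ⟨6 * n + 6 * (i : ℕ) + 3 * (k : ℕ) + (c : ℕ), by
    have := i.isLt; have := k.isLt; have := c.isLt; omega⟩

/-- One of the two points spanning the `i`-th red line. -/
def redPt (n : ℕ) (x : Fin (12 * n) → ℝ) (i : Fin n) (k : Fin 2) : Fin 3 → ℝ :=
  fun c => x (redIdx n i k c)

/-- One of the two points spanning the `i`-th blue line. -/
def bluePt (n : ℕ) (x : Fin (12 * n) → ℝ) (i : Fin n) (k : Fin 2) : Fin 3 → ℝ :=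
  fun c => x (blueIdx n i k c)

/-! ### Counting sign patterns of polynomials -/

namespace LT

open MvPolynomial

lemma hasDerivAt_eval_update {σ : Type*} [DecidableEq σ] (x : σ → ℝ) (i : σ)
    (p : MvPolynomial σ ℝ) :
    HasDerivAt (fun t => eval (Function.update x i t) p) (eval x (pderiv i p)) (x i) := by
  induction p using MvPolynomial.induction_on with
  | C a => simpa using hasDerivAt_const (x i) a
  | add p q hp hq => simp only [map_add]; exact hp.add hq
  | mul_X p j hp =>
    have hX : HasDerivAt (fun t => Function.update x i t j) (eval x (pderiv i (X j))) (x i) := by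
      by_cases h : j = i
      · subst h; simpa using hasDerivAt_id' (x j)
      · simpa [h, pderiv_X, Pi.single_apply, Ne.symm h] using hasDerivAt_const (x i) (x j)
    have := hp.mul hX
    simp only [Derivation.leibniz, smul_eq_mul, map_add, map_mul, eval_X]
    refine HasDerivAt.congr_deriv (f' := _) this ?_
    rw [Function.update_eq_self]; ring

lemma totalDegree_pderiv_le {σ : Type*} (i : σ) (p : MvPolynomial σ ℝ) :
    (pderiv i p).totalDegree ≤ p.totalDegree := by
  classical
  conv_lhs => rw [p.as_sum]
  rw [map_sum]
  refine totalDegree_finsetSum_le fun m hm => ?_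
  rw [pderiv_monomial]
  refine (totalDegree_monomial_le _ _).trans ?_
  refine le_trans ?_ (le_totalDegree hm)
  exact Finsupp.degree_mono (tsub_le_self : m - Finsupp.single i 1 ≤ m)

lemma abs_eval_le {σ : Type*} [Fintype σ] (p : MvPolynomial σ ℝ) :
    ∃ C : ℝ, 0 ≤ C ∧ ∀ x : σ → ℝ, |eval x p| ≤ C * (max 1 ‖x‖) ^ p.totalDegree := by
  refine ⟨∑ m ∈ p.support, |p.coeff m|, by positivity, fun x => ?_⟩
  rw [eval_eq, Finset.sum_mul]
  refine (Finset.abs_sum_le_sum_abs _ _).trans (Finset.sum_le_sum fun m hm => ?_)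
  rw [abs_mul]
  refine mul_le_mul_of_nonneg_left ?_ (abs_nonneg _)
  rw [Finset.abs_prod]
  calc ∏ i ∈ m.support, |x i ^ m i| ≤ ∏ i ∈ m.support, (max 1 ‖x‖) ^ m i := by
        refine Finset.prod_le_prod (fun _ _ => abs_nonneg _) fun i _ => ?_
        rw [abs_pow]
        exact pow_le_pow_left₀ (abs_nonneg _)
          (((norm_le_pi_norm x i).trans (le_max_right _ _))) _
    _ = (max 1 ‖x‖) ^ (∑ i ∈ m.support, m i) := by rw [Finset.prod_pow_eq_pow_sum]
    _ ≤ _ := pow_le_pow_right₀ (le_max_left _ _) (le_totalDegree hm)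

lemma exists_interp {σ : Type*} (Ω : Finset (σ → ℝ)) (f : Ω → ℝ) :
    ∃ p : MvPolynomial σ ℝ, ∀ x : Ω, eval x.1 p = f x := by
  classical
  have sep : ∀ x y : Ω, x ≠ y → ∃ p : MvPolynomial σ ℝ, eval x.1 p = 1 ∧ eval y.1 p = 0 := by
    intro x y h
    have : x.1 ≠ y.1 := fun e => h (Subtype.ext e)
    obtain ⟨i, hi⟩ := Function.ne_iff.1 this
    refine ⟨C (x.1 i - y.1 i)⁻¹ * (X i - C (y.1 i)), ?_, ?_⟩
    · simp [inv_mul_cancel₀ (sub_ne_zero.2 hi)]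
    · simp
  choose! P hP using sep
  refine ⟨∑ x : Ω, C (f x) * ∏ y ∈ Finset.univ.erase x, P x y, fun z => ?_⟩
  simp only [map_sum, map_mul, eval_C, map_prod]
  rw [Finset.sum_eq_single z]
  · rw [Finset.prod_eq_one, mul_one]
    intro y hy
    exact (hP z y (Finset.ne_of_mem_erase hy).symm).1
  · intro x _ hx
    rw [Finset.prod_eq_zero (i := z) (by simp [hx.symm]), mul_zero]
    exact (hP x z hx).2
  · simp

/-- Points on which each `x_i ^ e` agrees with a polynomial of degree less than `e` number at most
`e ^ N`: monomials with all exponents below `e` span all functions on the point set. -/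
lemma card_le_of_pow_eq {σ : Type*} [Fintype σ] (Ω : Finset (σ → ℝ)) (e : ℕ)
    (g : σ → MvPolynomial σ ℝ) (hg : ∀ i, (g i).totalDegree < e)
    (h : ∀ x ∈ Ω, ∀ i, x i ^ e = eval x (g i)) :
    Ω.card ≤ e ^ Fintype.card σ := by
  classical
  let b : (σ → Fin e) → (Ω → ℝ) := fun m x => ∏ i, x.1 i ^ (m i : ℕ)
  let res : MvPolynomial σ ℝ →ₗ[ℝ] (Ω → ℝ) :=
    { toFun := fun p x => eval x.1 p
      map_add' := by intros; ext; simp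
      map_smul' := by intros; ext; simp [smul_eval] }
  have key : ∀ d : ℕ, ∀ p : MvPolynomial σ ℝ, p.totalDegree ≤ d →
      res p ∈ Submodule.span ℝ (Set.range b) := by
    intro d
    induction d using Nat.strong_induction_on with
    | _ d ih =>
      intro p hp
      rw [p.as_sum, map_sum]
      refine Submodule.sum_mem _ fun m hm => ?_
      have hmd : m.degree ≤ d := (le_totalDegree hm).trans hp
      have e1 : res (monomial m (p.coeff m)) = p.coeff m • res (monomial m 1) := by
        rw [← map_smul, smul_monomial]; simp
      rw [e1]
      refine Submodule.smul_mem _ _ ?_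
      by_cases hlt : ∀ i, m i < e
      · refine Submodule.subset_span ⟨fun i => ⟨m i, hlt i⟩, ?_⟩
        ext x
        simp only [b, res, LinearMap.coe_mk, AddHom.coe_mk, eval_monomial, one_mul]
        rw [Finsupp.prod_fintype]; simp
      · push Not at hlt
        obtain ⟨i, hi⟩ := hlt
        set m' := m - Finsupp.single i e with hm'
        have hmm : m = m' + Finsupp.single i e := by
          rw [hm', tsub_add_cancel_of_le]
          simpa using hi
        have e2 : res (monomial m 1) = res (monomial m' 1 * g i) := by
          ext x
          simp only [res, LinearMap.coe_mk, AddHom.coe_mk, map_mul]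
          rw [← h x.1 x.2 i, hmm, ← mul_one (1 : ℝ), ← monomial_mul, map_mul]
          simp [eval_monomial]
        rw [e2]
        have hdeg : m.degree = m'.degree + e := by
          rw [hmm]; simp
        have hlt : (monomial m' (1 : ℝ) * g i).totalDegree < d := by
          refine (totalDegree_mul _ _).trans_lt ?_
          have h1 : (monomial m' (1 : ℝ)).totalDegree ≤ m'.degree := totalDegree_monomial_le _ _
          have := hg i
          omega
        exact ih _ hlt _ le_rfl
  have top : Submodule.span ℝ (Set.range b) = ⊤ := by
    rw [eq_top_iff]
    intro f _
    obtain ⟨p, hp⟩ := exists_interp Ω f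
    have := key _ p le_rfl
    have e3 : res p = f := by ext x; exact hp x
    rwa [e3] at this
  have h1 := finrank_range_le_card (R := ℝ) b
  rw [Set.finrank, top, finrank_top] at h1
  simpa using h1

/-- The number of strict sign patterns of a family of polynomials is at most `(2 |Q| D + 1) ^ N`.
For each pattern a coercive function `ε ∑ x_i ^ (2E) - G ^ 2`, with `G` the product of the family, is
minimised over the closed cell of the pattern; the minimiser is an interior critical point. -/
lemma card_strict_patterns_le {σ : Type*} [Fintype σ] {Q : Type*} [Fintype Q]
    (p : Q → MvPolynomial σ ℝ) (D : ℕ) (hD : ∀ q, (p q).totalDegree ≤ D)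
    (Ω : Finset (σ → ℝ)) (hne : ∀ x ∈ Ω, ∀ q, eval x (p q) ≠ 0)
    (hinj : ∀ x ∈ Ω, ∀ y ∈ Ω, (∀ q, 0 < eval x (p q) ↔ 0 < eval y (p q)) → x = y) :
    Ω.card ≤ (2 * (Fintype.card Q * D) + 1) ^ Fintype.card σ := by
  classical
  set M := Fintype.card Q * D with hM
  set G : MvPolynomial σ ℝ := ∏ q, p q with hG
  have hGd : G.totalDegree ≤ M := by
    refine (totalDegree_finsetProd _ _).trans ?_
    refine (Finset.sum_le_sum fun q _ => hD q).trans ?_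
    simp [hM]
  have hG2 : (G ^ 2).totalDegree ≤ 2 * M :=
    (totalDegree_pow _ _).trans (by omega)
  have hG0 : ∀ x ∈ Ω, 0 < (eval x G) ^ 2 := by
    intro x hx
    have : eval x G ≠ 0 := by
      rw [hG, map_prod]; exact Finset.prod_ne_zero_iff.2 fun q _ => hne x hx q
    positivity
  obtain ⟨ε, hε, hεΩ⟩ : ∃ ε : ℝ, 0 < ε ∧ ∀ x ∈ Ω,
      ε * ∑ i, x i ^ (2 * M + 2) < (eval x G) ^ 2 := by
    have : ∀ᶠ ε in nhdsWithin (0 : ℝ) (Set.Ioi 0), ∀ x ∈ Ω,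
        ε * ∑ i, x i ^ (2 * M + 2) < (eval x G) ^ 2 := by
      rw [Filter.eventually_all_finset]
      intro x hx
      have hc : Filter.Tendsto (fun ε : ℝ => ε * ∑ i, x i ^ (2 * M + 2))
          (nhdsWithin (0 : ℝ) (Set.Ioi 0)) (nhds (0 * ∑ i, x i ^ (2 * M + 2))) :=
        ((continuous_id.mul continuous_const).tendsto 0).mono_left nhdsWithin_le_nhds
      rw [zero_mul] at hc
      exact hc.eventually (gt_mem_nhds (hG0 x hx))
    obtain ⟨ε, h1, h2⟩ := (this.and self_mem_nhdsWithin).exists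
    exact ⟨ε, h2, h1⟩
  set H : (σ → ℝ) → ℝ := fun x => ε * ∑ i, x i ^ (2 * M + 2) - (eval x G) ^ 2 with hH
  have hcont : Continuous H := by
    have : Continuous fun x : σ → ℝ => eval x G := MvPolynomial.continuous_eval G
    fun_prop
  -- coercivity
  obtain ⟨R, hR⟩ : ∃ R : ℝ, ∀ x, R < ‖x‖ → 0 ≤ H x := by
    obtain ⟨C, hC0, hC⟩ := abs_eval_le (G ^ 2)
    refine ⟨max 1 (C / ε), fun x hx => ?_⟩
    have h1 : 1 < ‖x‖ := (le_max_left _ _).trans_lt hx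
    have h2 : C / ε < ‖x‖ := (le_max_right _ _).trans_lt hx
    have h3 : (eval x G) ^ 2 ≤ C * ‖x‖ ^ (2 * M) := by
      have := hC x
      rw [max_eq_right h1.le, map_pow] at this
      refine (le_abs_self _).trans (this.trans ?_)
      exact mul_le_mul_of_nonneg_left (pow_le_pow_right₀ h1.le hG2) hC0
    have h4 : ‖x‖ ^ (2 * M + 2) ≤ ∑ i, x i ^ (2 * M + 2) := by
      have hpos : ∀ i, 0 ≤ x i ^ (2 * M + 2) := fun i => Even.pow_nonneg ⟨M + 1, by ring⟩ _
      have hne : Nonempty σ := by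
        by_contra hemp
        rw [not_nonempty_iff] at hemp
        have : ‖x‖ = 0 := by rw [Subsingleton.elim x 0, norm_zero]
        linarith
      obtain ⟨i, hi⟩ : ∃ i, ‖x i‖ = ‖x‖ := by
        obtain ⟨i, -, hi⟩ := Finset.exists_mem_eq_sup Finset.univ Finset.univ_nonempty
          fun i => ‖x i‖₊
        exact ⟨i, by rw [Pi.norm_def, hi]; rfl⟩
      rw [← hi]
      refine le_trans (le_of_eq ?_) (Finset.single_le_sum (fun i _ => hpos i) (Finset.mem_univ i))
      rw [Real.norm_eq_abs, Even.pow_abs ⟨M + 1, by ring⟩]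
    have h5 : C * ‖x‖ ^ (2 * M) ≤ ε * ‖x‖ ^ (2 * M + 2) := by
      have h6 : C ≤ ε * ‖x‖ := by
        rw [div_lt_iff₀ hε] at h2; linarith
      have h7 : (0 : ℝ) ≤ ‖x‖ ^ (2 * M) := by positivity
      have h8 : ε * ‖x‖ ≤ ε * ‖x‖ ^ 2 := by nlinarith [mul_pos hε (by linarith : 0 < ‖x‖)]
      calc C * ‖x‖ ^ (2 * M) ≤ (ε * ‖x‖ ^ 2) * ‖x‖ ^ (2 * M) :=
            mul_le_mul_of_nonneg_right (h6.trans h8) h7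
        _ = _ := by ring
    have h9 := mul_le_mul_of_nonneg_left h4 hε.le
    simp only [hH]; linarith
  -- one critical point per pattern
  have crit : ∀ x ∈ Ω, ∃ y : σ → ℝ, (∀ q, 0 < eval x (p q) ↔ 0 < eval y (p q)) ∧
      ∀ i, y i ^ (2 * M + 1) =
        eval y (C ((2 * M + 2 : ℝ) * ε)⁻¹ * pderiv i (G ^ 2)) := by
    intro x hx
    set W : Set (σ → ℝ) := {y | ∀ q, 0 ≤ eval x (p q) * eval y (p q)} with hW
    have hWc : IsClosed W := by
      rw [hW, Set.ofPred_forall]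
      refine isClosed_iInter fun q => isClosed_le continuous_const ?_
      exact continuous_const.mul (MvPolynomial.continuous_eval _)
    have hxW : x ∈ W := fun q => mul_self_nonneg _
    have hHx : H x < 0 := by simp only [hH]; linarith [hεΩ x hx]
    have hxR : ‖x‖ ≤ R := by
      by_contra hcon
      exact absurd (hR x (not_le.1 hcon)) (not_le.2 hHx)
    have hK : IsCompact (W ∩ Metric.closedBall 0 R) :=
      (isCompact_closedBall _ _).inter_left hWc
    obtain ⟨y, ⟨hyW, hyR⟩, hmin⟩ := hK.exists_isMinOn ⟨x, hxW, by simpa using hxR⟩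
      hcont.continuousOn
    have hHy : H y < 0 := (hmin ⟨hxW, by simpa using hxR⟩ : H y ≤ H x).trans_lt hHx
    have hminW : ∀ u ∈ W, H y ≤ H u := by
      intro u hu
      by_cases huR : ‖u‖ ≤ R
      · exact hmin ⟨hu, by simpa using huR⟩
      · exact hHy.le.trans (hR u (not_le.1 huR))
    have hGy : eval y G ≠ 0 := by
      intro h0
      have hpos : ∀ i, 0 ≤ y i ^ (2 * M + 2) := fun i => Even.pow_nonneg ⟨M + 1, by ring⟩ _
      have := Finset.sum_nonneg fun i (_ : i ∈ Finset.univ) => hpos i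
      simp only [hH, h0] at hHy
      nlinarith
    have hpy : ∀ q, eval y (p q) ≠ 0 := by
      rw [hG, map_prod] at hGy
      intro q
      exact Finset.prod_ne_zero_iff.1 hGy q (Finset.mem_univ q)
    have hstrict : ∀ q, 0 < eval x (p q) * eval y (p q) := fun q =>
      lt_of_le_of_ne (hyW q) (mul_ne_zero (hne x hx q) (hpy q)).symm
    have hWy : W ∈ nhds y := by
      have : ∀ᶠ u in nhds y, ∀ q, 0 < eval x (p q) * eval u (p q) := by
        rw [Filter.eventually_all]
        intro q
        have hc : Continuous fun u : σ → ℝ => eval x (p q) * eval u (p q) :=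
          continuous_const.mul (MvPolynomial.continuous_eval _)
        exact hc.continuousAt.eventually (lt_mem_nhds (hstrict q))
      exact this.mono fun u hu q => (hu q).le
    refine ⟨y, fun q => ?_, fun i => ?_⟩
    · have := hstrict q
      constructor
      · intro h; exact (pos_iff_pos_of_mul_pos this).1 h
      · intro h; exact (pos_iff_pos_of_mul_pos this).2 h
    · have hloc : IsLocalMin (fun t => H (Function.update y i t)) (y i) := by
        have hcu : ContinuousAt (fun t => Function.update y i t) (y i) :=
          (continuous_const.update i continuous_id).continuousAt
        have : ∀ᶠ t in nhds (y i), Function.update y i t ∈ W := by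
          apply hcu.eventually
          simpa using hWy
        refine this.mono fun t ht => ?_
        simpa using hminW _ ht
      have hd1 : HasDerivAt (fun t => ∑ j, (Function.update y i t j) ^ (2 * M + 2))
          ((2 * M + 2 : ℝ) * y i ^ (2 * M + 1)) (y i) := by
        have := hasDerivAt_eval_update y i (∑ j, (X j : MvPolynomial σ ℝ) ^ (2 * M + 2))
        simp only [map_sum, map_pow, eval_X] at this
        convert this using 1
        rw [Finset.sum_eq_single i]
        · simp [Derivation.leibniz_pow]
        · intro j _ hj
          simp [Derivation.leibniz_pow, pderiv_X, hj]
        · simp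
      have hd2 := hasDerivAt_eval_update y i (G ^ 2)
      have hd := (hd1.const_mul ε).sub hd2
      have h0 := hloc.hasDerivAt_eq_zero (f := fun t => H (Function.update y i t)) (by
        refine hd.congr_of_eventuallyEq (Filter.Eventually.of_forall fun t => ?_)
        simp [hH])
      have hne : (2 * M + 2 : ℝ) * ε ≠ 0 := by positivity
      rw [map_mul, eval_C, eq_inv_mul_iff_mul_eq₀ hne]
      linarith
  choose! y hy1 hy2 using crit
  have hyinj : Set.InjOn y Ω := by
    intro a ha b hb hab
    refine hinj a ha b hb fun q => ?_
    rw [hy1 a ha q, hab, ← hy1 b hb q]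
  rw [← Finset.card_image_of_injOn hyinj]
  refine card_le_of_pow_eq _ _
    (fun i => C ((2 * M + 2 : ℝ) * ε)⁻¹ * pderiv i (G ^ 2)) ?_ ?_
  · intro i
    refine (totalDegree_mul _ _).trans_lt ?_
    rw [totalDegree_C, zero_add]
    exact ((totalDegree_pderiv_le _ _).trans hG2).trans_lt (by omega)
  · intro u hu i
    obtain ⟨x, hx, rfl⟩ := Finset.mem_image.1 hu
    exact hy2 x hx i

/-- Bound on the number of ternary sign patterns: each `p = 0` test is replaced by the strict signs
of `p - δ` and `p + δ` for a small `δ`. -/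
lemma card_patterns_le {σ : Type*} [Fintype σ] {Q : Type*} [Fintype Q]
    (p : Q → MvPolynomial σ ℝ) (D : ℕ) (hD : ∀ q, (p q).totalDegree ≤ D)
    (Ω : Finset (σ → ℝ))
    (hinj : ∀ x ∈ Ω, ∀ y ∈ Ω, (∀ q, SignType.sign (eval x (p q)) = SignType.sign (eval y (p q))) →
      x = y) :
    Ω.card ≤ (4 * (Fintype.card Q * D) + 1) ^ Fintype.card σ := by
  classical
  obtain ⟨δ, hδ, hδΩ⟩ : ∃ δ : ℝ, 0 < δ ∧ ∀ x ∈ Ω, ∀ q, eval x (p q) ≠ 0 → δ < |eval x (p q)| := by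
    have : ∀ᶠ δ in nhdsWithin (0 : ℝ) (Set.Ioi 0), ∀ x ∈ Ω, ∀ q, eval x (p q) ≠ 0 →
        δ < |eval x (p q)| := by
      rw [Filter.eventually_all_finset]
      intro x hx
      rw [Filter.eventually_all]
      intro q
      by_cases h : eval x (p q) = 0
      · simp [h]
      · refine Filter.Eventually.mono ?_ fun δ (h : δ < |eval x (p q)|) _ => h
        exact Filter.Eventually.filter_mono nhdsWithin_le_nhds (gt_mem_nhds (abs_pos.2 h))
    obtain ⟨ε, h1, h2⟩ := (this.and self_mem_nhdsWithin).exists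
    exact ⟨ε, h2, h1⟩
  have := card_strict_patterns_le (Q := Q × Bool)
    (fun q => p q.1 + C (if q.2 then δ else -δ)) D ?_ Ω ?_ ?_
  · refine this.trans (le_of_eq ?_)
    congr 1
    simp; ring
  · intro q
    refine (totalDegree_add _ _).trans ?_
    simp [hD]
  · rintro x hx ⟨q, s⟩
    by_cases h : eval x (p q) = 0
    · cases s <;> simp [h, hδ.ne']
    · have := hδΩ x hx q h
      rw [lt_abs] at this
      cases s <;> simp <;> rcases this with h | h <;> intro h' <;> linarith
  · intro x hx y hy hxy
    refine hinj x hx y hy fun q => ?_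
    have h1 := hxy (q, true)
    have h2 := hxy (q, false)
    simp only [map_add, eval_C, if_true] at h1 h2
    have key : ∀ z ∈ Ω, (0 < eval z (p q) + -δ ↔ 0 < eval z (p q)) ∧
        (0 < eval z (p q) + δ ↔ 0 ≤ eval z (p q)) := by
      intro z hz
      by_cases h : eval z (p q) = 0
      · rw [h]; constructor
        · constructor <;> intro h <;> linarith
        · constructor <;> intro h <;> linarith
      · have := hδΩ z hz q h
        rw [lt_abs] at this
        rcases this with h | h
        · constructor <;> constructor <;> intro <;> linarith
        · constructor <;> constructor <;> intro <;> linarith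
    simp only [Bool.false_eq_true, if_false] at h2
    rw [(key x hx).1, (key y hy).1] at h2
    rw [(key x hx).2, (key y hy).2] at h1
    rcases lt_trichotomy (eval x (p q)) 0 with h | h | h
    · have : eval y (p q) < 0 := by
        by_contra hc; exact absurd (h1.2 (not_lt.1 hc)) (not_le.2 h)
      rw [sign_neg h, sign_neg this]
    · have a1 := h1.1 h.ge
      have a2 : ¬ 0 < eval y (p q) := fun hc => absurd (h2.2 hc) (by rw [h]; simp)
      rw [h, le_antisymm (not_lt.1 a2) a1]
    · rw [sign_pos h, sign_pos (h2.1 h)]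

end LT

namespace LT

open MvPolynomial

/-! ### Decision procedures on sets of inputs -/

/-- `Dec P G h S`: by asking at most `h` sign questions about functions satisfying `P`, the input
set `S` can be split into pieces all satisfying `G`. -/
inductive Dec {X : Type*} (P : (X → ℝ) → Prop) (G : Set X → Prop) : ℕ → Set X → Prop
  | done (h : ℕ) (S : Set X) : G S → Dec P G h S
  | ask (h : ℕ) (S : Set X) (g : X → ℝ) : P g → Dec P G h (S ∩ {x | g x < 0}) →
      Dec P G h (S ∩ {x | g x = 0}) → Dec P G h (S ∩ {x | 0 < g x}) → Dec P G (h + 1) S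

namespace Dec
variable {X : Type*} {P P' : (X → ℝ) → Prop} {G G' : Set X → Prop}

lemma mono {h : ℕ} {S : Set X} (H : Dec P G h S) : ∀ {h' : ℕ}, h ≤ h' → Dec P G h' S := by
  induction H with
  | done h S hG => intro h' _; exact done h' S hG
  | ask h S g hg _ _ _ i1 i2 i3 =>
    intro h' hh
    obtain ⟨k, rfl⟩ : ∃ k, h' = k + 1 := ⟨h' - 1, by omega⟩
    exact ask k S g hg (i1 (by omega)) (i2 (by omega)) (i3 (by omega))

/-- The pieces handed to the continuation are subsets of the initial set. -/
lemma bind_sub {h h' : ℕ} {S : Set X} (H : Dec P G h S)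
    (K : ∀ S', S' ⊆ S → G S' → Dec P G' h' S') : Dec P G' (h + h') S := by
  induction H with
  | done h S hG => exact (K S subset_rfl hG).mono (by omega)
  | ask h S g hg _ _ _ i1 i2 i3 =>
    rw [add_right_comm]
    refine ask _ S g hg (i1 fun S' hS => K S' (hS.trans Set.inter_subset_left))
      (i2 fun S' hS => K S' (hS.trans Set.inter_subset_left))
      (i3 fun S' hS => K S' (hS.trans Set.inter_subset_left))

lemma imp {h : ℕ} {S : Set X} (H : Dec P G h S) (K : ∀ S', S' ⊆ S → G S' → G' S') :
    Dec P G' h S :=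
  H.bind_sub (h' := 0) fun S' hS hG => done 0 S' (K S' hS hG)

lemma imp_test {h : ℕ} {S : Set X} (H : Dec P G h S) (K : ∀ g, P g → P' g) :
    Dec P' G h S := by
  induction H with
  | done h S hG => exact done h S hG
  | ask h S g hg _ _ _ i1 i2 i3 => exact ask h S g (K g hg) i1 i2 i3

lemma subset {h : ℕ} {S : Set X} (H : Dec P G h S) (hG : ∀ S S', S' ⊆ S → G S → G S') :
    ∀ {S' : Set X}, S' ⊆ S → Dec P G h S' := by
  induction H with
  | done h S h1 => intro S' hS; exact done h S' (hG _ _ hS h1)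
  | ask h S g hg _ _ _ i1 i2 i3 =>
    intro S' hS
    exact ask h S' g hg (i1 (Set.inter_subset_inter_left _ hS))
      (i2 (Set.inter_subset_inter_left _ hS)) (i3 (Set.inter_subset_inter_left _ hS))

/-- Asking a single question. -/
lemma ask1 {S : Set X} {g : X → ℝ} (hg : P g) :
    Dec P (fun S => ∃ v : SignType, ∀ x ∈ S, SignType.sign (g x) = v) 1 S := by
  refine ask 0 S g hg (done _ _ ⟨-1, ?_⟩) (done _ _ ⟨0, ?_⟩) (done _ _ ⟨1, ?_⟩)
  · rintro x ⟨_, hx⟩; exact sign_neg hx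
  · rintro x ⟨_, hx⟩; exact sign_eq_zero_iff.2 hx
  · rintro x ⟨_, hx⟩; exact sign_pos hx

/-- Handling a finite list of subproblems in turn, where established facts persist on subsets. -/
lemma list {ι : Type*} (l : List ι) (Gi : ι → Set X → Prop) (c : ι → ℕ) (S : Set X)
    (hG : ∀ i S S', S' ⊆ S → Gi i S → Gi i S')
    (H : ∀ i ∈ l, ∀ S', S' ⊆ S → Dec P (Gi i) (c i) S') :
    Dec P (fun S' => S' ⊆ S ∧ ∀ i ∈ l, Gi i S') (l.map c).sum S := by
  induction l generalizing S with
  | nil => exact done _ _ ⟨subset_rfl, by simp⟩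
  | cons a l ih =>
    rw [List.map_cons, List.sum_cons]
    refine (H a (by simp) S subset_rfl).bind_sub fun S' hS' ha => ?_
    refine (ih S' fun i hi S'' hS'' => H i (by simp [hi]) S'' (hS''.trans hS')).imp ?_
    rintro S'' hS'' ⟨_, h2⟩
    refine ⟨hS''.trans hS', ?_⟩
    intro i hi
    rcases List.mem_cons.1 hi with rfl | hi
    · exact hG _ _ _ hS'' ha
    · exact h2 i hi

end Dec

/-- The functions on `σ → ℝ` that are polynomials of total degree at most `D`. -/
def PolyLE {σ : Type*} (D : ℕ) (g : (σ → ℝ) → ℝ) : Prop :=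
  ∃ p : MvPolynomial σ ℝ, p.totalDegree ≤ D ∧ ∀ x, g x = eval x p

lemma PolyLE.mono {σ : Type*} {D D' : ℕ} {g : (σ → ℝ) → ℝ} (h : PolyLE D g) (hD : D ≤ D') :
    PolyLE D' g := by
  obtain ⟨p, h1, h2⟩ := h
  exact ⟨p, h1.trans hD, h2⟩

/-! ### Simulation of a procedure on an infinitesimally perturbed input -/

/-- Polynomials in `ε` of degree at most `k` with coefficients of total degree at most `l`. -/
def EpsLE {σ : Type*} (k l : ℕ) (f : Polynomial (MvPolynomial σ ℝ)) : Prop :=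
  f.natDegree ≤ k ∧ ∀ i, (f.coeff i).totalDegree ≤ l

lemma EpsLE.mul {σ : Type*} {k l k' l' : ℕ} {f g : Polynomial (MvPolynomial σ ℝ)}
    (hf : EpsLE k l f) (hg : EpsLE k' l' g) : EpsLE (k + k') (l + l') (f * g) := by
  refine ⟨Polynomial.natDegree_mul_le_of_le hf.1 hg.1, fun i => ?_⟩
  rw [Polynomial.coeff_mul]
  refine totalDegree_finsetSum_le fun p _ => (totalDegree_mul _ _).trans ?_
  exact add_le_add (hf.2 _) (hg.2 _)

lemma EpsLE.mono {σ : Type*} {k l k' l' : ℕ} {f : Polynomial (MvPolynomial σ ℝ)}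
    (hf : EpsLE k l f) (hk : k ≤ k') (hl : l ≤ l') : EpsLE k' l' f :=
  ⟨hf.1.trans hk, fun i => (hf.2 i).trans hl⟩

lemma EpsLE.add {σ : Type*} {k l : ℕ} {f g : Polynomial (MvPolynomial σ ℝ)}
    (hf : EpsLE k l f) (hg : EpsLE k l g) : EpsLE k l (f + g) := by
  refine ⟨Polynomial.natDegree_add_le_of_degree_le hf.1 hg.1, fun i => ?_⟩
  rw [Polynomial.coeff_add]
  exact (totalDegree_add _ _).trans (max_le (hf.2 i) (hg.2 i))

lemma EpsLE.C {σ : Type*} {k l : ℕ} {p : MvPolynomial σ ℝ} (hp : p.totalDegree ≤ l) :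
    EpsLE k l (Polynomial.C p) := by
  refine ⟨by simp, fun i => ?_⟩
  rw [Polynomial.coeff_C]
  split_ifs
  · exact hp
  · simp

lemma EpsLE.X {σ : Type*} {k l : ℕ} (hk : 1 ≤ k) :
    EpsLE k l (Polynomial.X : Polynomial (MvPolynomial σ ℝ)) := by
  refine ⟨Polynomial.natDegree_X_le.trans hk, fun i => ?_⟩
  rw [Polynomial.coeff_X]
  split_ifs <;> simp

lemma EpsLE.pow {σ : Type*} {k l : ℕ} {f : Polynomial (MvPolynomial σ ℝ)}
    (hf : EpsLE k l f) (m : ℕ) : EpsLE (k * m) (l * m) (f ^ m) := by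
  induction m with
  | zero => simpa using EpsLE.C (p := (1 : MvPolynomial σ ℝ)) (by simp)
  | succ m ih => rw [pow_succ, mul_add_one, mul_add_one]; exact ih.mul hf

lemma EpsLE.sum {σ ι : Type*} {k l : ℕ} (s : Finset ι) {f : ι → Polynomial (MvPolynomial σ ℝ)}
    (hf : ∀ i ∈ s, EpsLE k l (f i)) : EpsLE k l (∑ i ∈ s, f i) := by
  classical
  induction s using Finset.induction_on with
  | empty => simpa using EpsLE.C (p := (0 : MvPolynomial σ ℝ)) (by simp)
  | insert a s ha ih =>
    rw [Finset.sum_insert ha]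
    exact (hf a (by simp)).add (ih fun i hi => hf i (by simp [hi]))

lemma EpsLE.prod {σ ι : Type*} {k l : ℕ} (s : Finset ι) (m : ι → ℕ)
    {f : ι → Polynomial (MvPolynomial σ ℝ)}
    (hf : ∀ i ∈ s, EpsLE k l (f i)) :
    EpsLE (k * ∑ i ∈ s, m i) (l * ∑ i ∈ s, m i) (∏ i ∈ s, f i ^ m i) := by
  classical
  induction s using Finset.induction_on with
  | empty => simpa using EpsLE.C (p := (1 : MvPolynomial σ ℝ)) (by simp)
  | insert a s ha ih =>
    rw [Finset.sum_insert ha, Finset.prod_insert ha, mul_add, mul_add]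
    exact ((hf a (by simp)).pow _).mul (ih fun i hi => hf i (by simp [hi]))

lemma EpsLE.comp {σ τ : Type*} {k l D : ℕ} (Γ : τ → Polynomial (MvPolynomial σ ℝ))
    (hΓ : ∀ j, EpsLE k l (Γ j)) (p : MvPolynomial τ ℝ) (hp : p.totalDegree ≤ D) :
    EpsLE (k * D) (l * D) (aeval Γ p) := by
  rw [aeval_def, eval₂_eq]
  refine EpsLE.sum _ fun m hm => ?_
  have h1 : ∑ i ∈ m.support, m i ≤ D := (le_totalDegree hm).trans hp
  have h2 := EpsLE.prod m.support m fun i _ => hΓ i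
  have h3 : EpsLE 0 0 (algebraMap ℝ (Polynomial (MvPolynomial σ ℝ)) (p.coeff m)) := by
    rw [Polynomial.algebraMap_apply]; exact EpsLE.C (by simp [algebraMap_eq])
  refine (h3.mul h2).mono ?_ ?_
  · rw [zero_add]; exact Nat.mul_le_mul_left _ h1
  · rw [zero_add]; exact Nat.mul_le_mul_left _ h1

/-- The value of the perturbed input at the actual parameter `ε`. -/
noncomputable def epsEval {σ τ : Type*} (Γ : τ → Polynomial (MvPolynomial σ ℝ)) (x : σ → ℝ)
    (ε : ℝ) : τ → ℝ := fun j => ((Γ j).map (eval x)).eval ε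

lemma eval_epsEval {σ τ : Type*} (Γ : τ → Polynomial (MvPolynomial σ ℝ)) (x : σ → ℝ) (ε : ℝ)
    (p : MvPolynomial τ ℝ) :
    eval (epsEval Γ x ε) p = ((aeval Γ p).map (eval x)).eval ε := by
  induction p using MvPolynomial.induction_on with
  | C a => simp [Polynomial.algebraMap_apply, algebraMap_eq]
  | add p q hp hq => simp [hp, hq]
  | mul_X p j hp => simp [hp, epsEval]

/-- The sign of a univariate polynomial just to the right of `0` is that of its first nonzero
coefficient. -/
lemma eventually_sign_poly (f : Polynomial ℝ) (k : ℕ) (h0 : ∀ i < k, f.coeff i = 0)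
    (hk : f.coeff k ≠ 0) :
    ∀ᶠ ε in nhdsWithin (0 : ℝ) (Set.Ioi 0), SignType.sign (f.eval ε) = SignType.sign (f.coeff k) := by
  obtain ⟨g, rfl⟩ : Polynomial.X ^ k ∣ f := Polynomial.X_pow_dvd_iff.2 h0
  have hc : (Polynomial.X ^ k * g).coeff k = g.eval 0 := by
    rw [Polynomial.coeff_X_pow_mul', if_pos le_rfl, Nat.sub_self, Polynomial.coeff_zero_eq_eval_zero]
  rw [hc] at hk ⊢
  have hcont : Filter.Tendsto (fun ε => g.eval ε) (nhdsWithin 0 (Set.Ioi 0)) (nhds (g.eval 0)) :=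
    (g.continuous.tendsto 0).mono_left nhdsWithin_le_nhds
  have hs : ∀ᶠ ε in nhdsWithin (0 : ℝ) (Set.Ioi 0),
      SignType.sign (g.eval ε) = SignType.sign (g.eval 0) := by
    rcases lt_or_gt_of_ne hk with h | h
    · filter_upwards [hcont.eventually (gt_mem_nhds h)] with ε hε
      rw [sign_neg hε, sign_neg h]
    · filter_upwards [hcont.eventually (lt_mem_nhds h)] with ε hε
      rw [sign_pos hε, sign_pos h]
  filter_upwards [hs, self_mem_nhdsWithin] with ε h1 h2
  have h3 : (0 : ℝ) < ε ^ k := pow_pos h2 k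
  rw [Polynomial.eval_mul, Polynomial.eval_pow, Polynomial.eval_X, sign_mul, sign_pos h3, one_mul, h1]

/-- Determining the sign of a polynomial in `ε` for small `ε > 0` from the signs of its
coefficients. -/
lemma dec_eps_sign {σ : Type*} {l : ℕ} (f : Polynomial (MvPolynomial σ ℝ)) :
    ∀ (m k : ℕ), f.natDegree < k + m → (∀ i, (f.coeff i).totalDegree ≤ l) → ∀ (S : Set (σ → ℝ)),
      (∀ x ∈ S, ∀ i < k, eval x (f.coeff i) = 0) →
      Dec (PolyLE l) (fun S => ∃ v : SignType, ∀ x ∈ S, ∀ᶠ ε in nhdsWithin (0 : ℝ) (Set.Ioi 0),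
        SignType.sign ((f.map (eval x)).eval ε) = v) m S := by
  intro m
  induction m with
  | zero =>
    intro k hk hl S h0
    refine Dec.done _ _ ⟨0, fun x hx => Filter.Eventually.of_forall fun ε => ?_⟩
    have : f.map (eval x) = 0 := by
      ext i
      rw [Polynomial.coeff_map, Polynomial.coeff_zero]
      by_cases hi : i < k
      · exact h0 x hx i hi
      · rw [Polynomial.coeff_eq_zero_of_natDegree_lt (by omega), map_zero]
    rw [this]; simp
  | succ m ih =>
    intro k hk hl S h0
    have main : ∀ v : SignType, v ≠ 0 → ∀ S' ⊆ S, (∀ x ∈ S', SignType.sign (eval x (f.coeff k)) = v) →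
        ∃ v : SignType, ∀ x ∈ S', ∀ᶠ ε in nhdsWithin (0 : ℝ) (Set.Ioi 0),
        SignType.sign ((f.map (eval x)).eval ε) = v := by
      intro v hv S' hS' h
      refine ⟨v, fun x hx => ?_⟩
      have := eventually_sign_poly (f.map (eval x)) k
        (fun i hi => by rw [Polynomial.coeff_map]; exact h0 x (hS' hx) i hi)
        (by rw [Polynomial.coeff_map]; intro h1; have := h x hx; rw [h1] at this; simp at this
            exact hv this.symm)
      rw [Polynomial.coeff_map, h x hx] at this
      exact this
    refine Dec.ask m S (fun x => eval x (f.coeff k)) ⟨_, hl k, fun _ => rfl⟩ ?_ ?_ ?_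
    · exact Dec.done _ _ (main (-1) (by decide) _ Set.inter_subset_left fun x hx => sign_neg hx.2)
    · refine ih (k + 1) (by omega) hl _ ?_
      intro x hx i hi
      rcases Nat.lt_succ_iff_lt_or_eq.1 hi with h | rfl
      · exact h0 x hx.1 i h
      · exact hx.2
    · exact Dec.done _ _ (main 1 (by decide) _ Set.inter_subset_left fun x hx => sign_pos hx.2)

/-- A procedure for inputs `y` runs on the infinitesimal perturbations `Γ(x, ε)`, with each question
replaced by questions on the coefficients of its expansion in `ε`. -/
lemma Dec.limit {σ τ : Type*} {k l D : ℕ} (Γ : τ → Polynomial (MvPolynomial σ ℝ))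
    (hΓ : ∀ j, EpsLE k l (Γ j)) {G : Set (τ → ℝ) → Prop} {h : ℕ} {T : Set (τ → ℝ)}
    (H : Dec (PolyLE D) G h T) : ∀ (S : Set (σ → ℝ)),
    (∀ x ∈ S, ∀ᶠ ε in nhdsWithin (0 : ℝ) (Set.Ioi 0), epsEval Γ x ε ∈ T) →
    Dec (PolyLE (l * D)) (fun S => ∃ T, G T ∧
      ∀ x ∈ S, ∀ᶠ ε in nhdsWithin (0 : ℝ) (Set.Ioi 0), epsEval Γ x ε ∈ T) (h * (k * D + 1)) S := by
  induction H with
  | done h T hG => intro S hS; exact Dec.done _ _ ⟨T, hG, hS⟩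
  | ask h T g hg _ _ _ i1 i2 i3 =>
    intro S hS
    obtain ⟨p, hp, hpg⟩ := hg
    have hE := EpsLE.comp Γ hΓ p hp
    rw [add_mul, one_mul, add_comm]
    refine (dec_eps_sign (l := l * D) (aeval Γ p) (k * D + 1) 0
      (by have := hE.1; omega) hE.2 S (by simp)).bind_sub ?_
    rintro S' hS' ⟨v, hv⟩
    have key : ∀ x ∈ S', ∀ᶠ ε in nhdsWithin (0 : ℝ) (Set.Ioi 0),
        epsEval Γ x ε ∈ T ∧ SignType.sign (g (epsEval Γ x ε)) = v := by
      intro x hx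
      filter_upwards [hS x (hS' hx), hv x hx] with ε h1 h2
      exact ⟨h1, by rw [hpg, eval_epsEval]; exact h2⟩
    rcases v with _ | _ | _
    · exact i2 S' fun x hx => (key x hx).mono fun ε h => ⟨h.1, sign_eq_zero_iff.1 h.2⟩
    · exact i1 S' fun x hx => (key x hx).mono fun ε h => ⟨h.1, sign_eq_neg_one_iff.1 h.2⟩
    · exact i3 S' fun x hx => (key x hx).mono fun ε h => ⟨h.1, sign_eq_one_iff.1 h.2⟩

/-- Running a procedure on a polynomial image of the input. -/
lemma Dec.precomp {σ τ : Type*} {l D : ℕ} (φ : (σ → ℝ) → τ → ℝ)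
    (hφ : ∀ j, PolyLE l fun x => φ x j) {G : Set (τ → ℝ) → Prop} {h : ℕ} {T : Set (τ → ℝ)}
    (H : Dec (PolyLE D) G h T) (S : Set (σ → ℝ)) (hS : ∀ x ∈ S, φ x ∈ T) :
    Dec (PolyLE (l * D)) (fun S => ∃ T, G T ∧ ∀ x ∈ S, φ x ∈ T) h S := by
  choose p hp1 hp2 using hφ
  have e : ∀ x ε, epsEval (fun j => Polynomial.C (p j)) x ε = φ x := by
    intro x ε; ext j; simp [epsEval, hp2]
  have := H.limit (k := 0) (l := l) (fun j => Polynomial.C (p j))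
    (fun j => EpsLE.C (hp1 j)) S (by simpa [e] using hS)
  simpa [e] using this

lemma PolyLE.const {σ : Type*} {D : ℕ} (c : ℝ) : PolyLE (σ := σ) D fun _ => c :=
  ⟨MvPolynomial.C c, by simp, by simp⟩

lemma PolyLE.coord {σ : Type*} {D : ℕ} (hD : 1 ≤ D) (i : σ) : PolyLE D fun x : σ → ℝ => x i :=
  ⟨MvPolynomial.X i, by simpa using hD, by simp⟩

lemma PolyLE.add {σ : Type*} {D : ℕ} {f g : (σ → ℝ) → ℝ} (hf : PolyLE D f) (hg : PolyLE D g) :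
    PolyLE D fun x => f x + g x := by
  obtain ⟨p, h1, h2⟩ := hf
  obtain ⟨q, h3, h4⟩ := hg
  exact ⟨p + q, (totalDegree_add _ _).trans (max_le h1 h3), by simp [h2, h4]⟩

lemma PolyLE.mul {σ : Type*} {D E : ℕ} {f g : (σ → ℝ) → ℝ} (hf : PolyLE D f) (hg : PolyLE E g) :
    PolyLE (D + E) fun x => f x * g x := by
  obtain ⟨p, h1, h2⟩ := hf
  obtain ⟨q, h3, h4⟩ := hg
  exact ⟨p * q, (totalDegree_mul _ _).trans (add_le_add h1 h3), by simp [h2, h4]⟩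

lemma PolyLE.neg {σ : Type*} {D : ℕ} {f : (σ → ℝ) → ℝ} (hf : PolyLE D f) :
    PolyLE D fun x => - f x := by
  obtain ⟨p, h1, h2⟩ := hf
  exact ⟨-p, by simpa using h1, by simp [h2]⟩

lemma PolyLE.sub {σ : Type*} {D : ℕ} {f g : (σ → ℝ) → ℝ} (hf : PolyLE D f) (hg : PolyLE D g) :
    PolyLE D fun x => f x - g x := by
  simpa [sub_eq_add_neg] using hf.add hg.neg

lemma PolyLE.sum {σ ι : Type*} {D : ℕ} (s : Finset ι) {f : ι → (σ → ℝ) → ℝ}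
    (hf : ∀ i ∈ s, PolyLE D (f i)) : PolyLE D fun x => ∑ i ∈ s, f i x := by
  classical
  induction s using Finset.induction_on with
  | empty => simpa using PolyLE.const 0
  | insert a s ha ih =>
    simp only [Finset.sum_insert ha]
    exact (hf a (by simp)).add (ih fun i hi => hf i (by simp [hi]))

/-! ### The entropy game -/

/-- The game on a finite set `S` of candidate inputs with budget `T`: a leaf must satisfy `G` and
leave a budget of at least `w log |S|`; each question costs `1`. -/
inductive Can {α Q : Type*} (val : Q → α → SignType) (w : ℝ) (G : Finset α → Prop) :
    ℝ → Finset α → Prop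
  | done (T : ℝ) (S : Finset α) : G S → w * Real.log S.card ≤ T → Can val w G T S
  | ask (T : ℝ) (S : Finset α) (q : Q) :
      (∀ v, (S.filter fun x => val q x = v).Nonempty →
        Can val w G (T - 1) (S.filter fun x => val q x = v)) → Can val w G T S

namespace Can
variable {α Q : Type*} {val : Q → α → SignType} {w : ℝ} {G G' : Finset α → Prop}

lemma mono {T : ℝ} {S : Finset α} (H : Can val w G T S) : ∀ {T' : ℝ}, T ≤ T' → Can val w G T' S := by
  induction H with
  | done T S hG h => intro T' hT; exact done T' S hG (h.trans hT)
  | ask T S q _ ih => intro T' hT; exact ask T' S q fun v hv => ih v hv (by linarith)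

lemma bind {T a : ℝ} {S : Finset α} (H : Can val w G T S) : S.Nonempty →
    (∀ S', S' ⊆ S → S'.Nonempty → G S' → Can val w G' (a + w * Real.log S'.card) S') →
    Can val w G' (T + a) S := by
  induction H with
  | done T S hG h =>
    intro hS K
    exact (K S subset_rfl hS hG).mono (by linarith)
  | ask T S q _ ih =>
    intro hS K
    refine ask _ S q fun v hv => ?_
    rw [show T + a - 1 = T - 1 + a by ring]
    exact ih v hv hv fun S' hS' => K S' (hS'.trans (Finset.filter_subset _ _))

lemma log_card_le {S S' : Finset α} (h : S' ⊆ S) (hS : S'.Nonempty) :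
    Real.log S'.card ≤ Real.log S.card :=
  Real.log_le_log (by exact_mod_cast hS.card_pos) (by exact_mod_cast Finset.card_le_card h)

lemma ask1 (hw : 0 ≤ w) (q : Q) (S : Finset α) :
    Can val w (fun S' => S' ⊆ S ∧ ∃ v, ∀ x ∈ S', val q x = v) (1 + w * Real.log S.card) S := by
  refine ask _ S q fun v hv => done _ _ ⟨Finset.filter_subset _ _, v, by simp⟩ ?_
  have := mul_le_mul_of_nonneg_left (log_card_le (Finset.filter_subset (fun x => val q x = v) S) hv) hw
  linarith

/-- Handling a list of subproblems in turn. -/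
lemma list {ι : Type*} (l : List ι) (Gi : ι → Finset α → Prop) (c : ι → ℝ) (S : Finset α)
    (hG : ∀ i S S', S' ⊆ S → Gi i S → Gi i S') (hS : S.Nonempty)
    (H : ∀ i ∈ l, ∀ S', S' ⊆ S → S'.Nonempty →
      Can val w (fun S'' => S'' ⊆ S' ∧ Gi i S'') (c i + w * Real.log S'.card) S') :
    Can val w (fun S' => S' ⊆ S ∧ ∀ i ∈ l, Gi i S') ((l.map c).sum + w * Real.log S.card) S := by
  induction l generalizing S with
  | nil => exact done _ _ ⟨subset_rfl, by simp⟩ (by simp)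
  | cons a l ih =>
    rw [List.map_cons, List.sum_cons]
    have := (H a (by simp) S subset_rfl hS).bind (a := (l.map c).sum)
      (G' := fun S' => S' ⊆ S ∧ ∀ i ∈ a :: l, Gi i S') hS ?_
    · exact this.mono (by linarith)
    · rintro S' hS' hne ⟨_, ha⟩
      have h1 := ih S' hne fun i hi S'' hS'' => H i (by simp [hi]) S'' (hS''.trans hS')
      have := h1.bind (a := 0) (G' := fun S' => S' ⊆ S ∧ ∀ i ∈ a :: l, Gi i S') hne ?_
      · exact this.mono (by linarith)
      · rintro S'' hS'' hne' ⟨_, h2⟩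
        refine done _ _ ⟨hS''.trans hS', ?_⟩ (by linarith)
        intro i hi
        rcases List.mem_cons.1 hi with rfl | hi
        · exact hG _ _ _ hS'' ha
        · exact h2 i hi

/-- Asking all questions of a finite set. -/
lemma askAll (hw : 0 ≤ w) (F : Finset Q) (S : Finset α) (hS : S.Nonempty) :
    Can val w (fun S' => S' ⊆ S ∧ ∀ q ∈ F, ∀ x ∈ S', ∀ y ∈ S', val q x = val q y)
      (F.card + w * Real.log S.card) S := by
  have := list (val := val) (w := w) F.toList (fun q S' => ∃ v, ∀ x ∈ S', val q x = v) (fun _ => 1) S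
    (fun i S S' h ⟨v, hv⟩ => ⟨v, fun x hx => hv x (h hx)⟩) hS (fun q _ S' _ _ => ask1 hw q S')
  have h2 := this.bind (a := 0) (G' := fun S' => S' ⊆ S ∧
    ∀ q ∈ F, ∀ x ∈ S', ∀ y ∈ S', val q x = val q y) hS ?_
  · refine h2.mono (by simp)
  · rintro S' hS' _ ⟨h1, h2⟩
    refine done _ _ ⟨hS', fun q hq x hx y hy => ?_⟩ (by linarith)
    obtain ⟨v, hv⟩ := h2 q (by simpa using hq)
    rw [hv x hx, hv y hy]

/-- A winning strategy in the game yields a decision procedure for all inputs that share their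
sign pattern with a candidate. -/
lemma toDec {X : Type*} {P : (X → ℝ) → Prop} (hw : 0 ≤ w) (g : Q → X → ℝ) (hg : ∀ q, P (g q))
    (rep : X → α) {T : ℝ} {S : Finset α} (H : Can val w G T S) (hS : S.Nonempty) :
    0 ≤ T ∧ ∀ U : Set X, (∀ x ∈ U, rep x ∈ S ∧ ∀ q, SignType.sign (g q x) = val q (rep x)) →
      Dec P (fun U => U = ∅ ∨ ∃ S', G S' ∧ ∀ x ∈ U, rep x ∈ S' ∧
        ∀ q, SignType.sign (g q x) = val q (rep x)) ⌊T⌋₊ U := by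
  induction H with
  | done T S hG h =>
    refine ⟨le_trans ?_ h, fun U hU => Dec.done _ _ (Or.inr ⟨S, hG, hU⟩)⟩
    exact mul_nonneg hw (Real.log_natCast_nonneg _)
  | ask T S q _ ih =>
    have hT : 0 ≤ T - 1 := by
      obtain ⟨x, hx⟩ := hS
      have hne : (S.filter fun y => val q y = val q x).Nonempty := ⟨x, by simp [hx]⟩
      exact (ih _ hne hne).1
    refine ⟨by linarith, fun U hU => ?_⟩
    have hfl : ⌊T⌋₊ = ⌊T - 1⌋₊ + 1 := by
      rw [← Nat.floor_add_one hT, sub_add_cancel]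
    have key : ∀ v, ∀ U' ⊆ U, (∀ x ∈ U', SignType.sign (g q x) = v) →
        Dec P (fun U => U = ∅ ∨ ∃ S', G S' ∧ ∀ x ∈ U, rep x ∈ S' ∧
          ∀ q, SignType.sign (g q x) = val q (rep x)) ⌊T - 1⌋₊ U' := by
      intro v U' hU' hv
      rcases U'.eq_empty_or_nonempty with h0 | ⟨x0, hx0⟩
      · exact Dec.done _ _ (Or.inl h0)
      · have hmem : ∀ x ∈ U', rep x ∈ S.filter fun y => val q y = v := by
          intro x hx
          rw [Finset.mem_filter]
          exact ⟨(hU x (hU' hx)).1, by rw [← (hU x (hU' hx)).2 q, hv x hx]⟩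
        exact (ih v ⟨_, hmem x0 hx0⟩ ⟨_, hmem x0 hx0⟩).2 U' fun x hx =>
          ⟨hmem x hx, (hU x (hU' hx)).2⟩
    rw [hfl]
    exact Dec.ask _ _ (g q) (hg q) (key (-1) _ Set.inter_subset_left fun x hx => sign_neg hx.2)
      (key 0 _ Set.inter_subset_left fun x hx => sign_eq_zero_iff.2 hx.2)
      (key 1 _ Set.inter_subset_left fun x hx => sign_pos hx.2)

end Can

end LT

namespace LT

set_option linter.unusedSectionVars false
set_option linter.unusedVariables false
set_option linter.unusedSimpArgs false

open Matrix Finset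

/-! ### Vertices of polyhedral cones in `ℝ⁶` -/

/-- The ambient space of the vector configurations. -/
abbrev E6 := Fin 6 → ℝ

/-- The generalised cross product of five vectors of `ℝ⁶`. -/
noncomputable def vtx (w : Fin 5 → E6) : E6 := fun k =>
  (-1) ^ (k : ℕ) * ((Matrix.of w).submatrix id k.succAbove).det

lemma dot_vtx (h : E6) (w : Fin 5 → E6) : h ⬝ᵥ vtx w = (Matrix.of (Fin.cons h w : Fin 6 → E6)).det := by
  rw [det_succ_row_zero]
  simp only [dotProduct, vtx]
  refine Finset.sum_congr rfl fun k _ => ?_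
  have : (Matrix.of (Fin.cons h w : Fin 6 → E6)).submatrix Fin.succ k.succAbove =
      (Matrix.of w).submatrix id k.succAbove := by
    ext i j; simp
  rw [this]; simp; ring

lemma dot_vtx_self (w : Fin 5 → E6) (i : Fin 5) : w i ⬝ᵥ vtx w = 0 := by
  rw [dot_vtx]
  refine det_zero_of_row_eq (i := 0) (j := i.succ) (Fin.succ_ne_zero i).symm ?_
  ext j; simp

lemma vtx_swap (w : Fin 5 → E6) : vtx (w ∘ Equiv.swap 0 1) = - vtx w := by
  ext k
  simp only [vtx, Pi.neg_apply]
  have : (Matrix.of (w ∘ Equiv.swap 0 1)).submatrix id k.succAbove =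
      ((Matrix.of w).submatrix id k.succAbove).submatrix (Equiv.swap (0 : Fin 5) 1) id := by
    ext i j; simp
  rw [this, det_permute]
  simp [Equiv.Perm.sign_swap]

lemma eq_zero_of_dot {r : Fin 6 → E6} (hr : (Matrix.of r).det ≠ 0) {p : E6}
    (hp : ∀ k, r k ⬝ᵥ p = 0) : p = 0 :=
  eq_zero_of_mulVec_eq_zero hr (by ext k; exact hp k)

lemma exists_dot_eq {r : Fin 6 → E6} (hr : (Matrix.of r).det ≠ 0) (y : Fin 6 → ℝ) :
    ∃ d : E6, ∀ k, r k ⬝ᵥ d = y k := by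
  refine ⟨(Matrix.of r)⁻¹ *ᵥ y, fun k => ?_⟩
  have : (Matrix.of r) *ᵥ ((Matrix.of r)⁻¹ *ᵥ y) = y := by
    rw [mulVec_mulVec, mul_nonsing_inv _ (isUnit_iff_ne_zero.2 hr), one_mulVec]
  exact congrFun this k

variable {ι : Type*}

/-- An enumeration of a finite set of known cardinality. -/
noncomputable def enum {k : ℕ} (s : Finset ι) (h : s.card = k) : Fin k → ι :=
  fun i => ((s.equivFinOfCardEq h).symm i).1

lemma enum_mem {k : ℕ} (s : Finset ι) (h : s.card = k) (i : Fin k) : enum s h i ∈ s :=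
  ((s.equivFinOfCardEq h).symm i).2

lemma enum_inj {k : ℕ} (s : Finset ι) (h : s.card = k) : Function.Injective (enum s h) :=
  fun i j hij => (s.equivFinOfCardEq h).symm.injective (Subtype.ext hij)

lemma enum_surj {k : ℕ} (s : Finset ι) (h : s.card = k) {x : ι} (hx : x ∈ s) :
    ∃ i, enum s h i = x :=
  ⟨s.equivFinOfCardEq h ⟨x, hx⟩, by simp [enum]⟩

/-- Any six vectors of the configuration are linearly independent. -/
def Six (z : ι → E6) : Prop :=
  ∀ s : Fin 6 → ι, Function.Injective s → (Matrix.of (z ∘ s)).det ≠ 0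

/-- A set of five indices with an orientation, standing for an oriented normal of the span of the
five vectors. -/
abbrev Code (ι : Type*) := {s : Finset ι // s.card = 5} × Bool

namespace Code

/-- The underlying five-element set. -/
abbrev set (C : Code ι) : Finset ι := C.1.1

/-- The ordered tuple of a code; the orientation is the order of its first two entries. -/
noncomputable def tup (C : Code ι) : Fin 5 → ι :=
  fun i => enum C.1.1 C.1.2 (if C.2 then i else Equiv.swap 0 1 i)

lemma tup_mem (C : Code ι) (i : Fin 5) : C.tup i ∈ C.set := enum_mem _ _ _

lemma tup_surj (C : Code ι) {x : ι} (hx : x ∈ C.set) : ∃ i, C.tup i = x := by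
  obtain ⟨i, hi⟩ := enum_surj C.1.1 C.1.2 hx
  rcases C with ⟨s, b⟩
  cases b
  · exact ⟨Equiv.swap 0 1 i, by simpa [tup] using hi⟩
  · exact ⟨i, by simpa [tup] using hi⟩

lemma tup_inj (C : Code ι) : Function.Injective C.tup := by
  intro i j hij
  have := enum_inj _ _ hij
  split_ifs at this
  · exact this
  · exact (Equiv.swap 0 1).injective this

/-- The ray normal to the five vectors of the code. -/
noncomputable def vt (z : ι → E6) (C : Code ι) : E6 := vtx (z ∘ C.tup)

lemma vt_neg (z : ι → E6) (s : {s : Finset ι // s.card = 5}) :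
    vt z (s, false) = - vt z (s, true) := by
  have h : (z ∘ tup (s, true)) ∘ Equiv.swap 0 1 = z ∘ tup (s, false) := by
    ext i j; simp [tup]
  rw [vt, ← h, vtx_swap]
  rfl

end Code

open Code

variable {z : ι → E6} (hz : Six z)

lemma dot_vt_mem (C : Code ι) {i : ι} (hi : i ∈ C.set) : z i ⬝ᵥ vt z C = 0 := by
  obtain ⟨k, rfl⟩ := C.tup_surj hi
  exact dot_vtx_self (z ∘ C.tup) k

include hz in
lemma dot_vt_ne (C : Code ι) {i : ι} (hi : i ∉ C.set) : z i ⬝ᵥ vt z C ≠ 0 := by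
  rw [vt, dot_vtx]
  have h : (Fin.cons (z i) (z ∘ C.tup) : Fin 6 → E6) = z ∘ (Fin.cons i C.tup : Fin 6 → ι) := by
    ext k : 1
    refine Fin.cases ?_ (fun k => ?_) k <;> simp
  rw [h]
  refine hz _ (Fin.cons_injective_iff.2 ⟨?_, C.tup_inj⟩)
  rintro ⟨k, hk⟩
  exact hi (hk ▸ C.tup_mem k)

include hz in
lemma eq_zero_of_six {s : Finset ι} (hs : 6 ≤ s.card) {p : E6} (hp : ∀ j ∈ s, z j ⬝ᵥ p = 0) :
    p = 0 := by
  obtain ⟨t, ht, hc⟩ := Finset.exists_subset_card_eq hs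
  exact eq_zero_of_dot (hz (enum t hc) (enum_inj _ _)) fun k => hp _ (ht (enum_mem _ _ k))

include hz in
lemma exists_dot {s : Finset ι} (hs : s.card = 6) (y : ι → ℝ) :
    ∃ d : E6, ∀ j ∈ s, z j ⬝ᵥ d = y j := by
  obtain ⟨d, hd⟩ := exists_dot_eq (hz (enum s hs) (enum_inj _ _)) (fun k => y (enum s hs k))
  refine ⟨d, fun j hj => ?_⟩
  obtain ⟨k, rfl⟩ := enum_surj s hs hj
  exact hd k

variable [DecidableEq ι]

include hz in
/-- Prescribing the products with at most six vectors, as long as `ι` has a six-element set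
containing their indices. -/
lemma exists_dot' {s X : Finset ι} (hs : s ⊆ X) (hc : s.card ≤ 6) (hX : 6 ≤ X.card) (y : ι → ℝ) :
    ∃ d : E6, ∀ j ∈ s, z j ⬝ᵥ d = y j := by
  obtain ⟨t, h1, h2, h3⟩ := Finset.exists_subsuperset_card_eq hs hc hX
  obtain ⟨d, hd⟩ := exists_dot hz h3 y
  exact ⟨d, fun j hj => hd j (h1 hj)⟩

include hz in
lemma vt_ne_zero (C : Code ι) {i : ι} (hi : i ∉ C.set) : vt z C ≠ 0 := by
  intro h
  exact dot_vt_ne hz C hi (by rw [h, dotProduct_zero])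

include hz in
/-- A vector orthogonal to the five vectors of a code is a multiple of its ray. -/
lemma eq_smul_vt (C : Code ι) {i : ι} (hi : i ∉ C.set) {p : E6} (hp : ∀ j ∈ C.set, z j ⬝ᵥ p = 0) :
    p = (z i ⬝ᵥ p / z i ⬝ᵥ vt z C) • vt z C := by
  have hne := dot_vt_ne hz C hi
  rw [← sub_eq_zero]
  refine eq_zero_of_six hz (s := insert i C.set) (by rw [card_insert_of_notMem hi, C.1.2]) ?_
  intro j hj
  rw [dotProduct_sub, dotProduct_smul, smul_eq_mul]
  rcases Finset.mem_insert.1 hj with rfl | hj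
  · rw [div_mul_cancel₀ _ hne, sub_self]
  · rw [hp j hj, dot_vt_mem C hj, mul_zero, sub_zero]

/-- Feasibility for the homogeneous constraints indexed by `X`. -/
def Feas (z : ι → E6) (X : Finset ι) (q : E6) : Prop := ∀ h ∈ X, 0 ≤ z h ⬝ᵥ q

/-- The constraints of `X` that hold with equality at `q`. -/
noncomputable def tight (z : ι → E6) (X : Finset ι) (q : E6) : Finset ι :=
  X.filter fun h => z h ⬝ᵥ q = 0

omit [DecidableEq ι] in
lemma mem_tight {X : Finset ι} {q : E6} {h : ι} : h ∈ tight z X q ↔ h ∈ X ∧ z h ⬝ᵥ q = 0 := by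
  simp [tight]

include hz in
omit [DecidableEq ι] in
lemma card_tight_le {X : Finset ι} {q : E6} (hq : q ≠ 0) : (tight z X q).card ≤ 5 := by
  by_contra h
  exact hq (eq_zero_of_six hz (s := tight z X q) (by omega) fun j hj => (mem_tight.1 hj).2)

/-- `C` is a vertex (extreme ray) of the cone cut out by `X`. -/
def IsVx (z : ι → E6) (X : Finset ι) (C : Code ι) : Prop := C.set ⊆ X ∧ Feas z X (vt z C)

omit [DecidableEq ι] in
lemma exists_notMem {X : Finset ι} (hX : 6 ≤ X.card) (C : Code ι) : ∃ i ∈ X, i ∉ C.set := by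
  by_contra h
  push Not at h
  have := Finset.card_le_card (show X ⊆ C.set from h)
  have h5 : C.set.card = 5 := C.1.2
  omega

include hz in
omit [DecidableEq ι] in
lemma IsVx.pos {X : Finset ι} {C : Code ι} (hC : IsVx z X C) {i : ι} (hi : i ∈ X)
    (hi' : i ∉ C.set) : 0 < z i ⬝ᵥ vt z C :=
  lt_of_le_of_ne (hC.2 i hi) (dot_vt_ne hz C hi').symm

include hz in
/-- A nonzero feasible vector orthogonal to a five-set spans a vertex. -/
lemma exists_code {X s : Finset ι} (hX : 6 ≤ X.card) (hs : s.card = 5) (hsX : s ⊆ X) {q : E6}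
    (hq : q ≠ 0) (hF : Feas z X q) (h0 : ∀ j ∈ s, z j ⬝ᵥ q = 0) :
    ∃ C : Code ι, C.set = s ∧ IsVx z X C ∧ ∃ c : ℝ, 0 < c ∧ q = c • vt z C := by
  obtain ⟨i, hiX, his⟩ := exists_notMem hX (⟨s, hs⟩, true)
  have hpos : 0 < z i ⬝ᵥ q := by
    refine lt_of_le_of_ne (hF i hiX) fun h => hq ?_
    refine eq_zero_of_six hz (s := insert i s) (by rw [card_insert_of_notMem his, hs]) ?_
    intro j hj
    rcases Finset.mem_insert.1 hj with rfl | hj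
    · exact h.symm
    · exact h0 j hj
  have main : ∀ b : Bool, 0 < z i ⬝ᵥ vt z (⟨s, hs⟩, b) → ∃ C : Code ι, C.set = s ∧ IsVx z X C ∧
      ∃ c : ℝ, 0 < c ∧ q = c • vt z C := by
    intro b hb
    have e := eq_smul_vt hz (⟨s, hs⟩, b) his h0
    have hc : 0 < z i ⬝ᵥ q / z i ⬝ᵥ vt z (⟨s, hs⟩, b) := div_pos hpos hb
    refine ⟨(⟨s, hs⟩, b), rfl, ⟨hsX, fun h hh => ?_⟩, _, hc, e⟩
    have := hF h hh
    rw [e, dotProduct_smul, smul_eq_mul] at this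
    exact nonneg_of_mul_nonneg_right this hc
  rcases lt_or_gt_of_ne (dot_vt_ne hz (⟨s, hs⟩, true) his) with h | h
  · refine main false ?_
    rw [vt_neg, dotProduct_neg]; linarith
  · exact main true h

include hz in
/-- A vertex is determined by its five-set. -/
lemma IsVx.ext {X : Finset ι} (hX : 6 ≤ X.card) {C C' : Code ι} (hC : IsVx z X C)
    (hC' : IsVx z X C') (h : C.set = C'.set) : C = C' := by
  obtain ⟨i, hiX, hi⟩ := exists_notMem hX C
  have h1 := hC.pos hz hiX hi
  have h2 := hC'.pos hz hiX (h ▸ hi)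
  obtain ⟨s, b⟩ := C
  obtain ⟨s', b'⟩ := C'
  have : s = s' := Subtype.ext h
  subst this
  cases b <;> cases b' <;> first | rfl | (rw [vt_neg, dotProduct_neg] at *; linarith)

include hz in
/-- From every vertex an edge leaves along each of its constraints and ends at another vertex. -/
lemma IsVx.edge {X : Finset ι} (hX : 6 ≤ X.card) {C : Code ι} (hC : IsVx z X C) {i : ι}
    (hi : i ∈ C.set) : ∃ J : Code ι, IsVx z X J ∧ C.set.erase i ⊆ J.set ∧ i ∉ J.set := by
  obtain ⟨d, hd⟩ := exists_dot' hz hC.1 (by rw [C.1.2]; omega) hX (fun j => if j = i then 1 else 0)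
  obtain ⟨i0, hi0X, hi0⟩ := exists_notMem hX C
  obtain ⟨m, hm, hmax⟩ := Finset.exists_max_image (X \ C.set)
    (fun h => - (z h ⬝ᵥ d) / (z h ⬝ᵥ vt z C)) ⟨i0, by simp [hi0X, hi0]⟩
  rw [Finset.mem_sdiff] at hm
  set s := - (z m ⬝ᵥ d) / (z m ⬝ᵥ vt z C) with hs
  have hu : ∀ h, z h ⬝ᵥ (d + s • vt z C) = z h ⬝ᵥ d + s * (z h ⬝ᵥ vt z C) := by
    intro h; rw [dotProduct_add, dotProduct_smul, smul_eq_mul]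
  have hmi : m ≠ i := fun h => hm.2 (h ▸ hi)
  have hF : Feas z X (d + s • vt z C) := by
    intro h hh
    rw [hu]
    by_cases hhC : h ∈ C.set
    · rw [dot_vt_mem C hhC, hd h hhC]; split_ifs <;> simp
    · have hp := hC.pos hz hh hhC
      have := hmax h (by simp [hh, hhC])
      rw [div_le_iff₀ hp] at this
      linarith
  have hi1 : z i ⬝ᵥ (d + s • vt z C) = 1 := by
    rw [hu, dot_vt_mem C hi, hd i hi]; simp
  have hne : d + s • vt z C ≠ 0 := by
    intro h; rw [h, dotProduct_zero] at hi1; norm_num at hi1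
  obtain ⟨J, hJ, hJX, -⟩ := exists_code hz (s := insert m (C.set.erase i)) hX
    (by rw [card_insert_of_notMem (by simp [hm.2]), card_erase_of_mem hi, C.1.2])
    (by
      intro j hj
      rcases Finset.mem_insert.1 hj with rfl | hj
      · exact hm.1
      · exact hC.1 (Finset.mem_of_mem_erase hj)) hne hF
    (by
      intro j hj
      rw [hu]
      rcases Finset.mem_insert.1 hj with rfl | hj
      · have hp := hC.pos hz hm.1 hm.2
        rw [hs, div_mul_cancel₀ _ hp.ne']; ring
      · have hjC := Finset.mem_of_mem_erase hj
        rw [dot_vt_mem C hjC, hd j hjC, if_neg (Finset.ne_of_mem_erase hj)]; simp)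
  refine ⟨J, hJX, ?_, ?_⟩
  · rw [hJ]; exact Finset.subset_insert _ _
  · rw [hJ]; simp [hmi.symm]

include hz in
/-- Every vector is a combination of a vertex and its neighbours, the coefficient of the neighbour
along the constraint `i` having the sign of `z i ⬝ᵥ q`. -/
lemma IsVx.decomp {X : Finset ι} (hX : 6 ≤ X.card) {C : Code ι} (hC : IsVx z X C)
    {J : ι → Code ι} (hJ : ∀ i ∈ C.set, C.set.erase i ⊆ (J i).set ∧ i ∉ (J i).set) (q : E6) :
    ∃ α : ℝ, q = α • vt z C + ∑ i ∈ C.set, ((z i ⬝ᵥ q) / (z i ⬝ᵥ vt z (J i))) • vt z (J i) := by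
  obtain ⟨i0, hi0X, hi0⟩ := exists_notMem hX C
  set p := q - ∑ i ∈ C.set, ((z i ⬝ᵥ q) / (z i ⬝ᵥ vt z (J i))) • vt z (J i) with hp
  have := eq_smul_vt hz C hi0 (p := p) (by
    intro j hj
    rw [hp, dotProduct_sub, dotProduct_sum, Finset.sum_eq_single j]
    · rw [dotProduct_smul, smul_eq_mul, div_mul_cancel₀ _ (dot_vt_ne hz (J j) (hJ j hj).2), sub_self]
    · intro i hi hij
      rw [dotProduct_smul, dot_vt_mem (i := j) (J i)
        ((hJ i hi).1 (Finset.mem_erase.2 ⟨hij.symm, hj⟩)), smul_zero]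
    · exact fun h => absurd hj h)
  refine ⟨z i0 ⬝ᵥ p / z i0 ⬝ᵥ vt z C, ?_⟩
  rw [← this, hp, sub_add_cancel]

include hz in
/-- The tight set of a nonzero feasible vector extends to a vertex. -/
lemma exists_vertex {X : Finset ι} (hX : 6 ≤ X.card) : ∀ (m : ℕ) (q : E6), q ≠ 0 → Feas z X q →
    5 ≤ (tight z X q).card + m → ∃ C : Code ι, IsVx z X C ∧ tight z X q ⊆ C.set := by
  intro m
  induction m with
  | zero =>
    intro q hq hF hc
    have h5 := card_tight_le hz (X := X) hq
    obtain ⟨C, h1, h2, -⟩ := exists_code hz hX (s := tight z X q) (by omega)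
      (fun j hj => (mem_tight.1 hj).1) hq hF (fun j hj => (mem_tight.1 hj).2)
    exact ⟨C, h2, h1.ge⟩
  | succ m ih =>
    intro q hq hF hc
    by_cases hcard : 5 ≤ (tight z X q).card + m
    · exact ih q hq hF hcard
    have hT : tight z X q ⊆ X := fun j hj => (mem_tight.1 hj).1
    obtain ⟨h1, h1X, h1T⟩ : ∃ h ∈ X, h ∉ tight z X q := by
      by_contra h; push Not at h
      have := Finset.card_le_card (show X ⊆ tight z X q from h); omega
    obtain ⟨h2, h2X, h2T⟩ : ∃ h ∈ X, h ∉ insert h1 (tight z X q) := by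
      by_contra h; push Not at h
      have := Finset.card_le_card (show X ⊆ insert h1 (tight z X q) from h)
      have := Finset.card_insert_le h1 (tight z X q); omega
    obtain ⟨d, hd⟩ := exists_dot' hz (s := insert h2 (insert h1 (tight z X q))) (X := X)
      (by
        intro j hj
        simp only [Finset.mem_insert] at hj
        rcases hj with rfl | rfl | hj
        · exact h2X
        · exact h1X
        · exact hT hj)
      (by
        have a := Finset.card_insert_le h2 (insert h1 (tight z X q))
        have b := Finset.card_insert_le h1 (tight z X q); omega) hX
      (fun j => if j = h2 then -1 else 0)
    have hd2 : z h2 ⬝ᵥ d = -1 := by rw [hd h2 (by simp)]; simp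
    have hd1 : z h1 ⬝ᵥ d = 0 := by
      rw [hd h1 (by simp), if_neg]; rintro rfl; simp at h2T
    have hdT : ∀ j ∈ tight z X q, z j ⬝ᵥ d = 0 := by
      intro j hj
      rw [hd j (by simp [hj]), if_neg]; rintro rfl; exact h2T (by simp [hj])
    obtain ⟨g, hg, hmin⟩ := Finset.exists_min_image (X.filter fun h => z h ⬝ᵥ d < 0)
      (fun h => (z h ⬝ᵥ q) / (- (z h ⬝ᵥ d))) ⟨h2, by simp [h2X, hd2]⟩
    rw [Finset.mem_filter] at hg
    set s := (z g ⬝ᵥ q) / (- (z g ⬝ᵥ d)) with hs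
    have hs0 : 0 ≤ s := div_nonneg (hF g hg.1) (by linarith [hg.2])
    have hu : ∀ h, z h ⬝ᵥ (q + s • d) = z h ⬝ᵥ q + s * (z h ⬝ᵥ d) := by
      intro h; rw [dotProduct_add, dotProduct_smul, smul_eq_mul]
    have hF' : Feas z X (q + s • d) := by
      intro h hh
      rw [hu]
      rcases lt_or_ge (z h ⬝ᵥ d) 0 with hneg | hpos
      · have := hmin h (by simp [hh, hneg])
        rw [le_div_iff₀ (by linarith)] at this
        linarith
      · have := hF h hh
        have := mul_nonneg hs0 hpos
        linarith
    have hne : q + s • d ≠ 0 := by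
      intro h
      have h3 := hu h1
      rw [h, dotProduct_zero, hd1, mul_zero, add_zero] at h3
      exact h1T (mem_tight.2 ⟨h1X, h3.symm⟩)
    have hgT : g ∉ tight z X q := by
      intro h; have := hdT g h; linarith [hg.2]
    have hsub : insert g (tight z X q) ⊆ tight z X (q + s • d) := by
      intro j hj
      rcases Finset.mem_insert.1 hj with rfl | hj
      · refine mem_tight.2 ⟨hg.1, ?_⟩
        rw [hu, hs]
        have : z j ⬝ᵥ d ≠ 0 := hg.2.ne
        field_simp; ring
      · refine mem_tight.2 ⟨hT hj, ?_⟩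
        rw [hu, hdT j hj, (mem_tight.1 hj).2]; simp
    have hc' := Finset.card_le_card hsub
    rw [card_insert_of_notMem hgT] at hc'
    obtain ⟨C, hC, hTC⟩ := ih _ hne hF' (by omega)
    exact ⟨C, hC, (Finset.subset_insert _ _).trans (hsub.trans hTC)⟩

end LT

/-! ### General position and bottom vertices -/

namespace LT

open Matrix Finset Code

set_option linter.unusedSectionVars false
set_option linter.unusedVariables false
set_option linter.unusedSimpArgs false

variable {ι : Type*} [DecidableEq ι]

/-- General position of a configuration: six vectors are independent, and on the plane orthogonal to
any four of them the first coordinate and any sum of six of the vectors are independent. -/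
structure GP (z : ι → E6) : Prop where
  six : Six z
  bot : ∀ F J : Finset ι, F.card = 6 → J.card = 4 → ∀ p : E6, p 0 = 0 →
    ∑ f ∈ F, z f ⬝ᵥ p = 0 → (∀ j ∈ J, z j ⬝ᵥ p = 0) → p = 0

/-- The linear form `∑_{f ∈ F} z_f`, positive on cones whose constraints include `F`. -/
noncomputable def eF (z : ι → E6) (F : Finset ι) (q : E6) : ℝ := ∑ f ∈ F, z f ⬝ᵥ q

/-- The alternating form `e(v) q₀ - v₀ e(q)` comparing the heights `q₀ / e(q)` and `v₀ / e(v)`. -/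
noncomputable def om (z : ι → E6) (F : Finset ι) (v : E6) : E6 →ₗ[ℝ] ℝ where
  toFun q := eF z F v * q 0 - v 0 * eF z F q
  map_add' p q := by simp [eF, dotProduct_add, Finset.sum_add_distrib]; ring
  map_smul' c q := by simp [eF, dotProduct_smul, ← Finset.mul_sum]; ring

lemma om_apply (z : ι → E6) (F : Finset ι) (v q : E6) :
    om z F v q = eF z F v * q 0 - v 0 * eF z F q := rfl

lemma om_antisymm (z : ι → E6) (F : Finset ι) (v q : E6) : om z F v q = - om z F q v := by
  simp only [om_apply]; ring

lemma om_self (z : ι → E6) (F : Finset ι) (v : E6) : om z F v v = 0 := by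
  simp only [om_apply]; ring

variable {z : ι → E6}

lemma eF_pos (hz : GP z) {F X : Finset ι} (hF : F.card = 6) (hFX : F ⊆ X) {q : E6} (hq : q ≠ 0)
    (hX : Feas z X q) : 0 < eF z F q := by
  refine lt_of_le_of_ne (Finset.sum_nonneg fun f hf => hX f (hFX hf)) fun h => hq ?_
  have := (Finset.sum_eq_zero_iff_of_nonneg fun f hf => hX f (hFX hf)).1 h.symm
  exact eq_zero_of_six hz.six hF.ge this

lemma six_le {F X : Finset ι} (hF : F.card = 6) (hFX : F ⊆ X) : 6 ≤ X.card :=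
  hF ▸ Finset.card_le_card hFX

lemma IsVx.ne_zero (hz : Six z) {X : Finset ι} (hX : 6 ≤ X.card) {C : Code ι} :
    vt z C ≠ 0 := by
  obtain ⟨i, _, hi⟩ := exists_notMem hX C
  exact vt_ne_zero hz C hi

lemma om_ne_zero (hz : GP z) {F X : Finset ι} (hF : F.card = 6) (hFX : F ⊆ X) {C J : Code ι}
    (hC : IsVx z X C) {i : ι} (hi : i ∈ C.set)
    (hJ : C.set.erase i ⊆ J.set ∧ i ∉ J.set) : om z F (vt z C) (vt z J) ≠ 0 := by
  intro h0
  have hX := six_le hF hFX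
  have hev := eF_pos hz hF hFX (IsVx.ne_zero hz.six hX) hC.2
  have hlin : ∀ p, eF z F p = ∑ f ∈ F, z f ⬝ᵥ p := fun _ => rfl
  have := hz.bot F (C.set.erase i) hF (by rw [card_erase_of_mem hi, C.1.2])
    (eF z F (vt z C) • vt z J - eF z F (vt z J) • vt z C) ?_ ?_ ?_
  · have h1 := congrArg (fun p => z i ⬝ᵥ p) this
    simp only [dotProduct_sub, dotProduct_smul, smul_eq_mul, dotProduct_zero, dot_vt_mem C hi,
      mul_zero, sub_zero] at h1
    exact mul_ne_zero hev.ne' (dot_vt_ne hz.six J hJ.2) h1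
  · rw [om_apply] at h0
    simp only [Pi.sub_apply, Pi.smul_apply, smul_eq_mul]; linarith
  · simp only [dotProduct_sub, dotProduct_smul, smul_eq_mul, Finset.sum_sub_distrib,
      ← Finset.mul_sum, ← hlin]
    ring
  · intro j hj
    rw [dotProduct_sub, dotProduct_smul, dotProduct_smul, dot_vt_mem J (hJ.1 hj),
      dot_vt_mem C (Finset.mem_of_mem_erase hj)]
    simp

/-- On the face of the constraints `J`, the vertex `C` is strictly extremal in the direction `σ`
among all vectors satisfying its own five constraints. -/
def IsBot (z : ι → E6) (F : Finset ι) (σ : ℝ) (J : Finset ι) (C : Code ι) : Prop :=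
  J ⊆ C.set ∧ ∀ q, (∀ j ∈ J, z j ⬝ᵥ q = 0) → (∀ i ∈ C.set, 0 ≤ z i ⬝ᵥ q) →
    (∃ i ∈ C.set, 0 < z i ⬝ᵥ q) → 0 < σ * om z F (vt z C) q

lemma isBot_of_nbrs (hz : GP z) {F X K : Finset ι} {σ : ℝ} (hX : 6 ≤ X.card) {C : Code ι}
    (hC : IsVx z X C) {J : ι → Code ι} (hJX : ∀ i ∈ C.set, IsVx z X (J i))
    (hJ : ∀ i ∈ C.set, C.set.erase i ⊆ (J i).set ∧ i ∉ (J i).set) (hK : K ⊆ C.set)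
    (hs : ∀ i ∈ C.set, i ∉ K → 0 < σ * om z F (vt z C) (vt z (J i))) : IsBot z F σ K C := by
  refine ⟨hK, fun q h1 h2 ⟨i, hi, hi0⟩ => ?_⟩
  obtain ⟨α, hα⟩ := hC.decomp hz.six hX hJ q
  have e : σ * om z F (vt z C) q = ∑ i ∈ C.set,
      ((z i ⬝ᵥ q) / (z i ⬝ᵥ vt z (J i))) * (σ * om z F (vt z C) (vt z (J i))) := by
    conv_lhs => rw [hα]
    rw [map_add, map_smul, om_self, map_sum, smul_zero, zero_add, Finset.mul_sum]
    refine Finset.sum_congr rfl fun i _ => ?_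
    rw [map_smul, smul_eq_mul]; ring
  have hpos : ∀ i ∈ C.set, 0 < z i ⬝ᵥ vt z (J i) := fun i hi =>
    (hJX i hi).pos hz.six (hC.1 hi) (hJ i hi).2
  rw [e]
  refine Finset.sum_pos' ?_ ⟨i, hi, ?_⟩
  · intro j hj
    by_cases hjK : j ∈ K
    · rw [h1 j hjK]; simp
    · exact mul_nonneg (div_nonneg (h2 j hj) (hpos j hj).le) (hs j hj hjK).le
  · exact mul_pos (div_pos hi0 (hpos i hi)) (hs i hi fun h => hi0.ne' (h1 i h))

lemma IsBot.unique (hz : GP z) {F X K : Finset ι} {σ : ℝ} (hX : 6 ≤ X.card) {C C' : Code ι}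
    (hC : IsVx z X C) (hC' : IsVx z X C') (hb : IsBot z F σ K C) (hb' : IsBot z F σ K C') :
    C = C' := by
  by_contra hne
  have key : ∀ {C C' : Code ι}, IsVx z X C → IsVx z X C' → C ≠ C' → K ⊆ C'.set →
      IsBot z F σ K C → 0 < σ * om z F (vt z C) (vt z C') := by
    intro C C' hC hC' hne hK hb
    refine hb.2 _ (fun j hj => dot_vt_mem C' (hK hj)) (fun i hi => hC'.2 i (hC.1 hi)) ?_
    by_contra h
    push Not at h
    refine hne (hC.ext hz.six hX hC' ?_)
    refine Finset.eq_of_subset_of_card_le (fun i hi => ?_) (by rw [C.1.2, C'.1.2])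
    by_contra hi'
    exact absurd (h i hi) (not_le.2 (hC'.pos hz.six (hC.1 hi) hi'))
  have h1 := key hC hC' hne hb'.1 hb
  have h2 := key hC' hC (Ne.symm hne) hb.1 hb'
  rw [om_antisymm] at h1
  linarith

section
variable [Fintype ι]

open Classical in
/-- The vertices of the cone cut out by `X`. -/
noncomputable def Vx (z : ι → E6) (X : Finset ι) : Finset (Code ι) :=
  univ.filter (IsVx z X)

lemma mem_Vx {X : Finset ι} {C : Code ι} : C ∈ Vx z X ↔ IsVx z X C := by simp [Vx]

/-- The number of vertices is at most quadratic: three of the five edges at a vertex go up, or three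
go down, so the vertex is extremal on a face given by only two constraints. -/
lemma card_Vx_le (hz : GP z) {F X : Finset ι} (hF : F.card = 6) (hFX : F ⊆ X) :
    (Vx z X).card ≤ X.card ^ 2 := by
  classical
  have hX := six_le hF hFX
  have main : ∀ C ∈ Vx z X, ∃ p : Finset ι × Bool, p.1 ∈ X.powersetCard 2 ∧
      IsBot z F (if p.2 then 1 else -1) p.1 C := by
    intro C hC
    rw [mem_Vx] at hC
    have hJ : ∀ i, ∃ J : Code ι, i ∈ C.set → IsVx z X J ∧ C.set.erase i ⊆ J.set ∧ i ∉ J.set := by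
      intro i
      by_cases hi : i ∈ C.set
      · obtain ⟨J, h⟩ := hC.edge hz.six hX hi
        exact ⟨J, fun _ => h⟩
      · exact ⟨C, fun h => absurd h hi⟩
    choose J hJ using hJ
    have pick : ∀ (b : Bool) (I : Finset ι), I ⊆ C.set → I.card = 3 →
        (∀ i ∈ I, 0 < (if b then 1 else -1 : ℝ) * om z F (vt z C) (vt z (J i))) →
        ∃ p : Finset ι × Bool, p.1 ∈ X.powersetCard 2 ∧
          IsBot z F (if p.2 then 1 else -1) p.1 C := by
      intro b I hI hc h
      refine ⟨(C.set \ I, b), ?_, ?_⟩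
      · rw [Finset.mem_powersetCard]
        refine ⟨Finset.sdiff_subset.trans hC.1, ?_⟩
        rw [Finset.card_sdiff_of_subset hI, C.1.2, hc]
      · refine isBot_of_nbrs hz hX hC (fun i hi => (hJ i hi).1) (fun i hi => (hJ i hi).2)
          Finset.sdiff_subset ?_
        intro i hi hi'
        refine h i ?_
        by_contra hcon
        exact hi' (Finset.mem_sdiff.2 ⟨hi, hcon⟩)
    set A := C.set.filter fun i => 0 < om z F (vt z C) (vt z (J i)) with hA
    set B := C.set.filter fun i => ¬ 0 < om z F (vt z C) (vt z (J i)) with hB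
    have hAB : A.card + B.card = 5 := by
      rw [← C.1.2]; exact Finset.card_filter_add_card_filter_not _
    rcases Nat.lt_or_ge A.card 3 with h3 | h3
    · obtain ⟨I, hI, hc⟩ := Finset.exists_subset_card_eq (s := B) (n := 3) (by omega)
      refine pick false I (hI.trans (Finset.filter_subset _ _)) hc fun i hi => ?_
      have := Finset.mem_filter.1 (hI hi)
      have hne := om_ne_zero hz hF hFX hC this.1 (hJ i this.1).2
      have := lt_of_le_of_ne (not_lt.1 this.2) hne
      simpa using this
    · obtain ⟨I, hI, hc⟩ := Finset.exists_subset_card_eq h3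
      refine pick true I (hI.trans (Finset.filter_subset _ _)) hc fun i hi => ?_
      simpa using (Finset.mem_filter.1 (hI hi)).2
  choose! p hp1 hp2 using main
  have hinj : Set.InjOn p (Vx z X) := by
    intro C hC C' hC' h
    have h1 := hp2 C hC
    rw [h] at h1
    exact IsBot.unique hz hX (mem_Vx.1 hC) (mem_Vx.1 hC') h1 (hp2 C' hC')
  have := Finset.card_le_card_of_injOn (t := X.powersetCard 2 ×ˢ univ) p
    (fun C hC => by simpa using hp1 C hC) hinj
  refine this.trans ?_
  rw [Finset.card_product, Finset.card_powersetCard]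
  simp only [card_univ, Fintype.card_bool]
  have := Nat.choose_two_right X.card
  have h2 : X.card * (X.card - 1) / 2 * 2 ≤ X.card * (X.card - 1) := Nat.div_mul_le_self _ _
  rw [this]
  calc _ ≤ X.card * (X.card - 1) := h2
    _ ≤ X.card * X.card := Nat.mul_le_mul_left _ (Nat.sub_le _ _)
    _ = _ := (sq _).symm

/-- The face of a nonzero feasible vector has a bottom vertex. -/
lemma exists_bot (hz : GP z) {F X : Finset ι} (hF : F.card = 6) (hFX : F ⊆ X) {q : E6} (hq : q ≠ 0)
    (hq' : Feas z X q) : ∃ C, IsVx z X C ∧ IsBot z F 1 (tight z X q) C := by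
  classical
  have hX := six_le hF hFX
  obtain ⟨C0, hC0, hT0⟩ := exists_vertex hz.six hX 5 q hq hq' (by omega)
  obtain ⟨C, hC, hmin⟩ := Finset.exists_min_image ((Vx z X).filter fun C => tight z X q ⊆ C.set)
    (fun C => vt z C 0 / eF z F (vt z C)) ⟨C0, by simp [mem_Vx, hC0, hT0]⟩
  rw [Finset.mem_filter, mem_Vx] at hC
  obtain ⟨hC, hT⟩ := hC
  have hJ : ∀ i, ∃ J : Code ι, i ∈ C.set → IsVx z X J ∧ C.set.erase i ⊆ J.set ∧ i ∉ J.set := by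
    intro i
    by_cases hi : i ∈ C.set
    · obtain ⟨J, h⟩ := hC.edge hz.six hX hi
      exact ⟨J, fun _ => h⟩
    · exact ⟨C, fun h => absurd h hi⟩
  choose J hJ using hJ
  refine ⟨C, hC, isBot_of_nbrs hz hX hC (fun i hi => (hJ i hi).1) (fun i hi => (hJ i hi).2) hT ?_⟩
  intro i hi hiT
  have hne := om_ne_zero hz hF hFX hC hi (hJ i hi).2
  have h1 := hmin (J i) (by
    rw [Finset.mem_filter, mem_Vx]
    refine ⟨(hJ i hi).1, fun j hj => (hJ i hi).2.1 (Finset.mem_erase.2 ⟨?_, hT hj⟩)⟩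
    rintro rfl; exact hiT hj)
  have p1 := eF_pos hz hF hFX (IsVx.ne_zero hz.six hX (C := C)) hC.2
  have p2 := eF_pos hz hF hFX (IsVx.ne_zero hz.six hX (C := J i)) (hJ i hi).1.2
  rw [div_le_div_iff₀ p1 p2] at h1
  rw [one_mul]
  refine lt_of_le_of_ne ?_ hne.symm
  rw [om_apply]; linarith

end

/-- For any nonzero `v`, the signs of the products with `v` on a set agree, outside five indices,
with those of a ray spanned by vectors of the set. -/
lemma exists_trace [Fintype ι] (hz : Six z) {G : Finset ι} (hG : 6 ≤ G.card) {v : E6} (hv : v ≠ 0) :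
    ∃ C : Code ι, C.set ⊆ G ∧ ∀ ρ ∈ G, ρ ∉ C.set → (z ρ ⬝ᵥ v < 0 ↔ z ρ ⬝ᵥ vt z C < 0) := by
  classical
  set sg : ι → ℝ := fun ρ => if z ρ ⬝ᵥ v < 0 then -1 else 1 with hsg
  have hsg0 : ∀ ρ, sg ρ ≠ 0 := by intro ρ; simp only [hsg]; split_ifs <;> norm_num
  set z' : ι → E6 := fun ρ => sg ρ • z ρ with hz'
  have hdot : ∀ ρ p, z' ρ ⬝ᵥ p = sg ρ * (z ρ ⬝ᵥ p) := by
    intro ρ p; simp only [hz', smul_dotProduct, smul_eq_mul]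
  have hsix : Six z' := by
    intro s hs
    have : Matrix.of (z' ∘ s) = Matrix.of fun i j => sg (s i) * (Matrix.of (z ∘ s)) i j := by
      ext i j; simp [hz']
    rw [this, det_mul_column]
    exact mul_ne_zero (Finset.prod_ne_zero_iff.2 fun i _ => hsg0 _) (hz s hs)
  have hF : Feas z' G v := by
    intro h hh
    rw [hdot]
    by_cases hneg : z h ⬝ᵥ v < 0
    · simp only [hsg, if_pos hneg]; linarith
    · simp only [hsg, if_neg hneg]; linarith
  obtain ⟨C, hC, hT⟩ := exists_vertex hsix hG 5 v hv hF (by omega)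
  obtain ⟨i, hiG, hi⟩ := exists_notMem hG C
  have hpar := eq_smul_vt hz C hi (p := vt z' C) (by
    intro j hj
    have := dot_vt_mem (z := z') C hj
    rw [hdot] at this
    exact (mul_eq_zero.1 this).resolve_left (hsg0 j))
  set c := z i ⬝ᵥ vt z' C / z i ⬝ᵥ vt z C
  have hc : c ≠ 0 := by
    intro h; rw [h, zero_smul] at hpar
    exact vt_ne_zero hsix C hi hpar
  have key : ∀ ρ ∈ G, ρ ∉ C.set → (z ρ ⬝ᵥ v < 0 ↔ c * (z ρ ⬝ᵥ vt z C) < 0) := by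
    intro ρ hρ hρC
    have h1 := hC.pos hsix hρ hρC
    rw [hdot, hpar, dotProduct_smul, smul_eq_mul] at h1
    by_cases hneg : z ρ ⬝ᵥ v < 0
    · simp only [hsg, if_pos hneg] at h1
      exact ⟨fun _ => by linarith, fun _ => hneg⟩
    · simp only [hsg, if_neg hneg] at h1
      exact ⟨fun h => absurd h hneg, fun h => by linarith⟩
  rcases lt_or_gt_of_ne hc with hneg | hpos
  · refine ⟨(C.1, !C.2), hC.1, fun ρ hρ hρC => ?_⟩
    rw [key ρ hρ hρC]
    have : vt z (C.1, !C.2) = - vt z C := by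
      obtain ⟨s, b⟩ := C
      cases b
      · simp [vt_neg]
      · simp [vt_neg]
    rw [this, dotProduct_neg]
    constructor <;> intro h <;> nlinarith
  · refine ⟨C, hC.1, fun ρ hρ hρC => ?_⟩
    rw [key ρ hρ hρC]
    constructor <;> intro h <;> nlinarith

end LT

namespace LT

open Matrix Finset Code

set_option linter.unusedSectionVars false
set_option linter.unusedVariables false
set_option linter.unusedSimpArgs false

variable {ι : Type*} [DecidableEq ι]

/-! ### Cells: the bottom-vertex triangulation of the cone of a sample -/

/-- One step of the bottom-vertex decomposition: a point that is not on the ray of `C` moves away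
from `C` until it leaves the cone; a point on the ray stays. -/
def Step (z : ι → E6) (X : Finset ι) (C : Code ι) (q q' : E6) : Prop :=
  (∃ t : ℝ, q' = q - t • vt z C ∧ 0 ≤ t ∧ ∃ h ∈ X, z h ⬝ᵥ q' = 0 ∧ 0 < z h ⬝ᵥ vt z C) ∨
  (∃ t : ℝ, 0 < t ∧ q = t • vt z C ∧ q' = q)

/-- `τ` is the cell containing `z b` in the bottom-vertex triangulation of the cone of `X`: `z b` is
a nonnegative combination of the rays `τ 0, …, τ 5`. -/
def Cell (z : ι → E6) (F X : Finset ι) (b : ι) (τ : Fin 6 → Code ι) : Prop :=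
  ∃ qs : Fin 6 → E6, qs 0 = z b ∧
    (∀ i, Feas z X (qs i) ∧ qs i ≠ 0 ∧ IsVx z X (τ i) ∧ IsBot z F 1 (tight z X (qs i)) (τ i)) ∧
    (∀ i : Fin 5, Step z X (τ i.castSucc) (qs i.castSucc) (qs i.succ)) ∧
    ∃ t : ℝ, 0 < t ∧ qs 5 = t • vt z (τ 5)

variable {z : ι → E6}

lemma exists_step (hz : Six z) {X : Finset ι} (hX : 6 ≤ X.card) {C : Code ι} (hC : IsVx z X C)
    {q : E6} (hq : Feas z X q) (hq0 : q ≠ 0) (hT : tight z X q ⊆ C.set) :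
    ∃ q', Step z X C q q' ∧ Feas z X q' ∧ q' ≠ 0 ∧
      ((∃ t : ℝ, 0 < t ∧ q = t • vt z C) ∧ q' = q ∨
        (tight z X q).card + 1 ≤ (tight z X q').card) := by
  by_cases hpar : ∃ t : ℝ, 0 < t ∧ q = t • vt z C
  · obtain ⟨t, ht, e⟩ := hpar
    exact ⟨q, Or.inr ⟨t, ht, e, rfl⟩, hq, hq0, Or.inl ⟨⟨t, ht, e⟩, rfl⟩⟩
  obtain ⟨i0, hi0X, hi0⟩ := exists_notMem hX C
  obtain ⟨m, hm, hmin⟩ := Finset.exists_min_image (X.filter fun h => 0 < z h ⬝ᵥ vt z C)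
    (fun h => (z h ⬝ᵥ q) / (z h ⬝ᵥ vt z C)) ⟨i0, by simp [hi0X, hC.pos hz hi0X hi0]⟩
  rw [Finset.mem_filter] at hm
  set t := (z m ⬝ᵥ q) / (z m ⬝ᵥ vt z C) with ht
  have ht0 : 0 ≤ t := div_nonneg (hq m hm.1) hm.2.le
  have hdot : ∀ h, z h ⬝ᵥ (q - t • vt z C) = z h ⬝ᵥ q - t * z h ⬝ᵥ vt z C := fun h => by
    rw [dotProduct_sub, dotProduct_smul, smul_eq_mul]
  have hm0 : z m ⬝ᵥ (q - t • vt z C) = 0 := by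
    rw [hdot, ht, div_mul_cancel₀ _ hm.2.ne', sub_self]
  refine ⟨q - t • vt z C, Or.inl ⟨t, rfl, ht0, m, hm.1, hm0, hm.2⟩, ?_, ?_, Or.inr ?_⟩
  · intro h hh
    rw [hdot]
    rcases (hC.2 h hh).lt_or_eq with h1 | h1
    · have := hmin h (by simp [hh, h1])
      rw [le_div_iff₀ h1] at this
      linarith
    · rw [← h1, mul_zero, sub_zero]; exact hq h hh
  · intro h0
    rw [sub_eq_zero] at h0
    refine hpar ⟨t, lt_of_le_of_ne ht0 fun h => hq0 ?_, h0⟩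
    rw [h0, ← h, zero_smul]
  · have hmT : m ∉ tight z X q := fun h => hm.2.ne' (dot_vt_mem C (hT h))
    rw [← card_insert_of_notMem hmT]
    refine card_le_card fun h hh => ?_
    rcases Finset.mem_insert.1 hh with rfl | hh
    · exact mem_tight.2 ⟨hm.1, hm0⟩
    · refine mem_tight.2 ⟨(mem_tight.1 hh).1, ?_⟩
      rw [hdot, (mem_tight.1 hh).2, dot_vt_mem C (hT hh)]; simp

lemma exists_cell [Fintype ι] (hz : GP z) {F X : Finset ι} (hF : F.card = 6) (hFX : F ⊆ X) {b : ι}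
    (hb : Feas z X (z b)) (hb0 : z b ≠ 0) : ∃ τ, Cell z F X b τ := by
  classical
  have hX := six_le hF hFX
  let P : Type := {q : E6 // q ≠ 0 ∧ Feas z X q}
  have hbot : ∀ q : P, ∃ C, IsVx z X C ∧ IsBot z F 1 (tight z X q.1) C := fun q =>
    exists_bot hz hF hFX q.2.1 q.2.2
  choose bC hbC1 hbC2 using hbot
  have hst : ∀ q : P, ∃ q' : P, Step z X (bC q) q.1 q'.1 ∧
      ((∃ t : ℝ, 0 < t ∧ q.1 = t • vt z (bC q)) ∧ q' = q ∨
        (tight z X q.1).card + 1 ≤ (tight z X q'.1).card) := by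
    intro q
    obtain ⟨q', h1, h2, h3, h4⟩ := exists_step hz.six hX (hbC1 q) q.2.2 q.2.1 (hbC2 q).1
    refine ⟨⟨q', h3, h2⟩, h1, ?_⟩
    rcases h4 with ⟨h4, h5⟩ | h4
    · exact Or.inl ⟨h4, Subtype.ext h5⟩
    · exact Or.inr h4
  choose nx hnx1 hnx2 using hst
  let qs : ℕ → P := fun i => nx^[i] ⟨z b, hb0, hb⟩
  have hqs : ∀ i, qs (i + 1) = nx (qs i) := fun i => Function.iterate_succ_apply' _ _ _
  have inv : ∀ i, (∃ t : ℝ, 0 < t ∧ (qs i).1 = t • vt z (bC (qs i))) ∨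
      i ≤ (tight z X (qs i).1).card := by
    intro i
    induction i with
    | zero => exact Or.inr (Nat.zero_le _)
    | succ i ih =>
      rcases hnx2 (qs i) with ⟨h1, h2⟩ | h2
      · left; rw [hqs, h2]; exact h1
      · rcases ih with ⟨t, ht, e⟩ | ih
        · rcases hnx1 (qs i) with ⟨t', e', _, h, hh, h0, hp⟩ | ⟨t', ht', e', e''⟩
          · exfalso
            have h3 := congrArg (fun p => z h ⬝ᵥ p) e'
            simp only [h0] at h3
            rw [e, ← sub_smul, dotProduct_smul, smul_eq_mul] at h3
            have : t - t' = 0 := by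
              rcases mul_eq_zero.1 h3.symm with h4 | h4
              · exact h4
              · exact absurd h4 hp.ne'
            refine (nx (qs i)).2.1 ?_
            rw [e', e, ← sub_smul, this, zero_smul]
          · rw [e''] at h2; omega
        · right; rw [hqs]; omega
  refine ⟨fun i => bC (qs i), fun i => (qs i).1, rfl, fun i => ⟨(qs i).2.2, (qs i).2.1, hbC1 _,
    hbC2 _⟩, fun i => ?_, ?_⟩
  · have := hnx1 (qs i)
    simp only [Fin.val_castSucc, Fin.val_succ, hqs]
    exact this
  · rcases inv 5 with h | h
    · exact h
    · have hsub : tight z X (qs 5).1 = (bC (qs 5)).set :=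
        Finset.eq_of_subset_of_card_le (hbC2 (qs 5)).1 (by rw [(bC (qs 5)).1.2]; exact h)
      obtain ⟨i0, hi0X, hi0⟩ := exists_notMem hX (bC (qs 5))
      have e := eq_smul_vt hz.six (bC (qs 5)) hi0 (p := (qs 5).1)
        fun j hj => (mem_tight.1 (hsub ▸ hj)).2
      refine ⟨_, div_pos (lt_of_le_of_ne ((qs 5).2.2 _ hi0X) fun h => hi0 ?_)
        ((hbC1 (qs 5)).pos hz.six hi0X hi0), e⟩
      rw [← hsub]; exact mem_tight.2 ⟨hi0X, h.symm⟩

lemma Step.unique {X : Finset ι} {C : Code ι} {q q' q'' : E6} (h' : Step z X C q q')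
    (h'' : Step z X C q q'') (f' : Feas z X q') (f'' : Feas z X q'') (n' : q' ≠ 0) (n'' : q'' ≠ 0) :
    q' = q'' := by
  have excl : ∀ {q'}, q' ≠ 0 → (∃ t : ℝ, q' = q - t • vt z C ∧ 0 ≤ t ∧ ∃ h ∈ X, z h ⬝ᵥ q' = 0 ∧
      0 < z h ⬝ᵥ vt z C) → (∃ t : ℝ, 0 < t ∧ q = t • vt z C) → False := by
    rintro q' n ⟨t, e, _, h, _, h0, hp⟩ ⟨s, hs, es⟩
    rw [e, es, ← sub_smul, dotProduct_smul, smul_eq_mul] at h0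
    have := (mul_eq_zero.1 h0).resolve_right hp.ne'
    exact n (by rw [e, es, ← sub_smul, this, zero_smul])
  have half : ∀ {q' q'' : E6} {t t' : ℝ}, q' = q - t • vt z C → q'' = q - t' • vt z C →
      Feas z X q'' → (∃ h ∈ X, z h ⬝ᵥ q' = 0 ∧ 0 < z h ⬝ᵥ vt z C) → t' ≤ t := by
    rintro q' q'' t t' e e' hf ⟨h, hh, h0, hp⟩
    have := hf h hh
    rw [e', dotProduct_sub, dotProduct_smul, smul_eq_mul] at this
    rw [e, dotProduct_sub, dotProduct_smul, smul_eq_mul] at h0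
    by_contra hc
    push Not at hc
    nlinarith
  rcases h' with h1 | ⟨s, hs, es, e⟩
  · rcases h'' with h2 | ⟨s, hs, es, e⟩
    · obtain ⟨t, e, _, w⟩ := h1
      obtain ⟨t', e', _, w'⟩ := h2
      have : t = t' := le_antisymm (half e' e f' w') (half e e' f'' w)
      rw [e, e', this]
    · exact (excl n' h1 ⟨s, hs, es⟩).elim
  · rcases h'' with h2 | ⟨s', hs', es', e'⟩
    · exact (excl n'' h2 ⟨s, hs, es⟩).elim
    · rw [e, e']

lemma Cell.unique (hz : GP z) {F X : Finset ι} (hX : 6 ≤ X.card) {b : ι}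
    {τ τ' : Fin 6 → Code ι} (h : Cell z F X b τ) (h' : Cell z F X b τ') : τ = τ' := by
  obtain ⟨qs, h0, h1, h2, _⟩ := h
  obtain ⟨qs', h0', h1', h2', _⟩ := h'
  have bot : ∀ i, qs i = qs' i → τ i = τ' i := by
    intro i e
    have := (h1' i).2.2.2
    rw [← e] at this
    exact IsBot.unique hz hX (h1 i).2.2.1 (h1' i).2.2.1 (h1 i).2.2.2 this
  have key : ∀ i, qs i = qs' i := by
    intro i
    induction i using Fin.induction with
    | zero => rw [h0, h0']
    | succ i ih =>
      have s' := h2' i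
      rw [← bot _ ih, ← ih] at s'
      exact (h2 i).unique s' (h1 _).1 (h1' _).1 (h1 _).2.1 (h1' _).2.1
  exact funext fun i => bot i (key i)

/-- The defining set of a cell. -/
def cellSet (τ : Fin 6 → Code ι) : Finset ι := univ.biUnion fun i => (τ i).set

lemma card_cellSet (τ : Fin 6 → Code ι) : (cellSet τ).card ≤ 30 := by
  refine card_biUnion_le.trans ?_
  rw [Finset.sum_congr rfl fun i _ => (τ i).1.2]; simp

lemma mem_cellSet {τ : Fin 6 → Code ι} {y : ι} : y ∈ cellSet τ ↔ ∃ i, y ∈ (τ i).set := by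
  simp [cellSet]

lemma IsVx.erase {X : Finset ι} {C : Code ι} (h : IsVx z X C) {y : ι} (hy : y ∉ C.set) :
    IsVx z (X.erase y) C :=
  ⟨fun i hi => Finset.mem_erase.2 ⟨fun e => hy (e ▸ hi), h.1 hi⟩,
    fun i hi => h.2 i (Finset.mem_of_mem_erase hi)⟩

lemma Cell.erase {F X : Finset ι} {b : ι} {τ : Fin 6 → Code ι} (h : Cell z F X b τ) {y : ι}
    (hy : y ∉ cellSet τ) : Cell z F (X.erase y) b τ := by
  have hy' : ∀ i, y ∉ (τ i).set := fun i hi => hy (mem_cellSet.2 ⟨i, hi⟩)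
  obtain ⟨qs, h0, h1, h2, h3⟩ := h
  refine ⟨qs, h0, fun i => ⟨fun j hj => (h1 i).1 j (Finset.mem_of_mem_erase hj), (h1 i).2.1,
    (h1 i).2.2.1.erase (hy' i), ?_⟩, fun i => ?_, h3⟩
  · have : tight z (X.erase y) (qs i) = tight z X (qs i) := by
      ext j
      simp only [mem_tight, Finset.mem_erase]
      constructor
      · rintro ⟨⟨_, a⟩, b⟩; exact ⟨a, b⟩
      · rintro ⟨a, b⟩
        refine ⟨⟨?_, a⟩, b⟩
        rintro rfl
        exact hy' i ((h1 i).2.2.2.1 (mem_tight.2 ⟨a, b⟩))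
    rw [this]; exact (h1 i).2.2.2
  · rcases h2 i with ⟨t, e, ht, h, hh, a, b⟩ | h
    · refine Or.inl ⟨t, e, ht, h, Finset.mem_erase.2 ⟨?_, hh⟩, a, b⟩
      rintro rfl
      exact hy' _ ((h1 i.succ).2.2.2.1 (mem_tight.2 ⟨hh, a⟩))
    · exact Or.inr h

lemma Cell.isVx {F X : Finset ι} {b : ι} {τ : Fin 6 → Code ι} (h : Cell z F X b τ) (i : Fin 6) :
    IsVx z X (τ i) := by
  obtain ⟨qs, h0, h1, h2, h3⟩ := h
  exact (h1 i).2.2.1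

lemma Cell.tight_le {F X : Finset ι} {b : ι} {τ : Fin 6 → Code ι} (h : Cell z F X b τ) :
    ∃ J : Fin 6 → Finset ι, (∀ i, J i ⊆ (τ 5).set) ∧ ∀ i, IsBot z F 1 (J i) (τ i) := by
  obtain ⟨qs, h0, h1, h2, h3⟩ := h
  refine ⟨fun i => tight z X (qs i), ?_, fun i => (h1 i).2.2.2⟩
  have hmono : Monotone fun i => tight z X (qs i) := by
    rw [Fin.monotone_iff_le_succ]
    intro i j hj
    have hj0 := dot_vt_mem (z := z) _ ((h1 i.castSucc).2.2.2.1 hj)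
    obtain ⟨a, b⟩ := mem_tight.1 hj
    refine mem_tight.2 ⟨a, ?_⟩
    rcases h2 i with ⟨t, e, _⟩ | ⟨t, _, _, e⟩
    · rw [e, dotProduct_sub, dotProduct_smul, hj0, b]; simp
    · rw [e, b]
  exact fun i => (hmono (Fin.le_last i)).trans (h1 5).2.2.2.1

open Classical in
/-- The cells containing some vector of `B`. -/
noncomputable def Cells [Fintype ι] (z : ι → E6) (F X B : Finset ι) : Finset (Fin 6 → Code ι) :=
  univ.filter fun τ => ∃ b ∈ B, Cell z F X b τ

lemma mem_Cells [Fintype ι] {F X B : Finset ι} {τ : Fin 6 → Code ι} :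
    τ ∈ Cells z F X B ↔ ∃ b ∈ B, Cell z F X b τ := by simp [Cells]

lemma card_Cells_le [Fintype ι] (hz : GP z) {F X B : Finset ι} (hF : F.card = 6) (hFX : F ⊆ X) :
    (Cells z F X B).card ≤ 2 ^ 30 * X.card ^ 2 := by
  classical
  have hX := six_le hF hFX
  have : ∀ τ ∈ Cells z F X B, ∃ J : Fin 6 → Finset ι, (∀ i, J i ⊆ (τ 5).set) ∧
      ∀ i, IsBot z F 1 (J i) (τ i) := by
    intro τ hτ
    obtain ⟨b, _, h⟩ := mem_Cells.1 hτ
    exact h.tight_le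
  choose! J hJ1 hJ2 using this
  have hvx : ∀ τ ∈ Cells z F X B, ∀ i, IsVx z X (τ i) := by
    intro τ hτ
    obtain ⟨b, _, h⟩ := mem_Cells.1 hτ
    exact h.isVx
  have h1 := Finset.card_le_card_of_injOn
    (t := (Vx z X).sigma fun C => Fintype.piFinset fun _ : Fin 6 => C.set.powerset)
    (fun τ => (⟨τ 5, J τ⟩ : Σ _ : Code ι, Fin 6 → Finset ι)) (s := Cells z F X B) ?_ ?_
  · refine h1.trans ?_
    rw [Finset.card_sigma]
    have : ∀ C ∈ Vx z X, (Fintype.piFinset fun _ : Fin 6 => C.set.powerset).card = 2 ^ 30 := by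
      intro C _
      rw [Fintype.card_piFinset_const, card_powerset, C.1.2]; norm_num
    rw [Finset.sum_congr rfl this, Finset.sum_const, smul_eq_mul, mul_comm]
    exact Nat.mul_le_mul_left _ (card_Vx_le hz hF hFX)
  · intro τ hτ
    simp only [Finset.coe_sigma, Set.mem_sigma_iff, Finset.mem_coe, mem_Vx, Fintype.mem_piFinset,
      Finset.mem_powerset]
    exact ⟨hvx τ hτ 5, hJ1 τ hτ⟩
  · intro τ hτ τ' hτ' e
    simp only [Sigma.mk.injEq, heq_eq_eq] at e
    funext i
    have h3 := hJ2 τ' hτ' i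
    rw [← e.2] at h3
    exact IsBot.unique hz hX (hvx τ hτ i) (hvx τ' hτ' i) (hJ2 τ hτ i) h3

/-! ### Tests -/

/-- The slots of a test: six exit constraints, a point, a functional, and six five-tuples. -/
abbrev Slot := Fin 6 ⊕ (Fin 2 ⊕ (Fin 6 × Fin 5))

/-- A test: its shape (a determinant, a comparison of two rays, or a link of a chain) and the
indices it involves. -/
abbrev Tst (ι : Type*) := (Bool ⊕ Fin 7) × (Slot → ι)

namespace Tst

/-- The tuple of indices with the given parts. -/
def mk (hs : Fin 6 → ι) (b f : ι) (cs : Fin 6 → Fin 5 → ι) : Slot → ι :=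
  Sum.elim hs (Sum.elim ![b, f] fun p => cs p.1 p.2)

/-- The chain of points obtained from `z b` by successively eliminating the rays `v i`. -/
def chain (z : ι → E6) (hs : ℕ → ι) (v : ℕ → E6) (b : ι) : ℕ → E6
  | 0 => z b
  | i + 1 => (z (hs i) ⬝ᵥ v i) • chain z hs v b i - (z (hs i) ⬝ᵥ chain z hs v b i) • v i

/-- The polynomial of a test. -/
noncomputable def fval (φ : Tst ι) (z : ι → E6) : ℝ :=
  let v : Fin 6 → E6 := fun i => vtx fun j => z (φ.2 (.inr (.inr (i, j))))
  let hs : Fin 6 → ι := fun i => φ.2 (.inl i)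
  let b := φ.2 (.inr (.inl 0))
  let f := φ.2 (.inr (.inl 1))
  match φ.1 with
  | .inl true => z f ⬝ᵥ v 0
  | .inl false => (z f ⬝ᵥ v 0) * (z b ⬝ᵥ v 1) - (z b ⬝ᵥ v 0) * (z f ⬝ᵥ v 1)
  | .inr i => z f ⬝ᵥ chain z (fun k => hs (Fin.ofNat 6 k)) (fun k => v (Fin.ofNat 6 k)) b i

/-- The test for the sign of `z f · vt C`. -/
noncomputable def det (f : ι) (C : Code ι) : Tst ι :=
  (.inl true, mk (fun _ => f) f f fun _ => C.tup)

/-- The test comparing `z b · v / z f · v` at two rays. -/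
noncomputable def minf (f b : ι) (C C' : Code ι) : Tst ι :=
  (.inl false, mk (fun _ => f) b f fun i => if i = 0 then C.tup else C'.tup)

/-- The test of a link of a chain. -/
noncomputable def link (i : Fin 7) (hs : Fin 6 → ι) (b f : ι) (τ : Fin 6 → Code ι) : Tst ι :=
  (.inr i, mk hs b f fun i => (τ i).tup)

/-- The test for the sign of `z f · z b`. -/
def pair (f b : ι) : Tst ι := (.inr 0, mk (fun _ => f) b f fun _ _ => f)

lemma fval_det (f : ι) (C : Code ι) : fval (det f C) z = z f ⬝ᵥ vt z C := rfl

lemma fval_minf (f b : ι) (C C' : Code ι) : fval (minf f b C C') z =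
    (z f ⬝ᵥ vt z C) * (z b ⬝ᵥ vt z C') - (z b ⬝ᵥ vt z C) * (z f ⬝ᵥ vt z C') := rfl

lemma fval_pair (f b : ι) : fval (pair f b) z = z f ⬝ᵥ z b := rfl

lemma fval_link (i : Fin 7) (hs : Fin 6 → ι) (b f : ι) (τ : Fin 6 → Code ι) :
    fval (link i hs b f τ) z = z f ⬝ᵥ chain z (fun k => hs (Fin.ofNat 6 k))
      (fun k => vt z (τ (Fin.ofNat 6 k))) b i := rfl

/-- The tests involving only indices of `L`. -/
def loc (L : Finset ι) : Finset (Tst ι) := univ ×ˢ Fintype.piFinset fun _ => L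

lemma card_loc (L : Finset ι) : (loc L).card = 9 * L.card ^ 38 := by
  simp [loc, Finset.card_product, Fintype.card_piFinset_const, Fintype.card_sum]

lemma loc_mono {L L' : Finset ι} (h : L ⊆ L') : loc L ⊆ loc L' :=
  Finset.product_subset_product_right (Fintype.piFinset_subset _ _ fun _ => h)

lemma mem_loc_mk {L : Finset ι} {s : Bool ⊕ Fin 7} {hs : Fin 6 → ι} {b f : ι}
    {cs : Fin 6 → Fin 5 → ι} (h1 : ∀ i, hs i ∈ L) (h2 : b ∈ L) (h3 : f ∈ L)
    (h4 : ∀ i j, cs i j ∈ L) : (s, mk hs b f cs) ∈ loc L := by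
  simp only [loc, Finset.mem_product, Finset.mem_univ, true_and, Fintype.mem_piFinset, mk]
  rintro (i | i | i)
  · exact h1 i
  · fin_cases i
    · exact h2
    · exact h3
  · exact h4 i.1 i.2

lemma det_mem {L : Finset ι} {f : ι} {C : Code ι} (hf : f ∈ L) (hC : C.set ⊆ L) : det f C ∈ loc L :=
  mem_loc_mk (fun _ => hf) hf hf fun _ j => hC (C.tup_mem j)

lemma minf_mem {L : Finset ι} {f b : ι} {C C' : Code ι} (hf : f ∈ L) (hb : b ∈ L) (hC : C.set ⊆ L)
    (hC' : C'.set ⊆ L) : minf f b C C' ∈ loc L := by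
  refine mem_loc_mk (fun _ => hf) hb hf fun i j => ?_
  split_ifs
  · exact hC (C.tup_mem j)
  · exact hC' (C'.tup_mem j)

lemma link_mem {L : Finset ι} {i : Fin 7} {hs : Fin 6 → ι} {f b : ι} {τ : Fin 6 → Code ι}
    (hh : ∀ i, hs i ∈ L) (hf : f ∈ L) (hb : b ∈ L) (hC : ∀ i, (τ i).set ⊆ L) :
    link i hs b f τ ∈ loc L :=
  mem_loc_mk hh hb hf fun i j => hC i ((τ i).tup_mem j)

lemma pair_mem {L : Finset ι} {f b : ι} (hf : f ∈ L) (hb : b ∈ L) : pair f b ∈ loc L :=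
  mem_loc_mk (fun _ => hf) hb hf fun _ _ => hf

end Tst

/-- Two configurations give the same signs to a set of tests. -/
def Agree (Φ : Finset (Tst ι)) (z z' : ι → E6) : Prop :=
  ∀ φ ∈ Φ, SignType.sign (φ.fval z) = SignType.sign (φ.fval z')

lemma Agree.mono {Φ Ψ : Finset (Tst ι)} {z z' : ι → E6} (h : Agree Φ z z') (hs : Ψ ⊆ Φ) :
    Agree Ψ z z' := fun φ hφ => h φ (hs hφ)

lemma Agree.pos {Φ : Finset (Tst ι)} {z z' : ι → E6} (h : Agree Φ z z') {φ} (hφ : φ ∈ Φ)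
    (hp : 0 < φ.fval z) : 0 < φ.fval z' := by
  have := h φ hφ
  rw [sign_pos hp] at this
  exact sign_eq_one_iff.1 this.symm

lemma Agree.neg {Φ : Finset (Tst ι)} {z z' : ι → E6} (h : Agree Φ z z') {φ} (hφ : φ ∈ Φ)
    (hp : φ.fval z < 0) : φ.fval z' < 0 := by
  have := h φ hφ
  rw [sign_neg hp] at this
  exact sign_eq_neg_one_iff.1 this.symm

lemma Agree.zero {Φ : Finset (Tst ι)} {z z' : ι → E6} (h : Agree Φ z z') {φ} (hφ : φ ∈ Φ)
    (hp : φ.fval z = 0) : φ.fval z' = 0 := by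
  have := h φ hφ
  rw [hp, sign_zero] at this
  exact sign_eq_zero_iff.1 this.symm

lemma Agree.nonneg {Φ : Finset (Tst ι)} {z z' : ι → E6} (h : Agree Φ z z') {φ} (hφ : φ ∈ Φ)
    (hp : 0 ≤ φ.fval z) : 0 ≤ φ.fval z' := by
  rcases hp.lt_or_eq with h1 | h1
  · exact (h.pos hφ h1).le
  · exact (h.zero hφ h1.symm).ge

lemma Agree.symm {Φ : Finset (Tst ι)} {z z' : ι → E6} (h : Agree Φ z z') : Agree Φ z' z :=
  fun φ hφ => (h φ hφ).symm

open Tst in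
/-- Eighteen tests certify that `z b` is a nonnegative combination of the rays of its cell. -/
lemma cell_cert (hz : Six z) {F X : Finset ι} (hF : F.card = 6) (hFX : F ⊆ X) {b : ι}
    {τ : Fin 6 → Code ι} (h : Cell z F X b τ) :
    ∃ Φ : Finset (Tst ι), Φ ⊆ loc (insert b X) ∧ Φ.card ≤ 18 ∧ ∀ z', Six z' → Agree Φ z z' →
      ∀ p : E6, (∀ i, 0 ≤ p ⬝ᵥ vt z' (τ i)) → 0 ≤ p ⬝ᵥ z' b := by
  classical
  have hX := six_le hF hFX
  have hV := h.isVx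
  obtain ⟨qs, h0, h1, h2, t5, ht5, h5⟩ := h
  have hex : ∀ i : Fin 6, ∃ h ∈ X, 0 < z h ⬝ᵥ vt z (τ i) ∧ ((∃ t : ℝ, 0 < t ∧ qs i = t • vt z (τ i)) ∨
      ∃ j : Fin 5, j.castSucc = i ∧ ∃ t : ℝ, qs j.succ = qs i - t • vt z (τ i) ∧
        z h ⬝ᵥ qs j.succ = 0) := by
    intro i
    obtain ⟨i0, hi0X, hi0⟩ := exists_notMem hX (τ i)
    have hp := (hV i).pos hz hi0X hi0
    refine Fin.lastCases ?_ (fun j => ?_) i (motive := fun i => ∃ h ∈ X, 0 < z h ⬝ᵥ vt z (τ i) ∧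
      ((∃ t : ℝ, 0 < t ∧ qs i = t • vt z (τ i)) ∨ ∃ j : Fin 5, j.castSucc = i ∧ ∃ t : ℝ,
        qs j.succ = qs i - t • vt z (τ i) ∧ z h ⬝ᵥ qs j.succ = 0))
    · obtain ⟨i0, hi0X, hi0⟩ := exists_notMem hX (τ (Fin.last 5))
      exact ⟨i0, hi0X, (hV _).pos hz hi0X hi0, Or.inl ⟨t5, ht5, h5⟩⟩
    · rcases h2 j with ⟨t, e, _, h, hh, a, b⟩ | ⟨t, ht, e, _⟩
      · exact ⟨h, hh, b, Or.inr ⟨j, rfl, t, e, a⟩⟩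
      · obtain ⟨i0, hi0X, hi0⟩ := exists_notMem hX (τ j.castSucc)
        exact ⟨i0, hi0X, (hV _).pos hz hi0X hi0, Or.inl ⟨t, ht, e⟩⟩
  choose hs hsX hsp hs2 using hex
  set Q := chain z (fun k => hs (Fin.ofNat 6 k)) (fun k => vt z (τ (Fin.ofNat 6 k))) b with hQ
  have hQs : ∀ k, Q (k + 1) = (z (hs (Fin.ofNat 6 k)) ⬝ᵥ vt z (τ (Fin.ofNat 6 k))) • Q k -
      (z (hs (Fin.ofNat 6 k)) ⬝ᵥ Q k) • vt z (τ (Fin.ofNat 6 k)) := fun k => rfl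
  -- each `Q k` is zero or a positive multiple of `qs k`
  have inv : ∀ k (hk : k < 6), Q k = 0 ∨ ∃ c : ℝ, 0 < c ∧ Q k = c • qs ⟨k, hk⟩ := by
    intro k
    induction k with
    | zero => intro _; exact Or.inr ⟨1, one_pos, by rw [one_smul]; exact h0.symm⟩
    | succ k ih =>
      intro hk
      have hk' : k < 6 := by omega
      have hfin : Fin.ofNat 6 k = ⟨k, hk'⟩ := Fin.ext (Nat.mod_eq_of_lt hk')
      rcases ih hk' with h | ⟨c, hc, e⟩
      · left; rw [hQs, h]; simp
      · rw [hQs, hfin, e]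
        rcases hs2 ⟨k, hk'⟩ with ⟨t, ht, e'⟩ | ⟨j, hj, t, e', a⟩
        · left; rw [e']
          simp only [dotProduct_smul, smul_eq_mul, smul_smul, ← sub_smul]
          rw [mul_comm, sub_self, zero_smul]
        · right
          have hjs : j.succ = ⟨k + 1, hk⟩ := by
            apply Fin.ext; have := congrArg Fin.val hj; simp at this; simp [this]
          refine ⟨(z (hs ⟨k, hk'⟩) ⬝ᵥ vt z (τ ⟨k, hk'⟩)) * c, mul_pos (hsp _) hc, ?_⟩
          rw [← hjs, e']
          rw [e', dotProduct_sub, dotProduct_smul, smul_eq_mul, sub_eq_zero] at a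
          rw [dotProduct_smul, a, smul_sub, smul_smul, smul_smul, smul_eq_mul]
          congr 2; ring
  have hnn : ∀ k : Fin 6, 0 ≤ z (hs k) ⬝ᵥ Q k := by
    intro k
    rcases inv k k.2 with h | ⟨c, hc, e⟩
    · rw [h, dotProduct_zero]
    · rw [e, dotProduct_smul]; exact mul_nonneg hc.le ((h1 _).1 _ (hsX _))
  have hQ6 : Q 6 = 0 := by
    rw [hQs]
    have : (Fin.ofNat 6 5) = 5 := rfl
    rw [this]
    rcases inv 5 (by norm_num) with h | ⟨c, hc, e⟩
    · rw [h]; simp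
    · rw [e, show (⟨5, _⟩ : Fin 6) = 5 from rfl, h5]
      simp only [dotProduct_smul, smul_eq_mul, smul_smul, ← sub_smul]
      rw [mul_comm, sub_self, zero_smul]
  have hbL : b ∈ insert b X := Finset.mem_insert_self _ _
  have hXL : X ⊆ insert b X := Finset.subset_insert _ _
  refine ⟨(univ.image fun i : Fin 6 => det (hs i) (τ i)) ∪
    ((univ.image fun i : Fin 6 => link i.castSucc hs b (hs i) τ) ∪
      F.image fun f => link 6 hs b f τ), ?_, ?_, ?_⟩
  · have hτ : ∀ i, (τ i).set ⊆ insert b X := fun i => (hV i).1.trans hXL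
    refine Finset.union_subset ?_ (Finset.union_subset ?_ ?_)
    · exact Finset.image_subset_iff.2 fun i _ => det_mem (hXL (hsX i)) (hτ i)
    · exact Finset.image_subset_iff.2 fun i _ => link_mem (fun i => hXL (hsX i)) (hXL (hsX i)) hbL hτ
    · exact Finset.image_subset_iff.2 fun f hf => link_mem (fun i => hXL (hsX i)) (hXL (hFX hf)) hbL hτ
  · refine (card_union_le _ _).trans ?_
    have e1 := card_image_le (s := (univ : Finset (Fin 6))) (f := fun i : Fin 6 => det (hs i) (τ i))
    have e2 := card_image_le (s := (univ : Finset (Fin 6)))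
      (f := fun i : Fin 6 => link i.castSucc hs b (hs i) τ)
    have e3 := card_image_le (s := F) (f := fun f => link 6 hs b f τ)
    have e4 := card_union_le (univ.image fun i : Fin 6 => link i.castSucc hs b (hs i) τ)
      (F.image fun f => link 6 hs b f τ)
    rw [Finset.card_univ, Fintype.card_fin] at e1 e2
    omega
  · intro z' hz' hag p hp
    set Q' := chain z' (fun k => hs (Fin.ofNat 6 k)) (fun k => vt z' (τ (Fin.ofNat 6 k))) b with hQ'
    have hQs' : ∀ k, Q' (k + 1) = (z' (hs (Fin.ofNat 6 k)) ⬝ᵥ vt z' (τ (Fin.ofNat 6 k))) • Q' k -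
        (z' (hs (Fin.ofNat 6 k)) ⬝ᵥ Q' k) • vt z' (τ (Fin.ofNat 6 k)) := fun k => rfl
    have g1 : ∀ i, 0 < z' (hs i) ⬝ᵥ vt z' (τ i) := fun i => by
      have := hag.pos (φ := det (hs i) (τ i)) (Finset.mem_union_left _
        (Finset.mem_image_of_mem _ (Finset.mem_univ i))) (by rw [fval_det]; exact hsp i)
      rwa [fval_det] at this
    have g2 : ∀ i : Fin 6, 0 ≤ z' (hs i) ⬝ᵥ Q' i := fun i => by
      have := hag.nonneg (φ := link i.castSucc hs b (hs i) τ) (Finset.mem_union_right _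
        (Finset.mem_union_left _ (Finset.mem_image_of_mem _ (Finset.mem_univ i))))
        (by rw [fval_link]; exact hnn i)
      rwa [fval_link] at this
    have g3 : Q' 6 = 0 := by
      refine eq_zero_of_six hz' hF.ge fun f hf => ?_
      have := hag.zero (φ := link 6 hs b f τ) (Finset.mem_union_right _
        (Finset.mem_union_right _ (Finset.mem_image_of_mem _ hf)))
        (by rw [fval_link]; change _ ⬝ᵥ Q 6 = 0; rw [hQ6, dotProduct_zero])
      rwa [fval_link] at this
    have down : ∀ k, k ≤ 6 → 0 ≤ p ⬝ᵥ Q' (6 - k) := by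
      intro k
      induction k with
      | zero => intro _; rw [show Q' (6 - 0) = 0 from g3, dotProduct_zero]
      | succ k ih =>
        intro hk
        obtain ⟨m, hm⟩ : ∃ m, 6 - (k + 1) = m := ⟨_, rfl⟩
        have hm6 : m < 6 := by omega
        have e : 6 - k = m + 1 := by omega
        have hfin : Fin.ofNat 6 m = ⟨m, hm6⟩ := Fin.ext (Nat.mod_eq_of_lt hm6)
        have := ih (by omega)
        rw [e, hQs', hfin, dotProduct_sub, dotProduct_smul, dotProduct_smul, smul_eq_mul,
          smul_eq_mul] at this
        rw [hm]
        have k1 := g1 ⟨m, hm6⟩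
        have k2 := g2 ⟨m, hm6⟩
        have k3 := hp ⟨m, hm6⟩
        simp only at k2
        have k4 := mul_nonneg k2 k3
        by_contra hneg
        push Not at hneg
        nlinarith
    exact down 6 le_rfl

end LT

namespace LT

open Matrix Finset Code

set_option linter.unusedSectionVars false
set_option linter.unusedVariables false
set_option linter.unusedSimpArgs false

variable {ι : Type*} [DecidableEq ι]

/-! ### Random sampling -/

lemma sum_insert_pairs {N : Finset ι} (ρ : ℕ) (f : Finset ι → ι → ℝ) :
    ∑ Y ∈ N.powersetCard ρ, ∑ y ∈ N \ Y, f (insert y Y) y =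
      ∑ Z ∈ N.powersetCard (ρ + 1), ∑ y ∈ Z, f Z y := by
  rw [Finset.sum_sigma', Finset.sum_sigma']
  refine Finset.sum_bij' (fun p _ => ⟨insert p.2 p.1, p.2⟩) (fun p _ => ⟨p.1.erase p.2, p.2⟩)
    ?_ ?_ ?_ ?_ ?_
  · rintro ⟨Y, y⟩ h
    simp only [mem_sigma, mem_powersetCard, mem_sdiff] at h ⊢
    exact ⟨⟨insert_subset h.2.1 h.1.1, by rw [card_insert_of_notMem h.2.2, h.1.2]⟩,
      mem_insert_self _ _⟩
  · rintro ⟨Z, y⟩ h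
    simp only [mem_sigma, mem_powersetCard, mem_sdiff] at h ⊢
    exact ⟨⟨(erase_subset _ _).trans h.1.1, by rw [card_erase_of_mem h.2, h.1.2]; rfl⟩,
      h.1.1 h.2, notMem_erase _ _⟩
  · rintro ⟨Y, y⟩ h
    simp only [mem_sigma, mem_powersetCard, mem_sdiff] at h
    simp [erase_insert h.2.2]
  · rintro ⟨Z, y⟩ h
    simp only [mem_sigma, mem_powersetCard] at h
    simp [insert_erase h.2]
  · rintro ⟨Y, y⟩ h; rfl

/-- The sampling inequality relating the conflicts of a family at samples of size `ρ` to its size at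
samples of sizes `ρ` and `ρ + 1`. -/
def SampleIneq (N : Finset ι) (c : ℝ) (W G : Finset ι → ℝ) : Prop :=
  ∀ ρ, ∑ Y ∈ N.powersetCard ρ, G Y ≤ ((N.card : ℝ) - ρ) * ∑ Y ∈ N.powersetCard ρ, W Y -
    ((ρ + 1 : ℝ) - c) * ∑ Y ∈ N.powersetCard (ρ + 1), W Y

lemma sampleIneq_of_family {κ : Type*} [DecidableEq κ] {N : Finset ι} (T : Finset ι → Finset κ)
    (D conf : κ → Finset ι) {c : ℕ} (hD : ∀ τ, (D τ).card ≤ c)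
    (h0 : ∀ Y ⊆ N, ∀ τ ∈ T Y, conf τ ⊆ N \ Y)
    (h2 : ∀ Z ⊆ N, ∀ τ ∈ T Z, ∀ y ∈ Z, y ∉ D τ → τ ∈ T (Z.erase y)) :
    SampleIneq N c (fun Y => (T Y).card) (fun Y => ∑ τ ∈ T Y, ((conf τ).card : ℝ)) := by
  intro ρ
  have e1 : ∀ Y ∈ N.powersetCard ρ, ∑ τ ∈ T Y, ((conf τ).card : ℝ) =
      ∑ y ∈ N \ Y, (((T Y).filter fun τ => y ∈ conf τ).card : ℝ) := by
    intro Y hY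
    rw [mem_powersetCard] at hY
    have := Finset.sum_card_bipartiteAbove_eq_sum_card_bipartiteBelow (s := T Y) (t := N \ Y)
      (fun τ y => y ∈ conf τ)
    simp only [Finset.bipartiteAbove, Finset.bipartiteBelow] at this
    rw [← Nat.cast_sum, ← Nat.cast_sum, ← this]
    congr 1
    refine Finset.sum_congr rfl fun τ hτ => ?_
    congr 1
    ext y
    simp only [mem_filter]
    exact ⟨fun h => ⟨h0 Y hY.1 τ hτ h, h⟩, fun h => h.2⟩
  have e2 : ∀ Y ∈ N.powersetCard ρ, ∀ y ∈ N \ Y, (((T Y).filter fun τ => y ∈ conf τ).card : ℝ) ≤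
      (T Y).card - ((T (insert y Y)).card : ℝ) +
        (((T (insert y Y)).filter fun τ => y ∈ D τ).card : ℝ) := by
    intro Y hY y hy
    rw [mem_powersetCard] at hY
    rw [mem_sdiff] at hy
    have hZ : insert y Y ⊆ N := insert_subset hy.1 hY.1
    have hd : Disjoint ((T Y).filter fun τ => y ∈ conf τ)
        ((T (insert y Y)).filter fun τ => ¬ y ∈ D τ) := by
      rw [Finset.disjoint_left]
      intro τ h1 h2
      simp only [mem_filter] at h1 h2
      have := h0 _ hZ τ h2.1 h1.2
      simp at this
    have hs : ((T Y).filter fun τ => y ∈ conf τ) ∪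
        ((T (insert y Y)).filter fun τ => ¬ y ∈ D τ) ⊆ T Y := by
      refine union_subset (filter_subset _ _) fun τ h => ?_
      simp only [mem_filter] at h
      have := h2 _ hZ τ h.1 y (mem_insert_self _ _) h.2
      rwa [erase_insert hy.2] at this
    have h3 := card_le_card hs
    rw [card_union_of_disjoint hd] at h3
    have h4 := Finset.card_filter_add_card_filter_not (s := T (insert y Y)) (fun τ => y ∈ D τ)
    have h3' : (((T Y).filter fun τ => y ∈ conf τ).card : ℝ) +
      (((T (insert y Y)).filter fun τ => ¬ y ∈ D τ).card : ℝ) ≤ (T Y).card := by exact_mod_cast h3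
    have h4' : (((T (insert y Y)).filter fun τ => y ∈ D τ).card : ℝ) +
      (((T (insert y Y)).filter fun τ => ¬ y ∈ D τ).card : ℝ) = (T (insert y Y)).card := by
        exact_mod_cast h4
    linarith
  rw [Finset.sum_congr rfl e1]
  refine (Finset.sum_le_sum fun Y hY => Finset.sum_le_sum (e2 Y hY)).trans ?_
  simp only [Finset.sum_add_distrib, Finset.sum_sub_distrib]
  rw [sum_insert_pairs ρ fun Z _ => ((T Z).card : ℝ),
    sum_insert_pairs ρ fun Z y => (((T Z).filter fun τ => y ∈ D τ).card : ℝ)]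
  have e3 : ∑ Y ∈ N.powersetCard ρ, ∑ y ∈ N \ Y, ((T Y).card : ℝ) =
      ((N.card : ℝ) - ρ) * ∑ Y ∈ N.powersetCard ρ, ((T Y).card : ℝ) := by
    rw [Finset.mul_sum]
    refine Finset.sum_congr rfl fun Y hY => ?_
    rw [mem_powersetCard] at hY
    rw [Finset.sum_const, nsmul_eq_mul, card_sdiff_of_subset hY.1,
      Nat.cast_sub (card_le_card hY.1), hY.2]
  have e4 : ∑ Z ∈ N.powersetCard (ρ + 1), ∑ y ∈ Z, ((T Z).card : ℝ) =
      (ρ + 1 : ℝ) * ∑ Y ∈ N.powersetCard (ρ + 1), ((T Y).card : ℝ) := by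
    rw [Finset.mul_sum]
    refine Finset.sum_congr rfl fun Y hY => ?_
    rw [mem_powersetCard] at hY
    rw [Finset.sum_const, nsmul_eq_mul, hY.2]; push_cast; ring
  have e5 : ∑ Z ∈ N.powersetCard (ρ + 1), ∑ y ∈ Z, (((T Z).filter fun τ => y ∈ D τ).card : ℝ) ≤
      (c : ℝ) * ∑ Y ∈ N.powersetCard (ρ + 1), ((T Y).card : ℝ) := by
    rw [Finset.mul_sum]
    refine Finset.sum_le_sum fun Z hZ => ?_
    have := Finset.sum_card_bipartiteAbove_eq_sum_card_bipartiteBelow (s := T Z) (t := Z)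
      (fun τ y => y ∈ D τ)
    simp only [Finset.bipartiteAbove, Finset.bipartiteBelow] at this
    rw [← Nat.cast_sum, ← this]
    have h5 : ∑ τ ∈ T Z, (Z.filter fun y => y ∈ D τ).card ≤ ∑ τ ∈ T Z, c := by
      refine Finset.sum_le_sum fun τ _ => le_trans (card_le_card ?_) (hD τ)
      intro y hy; exact (mem_filter.1 hy).2
    rw [Finset.sum_const, smul_eq_mul] at h5
    calc ((∑ τ ∈ T Z, (Z.filter fun y => y ∈ D τ).card : ℕ) : ℝ) ≤ (((T Z).card * c : ℕ) : ℝ) := by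
          exact_mod_cast h5
      _ = _ := by push_cast; ring
  rw [e3, e4]
  linarith

lemma SampleIneq.add {N : Finset ι} {c : ℝ} {W G W' G' : Finset ι → ℝ} (h : SampleIneq N c W G)
    (h' : SampleIneq N c W' G') :
    SampleIneq N c (fun Y => W Y + W' Y) (fun Y => G Y + G' Y) := by
  intro ρ
  have := h ρ
  have := h' ρ
  simp only [Finset.sum_add_distrib]
  linarith

lemma SampleIneq.smul {N : Finset ι} {c a : ℝ} (ha : 0 ≤ a) {W G : Finset ι → ℝ}
    (h : SampleIneq N c W G) : SampleIneq N c (fun Y => a * W Y) (fun Y => a * G Y) := by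
  intro ρ
  simp only [← Finset.mul_sum]
  have := mul_le_mul_of_nonneg_left (h ρ) ha
  linarith

/-- Averaging over all samples of sizes `r, …, 2r - 1`. -/
lemma SampleIneq.exists {N : Finset ι} {c t : ℝ} (hc : 0 ≤ c) {W G : Finset ι → ℝ}
    (h : SampleIneq N c W G) {r : ℕ} (hr : 0 < r) (hrN : 2 * r ≤ N.card)
    (hW0 : ∀ Y ⊆ N, 0 ≤ W Y) (hG0 : ∀ Y ⊆ N, 0 ≤ G Y)
    (hWt : ∀ Y ⊆ N, Y.card ≤ 2 * r → W Y ≤ t) :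
    ∃ Y ⊆ N, Y.card ≤ 2 * r ∧ r * G Y ≤ N.card * (1 + c) * t := by
  by_contra hcon
  push Not at hcon
  set n := N.card with hn
  have ht : 0 ≤ t := (hW0 ∅ (empty_subset _)).trans (hWt ∅ (empty_subset _) (by simp))
  set M : ℝ := n * (1 + c) * t / r with hM
  have hr' : (0 : ℝ) < r := by exact_mod_cast hr
  have hn0 : (0 : ℝ) < n := by exact_mod_cast (by omega : 0 < n)
  have hM0 : 0 ≤ M := by positivity
  set A : ℕ → ℝ := fun ρ => (∑ Y ∈ N.powersetCard ρ, W Y) / (n.choose ρ) with hA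
  have hchoose : ∀ ρ, ρ ≤ 2 * r → (0 : ℝ) < n.choose ρ := fun ρ h => by
    exact_mod_cast Nat.choose_pos (by omega)
  have hA0 : ∀ ρ, 0 ≤ A ρ := fun ρ => div_nonneg (Finset.sum_nonneg fun Y hY =>
    hW0 Y (mem_powersetCard.1 hY).1) (Nat.cast_nonneg _)
  have hAt : ∀ ρ ≤ 2 * r, A ρ ≤ t := fun ρ hρ => by
    rw [hA]; simp only
    rw [div_le_iff₀ (hchoose ρ hρ)]
    calc ∑ Y ∈ N.powersetCard ρ, W Y ≤ ∑ Y ∈ N.powersetCard ρ, t :=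
          Finset.sum_le_sum fun Y hY => hWt Y (mem_powersetCard.1 hY).1
            (by rw [(mem_powersetCard.1 hY).2]; exact hρ)
      _ = t * n.choose ρ := by rw [Finset.sum_const, card_powersetCard, nsmul_eq_mul, mul_comm]
  have step : ∀ ρ, r ≤ ρ → ρ < 2 * r → M / n < A ρ - A (ρ + 1) + c * t / r := by
    intro ρ h1 h2
    have hch : (n.choose (ρ + 1) : ℝ) * (ρ + 1) = n.choose ρ * (n - ρ) := by
      have := Nat.choose_succ_right_eq n ρ
      rw [← Nat.cast_sub (by omega : ρ ≤ n)]
      exact_mod_cast this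
    have hS : ∀ ρ ≤ 2 * r, ∑ Y ∈ N.powersetCard ρ, W Y = A ρ * n.choose ρ := fun ρ hρ => by
      rw [hA]; simp only; rw [div_mul_cancel₀ _ (hchoose ρ hρ).ne']
    have h3 := h ρ
    rw [hS ρ h2.le, hS (ρ + 1) h2] at h3
    have h4 : M * n.choose ρ < ∑ Y ∈ N.powersetCard ρ, G Y := by
      have : ∑ Y ∈ N.powersetCard ρ, M = M * n.choose ρ := by
        rw [Finset.sum_const, card_powersetCard, nsmul_eq_mul, mul_comm]
      rw [← this]
      refine Finset.sum_lt_sum_of_nonempty ?_ fun Y hY => ?_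
      · rw [powersetCard_nonempty]; omega
      · rw [mem_powersetCard] at hY
        have := hcon Y hY.1 (by omega)
        rw [hM, div_lt_iff₀ hr']; linarith
    have hd : (0 : ℝ) < (n : ℝ) - ρ := by
      have : ((ρ : ℕ) : ℝ) < n := by exact_mod_cast (by omega : ρ < n)
      linarith
    have hdn : (n : ℝ) - ρ ≤ n := by
      have : (0 : ℝ) ≤ ρ := Nat.cast_nonneg _
      linarith
    have hρ1 : (0 : ℝ) < ρ + 1 := by positivity
    have h5 : M < (n - ρ) * (A ρ - A (ρ + 1) + c * A (ρ + 1) / (ρ + 1)) := by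
      have e : ((n : ℝ) - ρ) * (A ρ * n.choose ρ) - ((ρ + 1 : ℝ) - c) * (A (ρ + 1) * n.choose (ρ + 1)) =
          ((n - ρ) * (A ρ - A (ρ + 1) + c * A (ρ + 1) / (ρ + 1))) * n.choose ρ := by
        have : (n.choose (ρ + 1) : ℝ) = n.choose ρ * (n - ρ) / (ρ + 1) := by
          rw [eq_div_iff hρ1.ne']; exact hch
        rw [this]; field_simp; ring
      have := h4.trans_le (h3.trans_eq e)
      exact lt_of_mul_lt_mul_right this (Nat.cast_nonneg _)
    have h6 : c * A (ρ + 1) / (ρ + 1) ≤ c * t / r := by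
      have hρr : (r : ℝ) ≤ ρ + 1 := by
        have : (r : ℝ) ≤ ρ := by exact_mod_cast h1
        linarith
      exact div_le_div₀ (mul_nonneg hc ht) (mul_le_mul_of_nonneg_left (hAt _ h2) hc) hr' hρr
    have h7 : M / n ≤ M / (n - ρ) := div_le_div_of_nonneg_left hM0 hd hdn
    have h8 : M / (n - ρ) < A ρ - A (ρ + 1) + c * A (ρ + 1) / (ρ + 1) := by
      rw [div_lt_iff₀ hd]; linarith
    linarith
  have tel : ∀ k, k ≤ r → k * (M / n) ≤ A r - A (r + k) + k * (c * t / r) := by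
    intro k
    induction k with
    | zero => intro _; simp
    | succ k ih =>
      intro hk
      have h1 := ih (by omega)
      have h2 := step (r + k) (by omega) (by omega)
      rw [← add_assoc]
      push_cast
      linarith
  -- at `k = r` the inequality is strict because `r > 0`
  have h1 := tel (r - 1) (by omega)
  have h2 := step (r + (r - 1)) (by omega) (by omega)
  rw [show r + (r - 1) + 1 = 2 * r by omega] at h2
  have h3 : ((r - 1 : ℕ) : ℝ) = r - 1 := by rw [Nat.cast_sub hr]; simp
  rw [h3] at h1
  have h4 := hA0 (2 * r)
  have h5 := hAt r (by omega)
  have h6 : r * (M / n) = (1 + c) * t := by rw [hM]; field_simp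
  have h7 : r * (c * t / r) = c * t := by field_simp
  nlinarith

open Classical in
/-- The vectors of `A` negative on some ray of `τ`. -/
noncomputable def conf (z : ι → E6) (A : Finset ι) (τ : Fin 6 → Code ι) : Finset ι :=
  A.filter fun ρ => ∃ i, z ρ ⬝ᵥ vt z (τ i) < 0

variable {z : ι → E6}

lemma mem_conf {A : Finset ι} {τ : Fin 6 → Code ι} {ρ : ι} :
    ρ ∈ conf z A τ ↔ ρ ∈ A ∧ ∃ i, z ρ ⬝ᵥ vt z (τ i) < 0 := by simp [conf]

lemma conf_subset {A X : Finset ι} {τ : Fin 6 → Code ι} (h : ∀ i, IsVx z X (τ i)) :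
    conf z A τ ⊆ A \ X := by
  intro ρ hρ
  obtain ⟨h1, i, hi⟩ := mem_conf.1 hρ
  exact mem_sdiff.2 ⟨h1, fun hX => absurd ((h i).2 ρ hX) (not_le.2 hi)⟩

/-- The constant of the sampling lemma. -/
def Ks : ℕ := 93 * 2 ^ 36

set_option maxHeartbeats 1000000 in
lemma exists_good_sample [Fintype ι] (hz : GP z) {A B F : Finset ι} (hF : F.card = 6) (hFA : F ⊆ A)
    (hB : B.Nonempty) (hb : ∀ b ∈ B, Feas z A (z b) ∧ z b ≠ 0) {r : ℕ} (hr : 0 < r)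
    (hrA : 2 * r + 6 ≤ A.card) :
    ∃ X ⊆ A, F ⊆ X ∧ X.card ≤ 8 * r ∧ ∃ τ : ι → Fin 6 → Code ι,
      (∀ b ∈ B, Cell z F X b (τ b)) ∧
      ∑ σ ∈ Cells z F X B, (conf z A σ).card ≤ Ks * r * A.card ∧
      r * ∑ b ∈ B, (conf z A (τ b)).card ≤ Ks * B.card * A.card ∧
      ∑ C ∈ Vx z X, (conf z A fun _ => C).card ≤ Ks * r * A.card := by
  classical
  set N := A \ F with hN
  have hNc : N.card + 6 = A.card := by
    rw [hN, ← hF]; exact card_sdiff_add_card_eq_card hFA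
  have hXA : ∀ Y ⊆ N, F ∪ Y ⊆ A := fun Y hY => union_subset hFA (hY.trans sdiff_subset)
  have hXe : ∀ Z ⊆ N, ∀ y ∈ Z, (F ∪ Z).erase y = F ∪ Z.erase y := by
    intro Z hZ y hy
    rw [erase_union_distrib, erase_eq_of_notMem (mem_sdiff.1 (hZ hy)).2]
  have hsd : ∀ Y, A \ (F ∪ Y) ⊆ N \ Y := by
    intro Y a ha
    simp only [hN, mem_sdiff, mem_union, not_or] at ha ⊢
    exact ⟨⟨ha.1, ha.2.1⟩, ha.2.2⟩
  have I1 := sampleIneq_of_family (N := N) (fun Y => Vx z (F ∪ Y)) (fun C => C.set)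
    (fun C => conf z A fun _ => C) (c := 30) (fun C => by rw [C.1.2]; norm_num)
    (fun Y hY C hC => (conf_subset fun _ => mem_Vx.1 hC).trans (hsd Y))
    (fun Z hZ C hC y hy hyC => by
      rw [← hXe Z hZ y hy]; exact mem_Vx.2 ((mem_Vx.1 hC).erase hyC))
  have I2 := sampleIneq_of_family (N := N) (fun Y => Cells z F (F ∪ Y) B) cellSet
    (conf z A) (c := 30) card_cellSet
    (fun Y hY τ hτ => by
      obtain ⟨b, _, h⟩ := mem_Cells.1 hτ
      exact (conf_subset h.isVx).trans (hsd Y))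
    (fun Z hZ τ hτ y hy hyC => by
      obtain ⟨b, hb, h⟩ := mem_Cells.1 hτ
      rw [← hXe Z hZ y hy]; exact mem_Cells.2 ⟨b, hb, h.erase hyC⟩)
  have I3 := sampleIneq_of_family (N := N)
    (fun Y => (B ×ˢ (univ : Finset (Fin 6 → Code ι))).filter fun p => Cell z F (F ∪ Y) p.1 p.2)
    (fun p => cellSet p.2) (fun p => conf z A p.2) (c := 30) (fun p => card_cellSet p.2)
    (fun Y hY p hp => by
      exact (conf_subset (mem_filter.1 hp).2.isVx).trans (hsd Y))
    (fun Z hZ p hp y hy hyC => by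
      rw [mem_filter] at hp ⊢
      rw [← hXe Z hZ y hy]; exact ⟨hp.1, hp.2.erase hyC⟩)
  have hcell : ∀ Y ⊆ N, ∀ b ∈ B, ∃ τ, Cell z F (F ∪ Y) b τ := fun Y hY b hbB =>
    exists_cell hz hF subset_union_left (fun h hh => (hb b hbB).1 h (hXA Y hY hh)) (hb b hbB).2
  have hX6 : ∀ Y, 6 ≤ (F ∪ Y).card := fun Y => six_le hF subset_union_left
  have hpairs : ∀ Y ⊆ N, ∃ τ : ι → Fin 6 → Code ι, (∀ b ∈ B, Cell z F (F ∪ Y) b (τ b)) ∧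
      ((B ×ˢ (univ : Finset (Fin 6 → Code ι))).filter fun p => Cell z F (F ∪ Y) p.1 p.2) =
        B.image fun b => (b, τ b) := by
    intro Y hY
    have : Nonempty (Fin 6 → Code ι) := by
      obtain ⟨b, hbB⟩ := hB
      obtain ⟨τ, _⟩ := hcell Y hY b hbB
      exact ⟨τ⟩
    choose! τ hτ using hcell Y hY
    refine ⟨τ, hτ, ?_⟩
    ext ⟨b, σ⟩
    simp only [mem_filter, mem_product, mem_univ, and_true, mem_image, Prod.mk.injEq]
    constructor
    · rintro ⟨h1, h2⟩
      exact ⟨b, h1, rfl, (hτ b h1).unique hz (hX6 Y) h2⟩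
    · rintro ⟨b', h1, rfl, rfl⟩
      exact ⟨h1, hτ _ h1⟩
  have hinj : ∀ τ : ι → Fin 6 → Code ι, Function.Injective fun b => (b, τ b) :=
    fun τ a b h => (Prod.mk.inj h).1
  have hBc : (0 : ℝ) < B.card := by exact_mod_cast hB.card_pos
  have hr' : (0 : ℝ) < r := by exact_mod_cast hr
  set T : ℝ := 2 ^ 36 * (r : ℝ) ^ 2 with hT
  have hT0 : 0 < T := by positivity
  have hTi : 0 ≤ 1 / T := by positivity
  have hBi : 0 ≤ 1 / (B.card : ℝ) := by positivity
  have I := ((I1.smul (a := 1 / T) (by positivity)).add (I2.smul (a := 1 / T) (by positivity))).add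
    (I3.smul (a := 1 / (B.card : ℝ)) (by positivity))
  have hXc : ∀ Y, Y.card ≤ 2 * r → (F ∪ Y).card ≤ 8 * r := by
    intro Y hY
    have := card_union_le F Y
    omega
  obtain ⟨Y, hYN, hYc, hY⟩ := I.exists (t := 3) (by norm_num) hr (by omega)
    (fun Y _ => add_nonneg (add_nonneg (mul_nonneg hTi (Nat.cast_nonneg _))
      (mul_nonneg hTi (Nat.cast_nonneg _))) (mul_nonneg hBi (Nat.cast_nonneg _)))
    (fun Y _ => add_nonneg (add_nonneg (mul_nonneg hTi (Finset.sum_nonneg fun _ _ => Nat.cast_nonneg _))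
      (mul_nonneg hTi (Finset.sum_nonneg fun _ _ => Nat.cast_nonneg _)))
      (mul_nonneg hBi (Finset.sum_nonneg fun _ _ => Nat.cast_nonneg _))) (by
      intro Y hY hYc
      have hx := hXc Y hYc
      have b1 : ((Vx z (F ∪ Y)).card : ℝ) ≤ T := by
        have h1 := (card_Vx_le hz hF (X := F ∪ Y) subset_union_left).trans (Nat.pow_le_pow_left hx 2)
        calc ((Vx z (F ∪ Y)).card : ℝ) ≤ (((8 * r) ^ 2 : ℕ) : ℝ) := by exact_mod_cast h1
          _ ≤ T := by rw [hT]; push_cast; nlinarith [sq_nonneg (r : ℝ)]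
      have b2 : ((Cells z F (F ∪ Y) B).card : ℝ) ≤ T := by
        have h1 := (card_Cells_le (B := B) hz hF (X := F ∪ Y) subset_union_left).trans
          (Nat.mul_le_mul_left _ (Nat.pow_le_pow_left hx 2))
        calc ((Cells z F (F ∪ Y) B).card : ℝ) ≤ ((2 ^ 30 * (8 * r) ^ 2 : ℕ) : ℝ) := by exact_mod_cast h1
          _ = T := by rw [hT]; push_cast; ring
      have b3 : ((((B ×ˢ (univ : Finset (Fin 6 → Code ι))).filter
          fun p => Cell z F (F ∪ Y) p.1 p.2).card : ℕ) : ℝ) = B.card := by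
        obtain ⟨τ, _, e⟩ := hpairs Y hY
        rw [e, card_image_of_injective _ (hinj τ)]
      simp only [b3]
      have c1 : 1 / T * ((Vx z (F ∪ Y)).card : ℝ) ≤ 1 := by
        rw [one_div, inv_mul_le_iff₀ hT0]; linarith
      have c2 : 1 / T * ((Cells z F (F ∪ Y) B).card : ℝ) ≤ 1 := by
        rw [one_div, inv_mul_le_iff₀ hT0]; linarith
      have c3 : 1 / (B.card : ℝ) * B.card = 1 := by field_simp
      linarith)
  obtain ⟨τ, hτ, eτ⟩ := hpairs Y hYN
  simp only [eτ] at hY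
  rw [Finset.sum_image (fun a _ b _ h => hinj τ h)] at hY
  obtain ⟨S1, hS1⟩ : ∃ S, S = ∑ C ∈ Vx z (F ∪ Y), ((conf z A fun _ => C).card : ℝ) := ⟨_, rfl⟩
  rw [← hS1] at hY
  obtain ⟨S2, hS2⟩ : ∃ S, S = ∑ σ ∈ Cells z F (F ∪ Y) B, ((conf z A σ).card : ℝ) := ⟨_, rfl⟩
  rw [← hS2] at hY
  obtain ⟨S3, hS3⟩ : ∃ S, S = ∑ b ∈ B, ((conf z A (τ b)).card : ℝ) := ⟨_, rfl⟩
  rw [← hS3] at hY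
  have p1 : 0 ≤ S1 := hS1 ▸ Finset.sum_nonneg fun _ _ => Nat.cast_nonneg _
  have p2 : 0 ≤ S2 := hS2 ▸ Finset.sum_nonneg fun _ _ => Nat.cast_nonneg _
  have p3 : 0 ≤ S3 := hS3 ▸ Finset.sum_nonneg fun _ _ => Nat.cast_nonneg _
  have q1 : 0 ≤ r * (1 / T * S1) := by positivity
  have q2 : 0 ≤ r * (1 / T * S2) := by positivity
  have q3 : 0 ≤ r * (1 / (B.card : ℝ) * S3) := by positivity
  have hNA : (N.card : ℝ) ≤ A.card := by exact_mod_cast (by omega : N.card ≤ A.card)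
  have hRHS : (N.card : ℝ) * (1 + (30 : ℕ)) * 3 ≤ 93 * A.card := by push_cast; linarith
  have big : ∀ S : ℝ, r * (1 / T * S) ≤ 93 * A.card → S ≤ Ks * r * A.card := by
    intro S h
    have e : (r : ℝ) * (1 / T * S) = S / (2 ^ 36 * r) := by rw [hT]; field_simp
    rw [e, div_le_iff₀ (by positivity)] at h
    refine h.trans_eq ?_
    simp only [Ks]; push_cast; ring
  refine ⟨F ∪ Y, hXA Y hYN, subset_union_left, hXc Y hYc, τ, hτ, ?_, ?_, ?_⟩
  · have := big S2 (by linarith)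
    rw [hS2] at this
    exact_mod_cast this
  · have h : r * (1 / (B.card : ℝ) * S3) ≤ 93 * A.card := by linarith
    have e : r * (1 / (B.card : ℝ) * S3) = r * S3 / B.card := by field_simp
    rw [e, div_le_iff₀ hBc] at h
    have : (r : ℝ) * S3 ≤ Ks * B.card * A.card := by
      refine h.trans ?_
      simp only [Ks]; push_cast
      nlinarith [mul_nonneg hBc.le (Nat.cast_nonneg A.card : (0 : ℝ) ≤ A.card)]
    rw [hS3] at this
    exact_mod_cast this
  · have := big S1 (by linarith)
    rw [hS1] at this
    exact_mod_cast this

end LT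

namespace LT

open Matrix Finset Code

set_option linter.unusedSectionVars false
set_option linter.unusedVariables false
set_option linter.unusedSimpArgs false

variable {ι : Type*} [DecidableEq ι] {z : ι → E6}

/-! ### Certificates for the vertices of a cone -/

lemma IsVx.exists_nbrs (hz : Six z) {X : Finset ι} (hX : 6 ≤ X.card) {C : Code ι}
    (hC : IsVx z X C) : ∃ J : ι → Code ι, ∀ i ∈ C.set,
      IsVx z X (J i) ∧ C.set.erase i ⊆ (J i).set ∧ i ∉ (J i).set := by
  have hJ : ∀ i, ∃ J : Code ι, i ∈ C.set → IsVx z X J ∧ C.set.erase i ⊆ J.set ∧ i ∉ J.set := by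
    intro i
    by_cases hi : i ∈ C.set
    · obtain ⟨J, h⟩ := hC.edge hz hX hi
      exact ⟨J, fun _ => h⟩
    · exact ⟨C, fun h => absurd h hi⟩
  choose J hJ using hJ
  exact ⟨J, hJ⟩

/-- A linear form vanishing on a vertex and nonnegative on its neighbours is nonnegative on the
cone. -/
lemma IsVx.nonneg_of_nbrs (hz : Six z) {X : Finset ι} (hX : 6 ≤ X.card) {C : Code ι}
    (hC : IsVx z X C) {J : ι → Code ι}
    (hJ : ∀ i ∈ C.set, IsVx z X (J i) ∧ C.set.erase i ⊆ (J i).set ∧ i ∉ (J i).set)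
    (g : E6) (h0 : g ⬝ᵥ vt z C = 0) (hg : ∀ i ∈ C.set, 0 ≤ g ⬝ᵥ vt z (J i)) {q : E6}
    (hq : Feas z X q) : 0 ≤ g ⬝ᵥ q := by
  obtain ⟨α, e⟩ := hC.decomp hz hX (fun i hi => (hJ i hi).2) q
  rw [e, dotProduct_add, dotProduct_smul, h0, smul_zero, zero_add, dotProduct_sum]
  refine Finset.sum_nonneg fun i hi => ?_
  rw [dotProduct_smul]
  exact mul_nonneg (div_nonneg (hq i (hC.1 hi)) ((hJ i hi).1.2 i (hC.1 hi))) (hg i hi)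

open Tst in
/-- The vertices of the cone of `X` on the negative side of `h` can be certified by a number of
tests proportional to their number. -/
lemma kill_cert [Fintype ι] (hz : Six z) {X : Finset ι} (hX : 6 ≤ X.card) {h : ι} (hh : h ∉ X) :
    ∃ Φ : Finset (Tst ι), Φ ⊆ loc (insert h X) ∧
      Φ.card ≤ 6 * ((Vx z X).filter fun C => z h ⬝ᵥ vt z C < 0).card + 6 ∧
      ∀ z', Six z' → Agree Φ z z' → (∀ C ∈ Vx z X, IsVx z' X C) → ∀ C ∈ Vx z X,
        (0 ≤ z h ⬝ᵥ vt z C → 0 ≤ z' h ⬝ᵥ vt z' C) ∧ (z h ⬝ᵥ vt z C < 0 → z' h ⬝ᵥ vt z' C < 0) := by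
  classical
  set K := (Vx z X).filter fun C => z h ⬝ᵥ vt z C < 0 with hK
  have hnb : ∀ C, ∃ J : ι → Code ι, IsVx z X C → ∀ i ∈ C.set,
      IsVx z X (J i) ∧ C.set.erase i ⊆ (J i).set ∧ i ∉ (J i).set := by
    intro C
    by_cases hC : IsVx z X C
    · obtain ⟨J, hJ⟩ := hC.exists_nbrs hz hX
      exact ⟨J, fun _ => hJ⟩
    · exact ⟨fun _ => C, fun h => absurd h hC⟩
  choose J hJ using hnb
  have hL : X ⊆ insert h X := subset_insert _ _
  have hhL : h ∈ insert h X := mem_insert_self _ _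
  rcases K.eq_empty_or_nonempty with hKe | hKn
  · rcases (Vx z X).eq_empty_or_nonempty with hV | ⟨C1, hC1⟩
    · refine ⟨∅, by simp, by simp, fun z' _ _ _ C hC => ?_⟩
      rw [hV] at hC; simp at hC
    have hnn : ∀ C ∈ Vx z X, 0 ≤ z h ⬝ᵥ vt z C := by
      intro C hC
      by_contra hneg
      have : C ∈ K := by rw [hK, mem_filter]; exact ⟨hC, not_le.1 hneg⟩
      rw [hKe] at this; simp at this
    have hXn : X.Nonempty := card_pos.1 (by omega)
    obtain ⟨f, hf⟩ := hXn
    have hne : ((Vx z X).filter fun C => 0 < z f ⬝ᵥ vt z C).Nonempty := by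
      rw [mem_Vx] at hC1
      by_cases hfC : f ∈ C1.set
      · have := hJ C1 hC1 f hfC
        exact ⟨J C1 f, by rw [mem_filter, mem_Vx]; exact ⟨this.1, this.1.pos hz hf this.2.2⟩⟩
      · exact ⟨C1, by rw [mem_filter, mem_Vx]; exact ⟨hC1, hC1.pos hz hf hfC⟩⟩
    obtain ⟨v, hv, hmin⟩ := Finset.exists_min_image _
      (fun C => (z h ⬝ᵥ vt z C) / (z f ⬝ᵥ vt z C)) hne
    rw [mem_filter] at hv
    have hvV := mem_Vx.1 hv.1
    have hfv : f ∉ v.set := fun hm => hv.2.ne' (dot_vt_mem v hm)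
    refine ⟨insert (det h v) (v.set.image fun i => minf f h v (J v i)), ?_, ?_, ?_⟩
    · refine insert_subset (det_mem hhL (hvV.1.trans hL)) (image_subset_iff.2 fun i hi => ?_)
      exact minf_mem (hL hf) hhL (hvV.1.trans hL) ((hJ v hvV i hi).1.1.trans hL)
    · refine (card_insert_le _ _).trans ?_
      have := card_image_le (s := v.set) (f := fun i => minf f h v (J v i))
      rw [v.1.2] at this
      omega
    · intro z' hz' hag hV' C hC
      refine ⟨fun _ => ?_, fun hneg => absurd (hnn C hC) (not_le.2 hneg)⟩
      have hhv : 0 ≤ z' h ⬝ᵥ vt z' v := by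
        have := hag.nonneg (φ := det h v) (mem_insert_self _ _) (by rw [fval_det]; exact hnn v hv.1)
        rwa [fval_det] at this
      have hfv' : 0 < z' f ⬝ᵥ vt z' v := (hV' v hv.1).pos hz' hf hfv
      have key := (hV' v hv.1).nonneg_of_nbrs hz' hX (J := J v)
        (fun i hi => ⟨hV' _ (mem_Vx.2 (hJ v hvV i hi).1), (hJ v hvV i hi).2⟩)
        ((z' f ⬝ᵥ vt z' v) • z' h - (z' h ⬝ᵥ vt z' v) • z' f)
        (by simp only [sub_dotProduct, smul_dotProduct, smul_eq_mul]; ring) ?_ (hV' C hC).2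
      · simp only [sub_dotProduct, smul_dotProduct, smul_eq_mul] at key
        have h1 := mul_nonneg hhv ((hV' C hC).2 f hf)
        by_contra hneg
        push Not at hneg
        nlinarith
      · intro i hi
        have hJi := hJ v hvV i hi
        have := hag.nonneg (φ := minf f h v (J v i)) (mem_insert_of_mem (mem_image_of_mem _ hi)) (by
          rw [fval_minf]
          rcases (hJi.1.2 f hf).lt_or_eq with hp | hp
          · have := hmin (J v i) (by rw [mem_filter, mem_Vx]; exact ⟨hJi.1, hp⟩)
            rw [div_le_div_iff₀ hv.2 hp] at this
            linarith
          · rw [← hp, mul_zero, sub_zero]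
            exact mul_nonneg hv.2.le (hnn _ (mem_Vx.2 hJi.1)))
        rw [fval_minf] at this
        simpa only [sub_dotProduct, smul_dotProduct, smul_eq_mul] using this
  · have hKV : ∀ C ∈ K, IsVx z X C := fun C hC => mem_Vx.1 (mem_filter.1 hC).1
    refine ⟨(K.image fun C => det h C) ∪ K.biUnion fun C => C.set.image fun i => det h (J C i),
      ?_, ?_, ?_⟩
    · refine union_subset (image_subset_iff.2 fun C hC => det_mem hhL ((hKV C hC).1.trans hL))
        (biUnion_subset.2 fun C hC => image_subset_iff.2 fun i hi =>
          det_mem hhL ((hJ C (hKV C hC) i hi).1.1.trans hL))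
    · refine (card_union_le _ _).trans ?_
      have h1 := card_image_le (s := K) (f := fun C => det h C)
      have h2 : (K.biUnion fun C => C.set.image fun i => det h (J C i)).card ≤ K.card * 5 := by
        refine card_biUnion_le_card_mul _ _ _ fun C _ => card_image_le.trans ?_
        rw [C.1.2]
      omega
    · intro z' hz' hag hV'
      have hneg' : ∀ C ∈ K, z' h ⬝ᵥ vt z' C < 0 := fun C hC => by
        have := hag.neg (φ := det h C) (mem_union_left _ (mem_image_of_mem _ hC))
          (by rw [fval_det]; exact (mem_filter.1 hC).2)
        rwa [fval_det] at this
      intro v hv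
      refine ⟨fun hnn => ?_, fun hneg => hneg' v (mem_filter.2 ⟨hv, hneg⟩)⟩
      by_contra hcon
      push Not at hcon
      set e : E6 := ∑ i ∈ v.set, z' i with he
      have hedot : ∀ q, e ⬝ᵥ q = ∑ i ∈ v.set, z' i ⬝ᵥ q := fun q => by rw [he, sum_dotProduct]
      have hvX := (mem_Vx.1 hv).1
      have he0 : ∀ C ∈ Vx z X, 0 ≤ e ⬝ᵥ vt z' C := fun C hC => by
        rw [hedot]; exact Finset.sum_nonneg fun i hi => (hV' C hC).2 i (hvX hi)
      have hev : e ⬝ᵥ vt z' v = 0 := by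
        rw [hedot]; exact Finset.sum_eq_zero fun i hi => dot_vt_mem v hi
      obtain ⟨t, ht, hmin⟩ := Finset.exists_min_image K
        (fun C => (e ⬝ᵥ vt z' C) / (- (z' h ⬝ᵥ vt z' C))) hKn
      have htV := (mem_filter.1 ht).1
      have htX := mem_Vx.1 htV
      have hht := hneg' t ht
      have het : 0 < e ⬝ᵥ vt z' t := by
        have hset : ¬ v.set ⊆ t.set := by
          intro hs
          have hs' : v.set = t.set := eq_of_subset_of_card_le hs (by rw [t.1.2, v.1.2])
          have := (mem_Vx.1 hv).ext hz hX htX hs'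
          rw [this] at hnn
          exact absurd hnn (not_le.2 (mem_filter.1 ht).2)
        obtain ⟨i, hi, hit⟩ := Finset.not_subset.1 hset
        rw [hedot]
        exact Finset.sum_pos' (fun i hi => (hV' t htV).2 i (hvX hi))
          ⟨i, hi, (hV' t htV).pos hz' (hvX hi) hit⟩
      have key := (hV' t htV).nonneg_of_nbrs hz' hX (J := J t)
        (fun i hi => ⟨hV' _ (mem_Vx.2 (hJ t htX i hi).1), (hJ t htX i hi).2⟩)
        ((- (z' h ⬝ᵥ vt z' t)) • e + (e ⬝ᵥ vt z' t) • z' h)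
        (by simp only [add_dotProduct, smul_dotProduct, smul_eq_mul]; ring) ?_ (hV' v hv).2
      · simp only [add_dotProduct, smul_dotProduct, smul_eq_mul, hev, mul_zero, zero_add] at key
        nlinarith
      · intro i hi
        have hJi := hJ t htX i hi
        simp only [add_dotProduct, smul_dotProduct, smul_eq_mul]
        have hJV := mem_Vx.2 hJi.1
        by_cases hu : z h ⬝ᵥ vt z (J t i) < 0
        · have hu' : J t i ∈ K := mem_filter.2 ⟨hJV, hu⟩
          have h1 := hmin _ hu'
          rw [div_le_div_iff₀ (by linarith) (by linarith [hneg' _ hu'])] at h1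
          linarith
        · have := hag.nonneg (φ := det h (J t i)) (mem_union_right _ (mem_biUnion.2
            ⟨t, ht, mem_image_of_mem _ hi⟩)) (by rw [fval_det]; exact not_lt.1 hu)
          rw [fval_det] at this
          have h1 := mul_nonneg (by linarith : 0 ≤ - (z' h ⬝ᵥ vt z' t)) (he0 _ hJV)
          have h2 := mul_nonneg het.le this
          linarith

open Tst in
/-- One step of the incremental certificate: adding a constraint `h` to `X`. -/
lemma learn_step [Fintype ι] (hz : Six z) {X : Finset ι} (hX : 6 ≤ X.card) {h : ι} (hh : h ∉ X)
    {Ψ : Finset (Tst ι)} (hΨ : Ψ ⊆ loc X)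
    (hΨ' : ∀ z', Six z' → Agree Ψ z z' → ∀ C ∈ Vx z X, IsVx z' X C) :
    ∃ Φ : Finset (Tst ι), Φ ⊆ loc (insert h X) ∧
      Φ.card + 6 * (Vx z (insert h X)).card ≤ Ψ.card + 6 * (Vx z X).card +
        7 * ((Vx z (insert h X)).filter fun C => h ∈ C.set).card + 6 ∧
      ∀ z', Six z' → Agree Φ z z' → ∀ C ∈ Vx z (insert h X), IsVx z' (insert h X) C := by
  classical
  obtain ⟨Θ, hΘ, hΘc, hΘ'⟩ := kill_cert hz hX hh
  set X' := insert h X with hX'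
  have hX'6 : 6 ≤ X'.card := hX.trans (card_le_card (subset_insert _ _))
  set K := (Vx z X).filter fun C => z h ⬝ᵥ vt z C < 0 with hK
  set N := (Vx z X').filter fun C => h ∈ C.set with hN
  have hL : X ⊆ X' := subset_insert _ _
  have hhL : h ∈ X' := mem_insert_self _ _
  have surv : ∀ C, h ∉ C.set → (IsVx z X' C ↔ IsVx z X C ∧ 0 ≤ z h ⬝ᵥ vt z C) := by
    intro C hC
    constructor
    · rintro ⟨h1, h2⟩
      refine ⟨⟨fun i hi => ?_, fun i hi => h2 i (hL hi)⟩, h2 h hhL⟩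
      exact (mem_insert.1 (h1 hi)).resolve_left fun e => hC (e ▸ hi)
    · rintro ⟨⟨h1, h2⟩, h3⟩
      refine ⟨h1.trans hL, fun i hi => ?_⟩
      rcases mem_insert.1 hi with rfl | hi
      · exact h3
      · exact h2 i hi
  have hcount : (Vx z X').card + K.card = (Vx z X).card + N.card := by
    have e1 : N.card + ((Vx z X').filter fun C => h ∉ C.set).card = (Vx z X').card := by
      convert Finset.card_filter_add_card_filter_not (s := Vx z X') (fun C => h ∈ C.set)
    have e2 : K.card + ((Vx z X).filter fun C => ¬ z h ⬝ᵥ vt z C < 0).card = (Vx z X).card := by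
      convert Finset.card_filter_add_card_filter_not (s := Vx z X) (fun C => z h ⬝ᵥ vt z C < 0)
    have e3 : ((Vx z X').filter fun C => h ∉ C.set) =
        (Vx z X).filter fun C => ¬ z h ⬝ᵥ vt z C < 0 := by
      ext C
      simp only [mem_filter, mem_Vx, not_lt]
      constructor
      · rintro ⟨h1, h2⟩; exact (surv C h2).1 h1
      · rintro ⟨h1, h2⟩
        have : h ∉ C.set := fun hm => hh (h1.1 hm)
        exact ⟨(surv C this).2 ⟨h1, h2⟩, this⟩
    rw [e3] at e1
    omega
  -- the geometry of a new vertex: it lies on an edge from a surviving vertex to a killed one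
  have geo : ∀ C ∈ N, ∃ w u : Code ι, ∃ j, IsVx z X w ∧ IsVx z X u ∧ 0 < z h ⬝ᵥ vt z w ∧
      z h ⬝ᵥ vt z u < 0 ∧ j ∈ X ∧ j ∉ C.set ∧ j ∈ w.set ∧ j ∉ u.set ∧
      C.set.erase h ⊆ w.set ∧ C.set.erase h ⊆ u.set := by
    intro C hC
    obtain ⟨hCV, hhC⟩ := mem_filter.1 hC
    rw [mem_Vx] at hCV
    obtain ⟨w, hw, hwC, hhw⟩ := hCV.edge hz hX'6 hhC
    have hwX := ((surv w hhw).1 hw).1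
    have hwpos : 0 < z h ⬝ᵥ vt z w := hw.pos hz hhL hhw
    have hns : ¬ w.set ⊆ C.set := by
      intro hs
      have : w.set = C.set := eq_of_subset_of_card_le hs (by rw [w.1.2, C.1.2])
      exact hhw (this ▸ hhC)
    obtain ⟨j, hjw, hjC⟩ := Finset.not_subset.1 hns
    have hjX := hwX.1 hjw
    obtain ⟨J, hJ⟩ := hwX.exists_nbrs hz hX
    obtain ⟨huX, hwu, hju⟩ := hJ j hjw
    have hSu : C.set.erase h ⊆ (J j).set := fun i hi => hwu (mem_erase.2
      ⟨fun e => hjC (e ▸ mem_of_mem_erase hi), hwC hi⟩)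
    -- the five elements of `w` are `j` and those of `C` other than `h`
    have hwset : w.set = insert j (C.set.erase h) := by
      symm
      refine eq_of_subset_of_card_le (insert_subset hjw hwC) ?_
      rw [card_insert_of_notMem fun hm => hjC (mem_of_mem_erase hm), card_erase_of_mem hhC, C.1.2,
        w.1.2]
    refine ⟨w, J j, j, hwX, huX, hwpos, ?_, hjX, hjC, hjw, hju, hwC, hSu⟩
    by_contra hcon
    have hhu : h ∉ (J j).set := fun hm => hh (huX.1 hm)
    have hupos : 0 < z h ⬝ᵥ vt z (J j) := lt_of_le_of_ne (not_lt.1 hcon) (dot_vt_ne hz _ hhu).symm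
    obtain ⟨α, e⟩ := hwX.decomp hz hX (fun i hi => (hJ i hi).2) (vt z C)
    rw [hwset, sum_insert fun hm => hjC (mem_of_mem_erase hm), Finset.sum_eq_zero, add_zero] at e
    swap
    · intro i hi
      rw [dot_vt_mem C (mem_of_mem_erase hi), zero_div, zero_smul]
    have hβ : 0 < (z j ⬝ᵥ vt z C) / (z j ⬝ᵥ vt z (J j)) :=
      div_pos (hCV.pos hz (hL hjX) hjC) (huX.pos hz hjX hju)
    set β := (z j ⬝ᵥ vt z C) / (z j ⬝ᵥ vt z (J j))
    have e1 : 0 = α * z h ⬝ᵥ vt z w + β * z h ⬝ᵥ vt z (J j) := by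
      have := congrArg (fun p => z h ⬝ᵥ p) e
      simpa only [dot_vt_mem C hhC, dotProduct_add, dotProduct_smul, smul_eq_mul] using this
    have hα : α < 0 := by
      by_contra hα
      have := mul_nonneg (not_lt.1 hα) hwpos.le
      have := mul_pos hβ hupos
      linarith
    have hns2 : ¬ (J j).set ⊆ w.set := by
      intro hs
      have : (J j).set = w.set := eq_of_subset_of_card_le hs (by rw [w.1.2, (J j).1.2])
      exact hju (this ▸ hjw)
    obtain ⟨m, hmu, hmw⟩ := Finset.not_subset.1 hns2
    have e2 := congrArg (fun p => z m ⬝ᵥ p) e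
    simp only [dotProduct_add, dotProduct_smul, smul_eq_mul, dot_vt_mem (J j) hmu, mul_zero,
      add_zero] at e2
    have h1 := hCV.2 m (hL (huX.1 hmu))
    have h2 := hwX.pos hz (huX.1 hmu) hmw
    nlinarith
  have geo' : ∀ C, ∃ w u : Code ι, ∃ j, C ∈ N → IsVx z X w ∧ IsVx z X u ∧ 0 < z h ⬝ᵥ vt z w ∧
      z h ⬝ᵥ vt z u < 0 ∧ j ∈ X ∧ j ∉ C.set ∧ j ∈ w.set ∧ j ∉ u.set ∧
      C.set.erase h ⊆ w.set ∧ C.set.erase h ⊆ u.set := by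
    intro C
    by_cases hC : C ∈ N
    · obtain ⟨w, u, j, g⟩ := geo C hC
      exact ⟨w, u, j, fun _ => g⟩
    · exact ⟨C, C, h, fun hC' => absurd hC' hC⟩
  choose w u j g using geo'
  refine ⟨Ψ ∪ Θ ∪ N.image fun C => det (j C) C, ?_, ?_, ?_⟩
  · refine union_subset (union_subset (hΨ.trans (loc_mono hL)) hΘ) (image_subset_iff.2 fun C hC => ?_)
    obtain ⟨-, -, -, -, hjX, -⟩ := g C hC
    exact det_mem (hL hjX) (mem_Vx.1 (mem_filter.1 hC).1).1
  · have c1 := card_union_le (Ψ ∪ Θ) (N.image fun C => det (j C) C)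
    have c2 := card_union_le Ψ Θ
    have c3 := card_image_le (s := N) (f := fun C => det (j C) C)
    omega
  · intro z' hz' hag C hC
    have hV' := hΨ' z' hz' (hag.mono (subset_union_left.trans subset_union_left))
    have hk := hΘ' z' hz' (hag.mono (subset_union_right.trans subset_union_left)) hV'
    by_cases hhC : h ∈ C.set
    · have hCN : C ∈ N := mem_filter.2 ⟨hC, hhC⟩
      obtain ⟨hw, hu, hwp, hun, hjX, hjC, hjw, hju, hCw, hCu⟩ := g C hCN
      have hjpos : 0 < z' (j C) ⬝ᵥ vt z' C := by
        have := hag.pos (φ := det (j C) C) (mem_union_right _ (mem_image_of_mem _ hCN))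
          (by rw [fval_det]; exact (mem_Vx.1 hC).pos hz (hL hjX) hjC)
        rwa [fval_det] at this
      have hw' : 0 ≤ z' h ⬝ᵥ vt z' (w C) := (hk _ (mem_Vx.2 hw)).1 hwp.le
      have hu' : z' h ⬝ᵥ vt z' (u C) < 0 := (hk _ (mem_Vx.2 hu)).2 hun
      have hw'' : 0 < z' h ⬝ᵥ vt z' (w C) :=
        lt_of_le_of_ne hw' (dot_vt_ne hz' _ fun hm => hh (hw.1 hm)).symm
      set q := (z' h ⬝ᵥ vt z' (w C)) • vt z' (u C) + (- (z' h ⬝ᵥ vt z' (u C))) • vt z' (w C) with hq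
      have hqd : ∀ p : E6, p ⬝ᵥ q = (z' h ⬝ᵥ vt z' (w C)) * p ⬝ᵥ vt z' (u C) +
          (- (z' h ⬝ᵥ vt z' (u C))) * p ⬝ᵥ vt z' (w C) := fun p => by
        rw [hq, dotProduct_add, dotProduct_smul, dotProduct_smul, smul_eq_mul, smul_eq_mul]
      have hq0 : ∀ i ∈ C.set, z' i ⬝ᵥ q = 0 := by
        intro i hi
        rw [hqd]
        by_cases hih : i = h
        · rw [hih]; ring
        · have := mem_erase.2 ⟨hih, hi⟩
          rw [dot_vt_mem _ (hCw this), dot_vt_mem _ (hCu this)]; ring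
      have hqj : 0 < z' (j C) ⬝ᵥ q := by
        rw [hqd, dot_vt_mem _ hjw, mul_zero, add_zero]
        exact mul_pos hw'' ((hV' _ (mem_Vx.2 hu)).pos hz' hjX hju)
      have e := eq_smul_vt hz' C hjC hq0
      set c := z' (j C) ⬝ᵥ q / z' (j C) ⬝ᵥ vt z' C
      have hc : 0 < c := div_pos hqj hjpos
      refine ⟨(mem_Vx.1 hC).1, fun i hi => ?_⟩
      rcases mem_insert.1 hi with rfl | hi
      · rw [dot_vt_mem C hhC]
      · have h1 : 0 ≤ z' i ⬝ᵥ q := by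
          rw [hqd]
          exact add_nonneg (mul_nonneg hw' ((hV' _ (mem_Vx.2 hu)).2 i hi))
            (mul_nonneg (by linarith) ((hV' _ (mem_Vx.2 hw)).2 i hi))
        rw [e, dotProduct_smul, smul_eq_mul] at h1
        exact nonneg_of_mul_nonneg_right h1 hc
    · obtain ⟨h1, h2⟩ := (surv C hhC).1 (mem_Vx.1 hC)
      have h3 := hV' C (mem_Vx.2 h1)
      refine ⟨h3.1.trans hL, fun i hi => ?_⟩
      rcases mem_insert.1 hi with rfl | hi
      · exact (hk C (mem_Vx.2 h1)).1 h2
      · exact h3.2 i hi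

lemma sum_card_vertex [Fintype ι] (X : Finset ι) :
    ∑ h ∈ X, ((Vx z X).filter fun C => h ∈ C.set).card = 5 * (Vx z X).card := by
  have := Finset.sum_card_bipartiteAbove_eq_sum_card_bipartiteBelow (s := Vx z X) (t := X)
      (fun C h => h ∈ C.set)
  simp only [Finset.bipartiteAbove, Finset.bipartiteBelow] at this
  rw [← this, mul_comm, ← smul_eq_mul, ← Finset.sum_const]
  refine Finset.sum_congr rfl fun C hC => ?_
  rw [← C.1.2]
  congr 1
  ext i
  simp only [mem_filter]
  exact ⟨fun h => h.2, fun h => ⟨(mem_Vx.1 hC).1 h, h⟩⟩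

open Tst in
/-- The vertices of the cone of `X` are certified by quadratically many tests: the constraint whose
removal destroys the fewest vertices is treated last. -/
lemma learn_cert [Fintype ι] (hz : GP z) : ∀ (n : ℕ) (X : Finset ι), X.card = n + 6 →
    ∃ Φ : Finset (Tst ι), Φ ⊆ loc X ∧ Φ.card + 6 * (Vx z X).card ≤ 100 * (n + 6) ^ 2 ∧
      ∀ z', Six z' → Agree Φ z z' → ∀ C ∈ Vx z X, IsVx z' X C := by
  classical
  intro n
  induction n with
  | zero =>
    intro X hX
    refine ⟨(Vx z X ×ˢ X).image fun p => det p.2 p.1, ?_, ?_, ?_⟩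
    · refine image_subset_iff.2 fun p hp => ?_
      rw [mem_product, mem_Vx] at hp
      exact det_mem hp.2 hp.1.1
    · have h1 := card_image_le (s := Vx z X ×ˢ X) (f := fun p => det p.2 p.1)
      have h2 := card_Vx_le hz (F := X) (X := X) (by omega) subset_rfl
      rw [hX] at h2
      rw [card_product, hX] at h1
      omega
    · intro z' hz' hag C hC
      refine ⟨(mem_Vx.1 hC).1, fun i hi => ?_⟩
      have := hag.nonneg (φ := det i C) (mem_image.2 ⟨(C, i), mem_product.2 ⟨hC, hi⟩, rfl⟩)
        (by rw [fval_det]; exact (mem_Vx.1 hC).2 i hi)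
      rwa [fval_det] at this
  | succ n ih =>
    intro X hX
    obtain ⟨F, hFX, hF⟩ := Finset.exists_subset_card_eq (s := X) (n := 6) (by omega)
    have hV := card_Vx_le hz hF hFX
    obtain ⟨h, hh, hle⟩ : ∃ h ∈ X, ((Vx z X).filter fun C => h ∈ C.set).card ≤ 5 * X.card := by
      by_contra hcon
      push Not at hcon
      have := Finset.sum_lt_sum_of_nonempty (card_pos.1 (by omega)) hcon
      rw [sum_card_vertex, Finset.sum_const, smul_eq_mul] at this
      nlinarith
    have hXe : insert h (X.erase h) = X := insert_erase hh
    have hce : (X.erase h).card = n + 6 := by rw [card_erase_of_mem hh, hX]; omega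
    obtain ⟨Ψ, h1, h2, h3⟩ := ih _ hce
    obtain ⟨Φ, g1, g2, g3⟩ := learn_step hz.six (by omega) (notMem_erase h X) h1 h3
    rw [hXe] at g1 g2 g3
    refine ⟨Φ, g1, ?_, g3⟩
    rw [hX] at hle
    nlinarith

end LT

namespace LT

open Matrix Finset Code

set_option linter.unusedSectionVars false
set_option linter.unusedVariables false
set_option linter.unusedSimpArgs false

variable {ι : Type*} [DecidableEq ι] {z : ι → E6}

/-! ### Certifying that all red-blue pairs are good -/

/-- Covering a subset of `B` by subsets of `B` of size exactly `t`. -/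
lemma exists_cover {B : Finset ι} {t : ℕ} (ht : 0 < t) (htB : t ≤ B.card) :
    ∀ (n : ℕ) (S : Finset ι), S ⊆ B → S.card = n → ∃ T : Finset (Finset ι),
      (∀ c ∈ T, c ⊆ B ∧ c.card = t) ∧ (∀ b ∈ S, ∃ c ∈ T, b ∈ c) ∧ T.card * t ≤ S.card + t := by
  intro n
  induction n using Nat.strong_induction_on with
  | _ n ih =>
    intro S hS hn
    rcases le_or_gt S.card t with h | h
    · obtain ⟨c, h1, h2, h3⟩ := Finset.exists_subsuperset_card_eq hS h htB
      exact ⟨{c}, by simp [h2, h3], fun b hb => ⟨c, by simp, h1 hb⟩, by simp⟩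
    · obtain ⟨c, hc, hcc⟩ := Finset.exists_subset_card_eq h.le
      have hcard : (S \ c).card = S.card - t := by rw [card_sdiff_of_subset hc, hcc]
      obtain ⟨T, h1, h2, h3⟩ := ih (S.card - t) (by omega) (S \ c) (sdiff_subset.trans hS) hcard
      refine ⟨insert c T, ?_, ?_, ?_⟩
      · intro d hd
        rcases mem_insert.1 hd with rfl | hd
        · exact ⟨hc.trans hS, hcc⟩
        · exact h1 d hd
      · intro b hb
        by_cases hbc : b ∈ c
        · exact ⟨c, mem_insert_self _ _, hbc⟩
        · obtain ⟨d, hd, hbd⟩ := h2 b (mem_sdiff.2 ⟨hb, hbc⟩)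
          exact ⟨d, mem_insert_of_mem hd, hbd⟩
      · have := Nat.mul_le_mul_right t (card_insert_le c T)
        rw [hcard] at h3
        rw [add_mul, one_mul] at this
        omega

lemma Six.ne_zero (hz : Six z) {X : Finset ι} (hX : 6 ≤ X.card) (i : ι) : z i ≠ 0 := by
  have : 5 ≤ (X.erase i).card := by
    have := pred_card_le_card_erase (s := X) (a := i); omega
  obtain ⟨s, hs, hsc⟩ := Finset.exists_subset_card_eq this
  intro h0
  have hi : i ∉ Code.set (ι := ι) ⟨⟨s, hsc⟩, true⟩ := fun hm => by
    have := hs hm; simp at this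
  exact dot_vt_ne hz ⟨⟨s, hsc⟩, true⟩ hi (by rw [h0, zero_dotProduct])

/-- The constant of the pair certificate. -/
def Kc : ℕ := 10000 + 50 * Ks + 6400 * 2 ^ 30

open Tst in
/-- If all pairs in `R × B` are good, then `O(t ^ 4)` tests certify it, where `t ^ 3` is the number
of vectors of either colour. -/
lemma pair_cert [Fintype ι] (hz : GP z) {t : ℕ} (ht : 6 ≤ t) {R B : Finset ι} (hR : R.card = t ^ 3)
    (hB : B.card = t ^ 3) (hg : ∀ ρ ∈ R, ∀ b ∈ B, 0 ≤ z ρ ⬝ᵥ z b) :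
    ∃ Φ : Finset (Tst ι), Φ ⊆ loc (R ∪ B) ∧ Φ.card ≤ Kc * t ^ 4 ∧
      ∀ z', Six z' → Agree Φ z z' → ∀ ρ ∈ R, ∀ b ∈ B, 0 ≤ z' ρ ⬝ᵥ z' b := by
  classical
  have ht3 : 36 * t ≤ t ^ 3 := by
    have : 6 * 6 ≤ t * t := Nat.mul_le_mul ht ht
    calc 36 * t ≤ (t * t) * t := Nat.mul_le_mul_right _ this
      _ = t ^ 3 := by ring
  obtain ⟨F, hFR, hF⟩ := Finset.exists_subset_card_eq (s := R) (n := 6) (by omega)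
  have hR6 : 6 ≤ R.card := by omega
  have hBn : B.Nonempty := card_pos.1 (by omega)
  obtain ⟨X, hXR, hFX, hXc, τ, hτ, s1, s2, s3⟩ := exists_good_sample hz hF hFR hBn
    (fun b hb => ⟨fun ρ hρ => hg ρ hρ b hb, hz.six.ne_zero hR6 b⟩) (r := t) (by omega) (by omega)
  have hX6 := six_le hF hFX
  obtain ⟨Φ1, hΦ1, c1, L1⟩ := learn_cert hz (X.card - 6) X (by omega)
  -- blue cells
  have e2 : ∀ b, ∃ Φ : Finset (Tst ι), b ∈ B → Φ ⊆ loc (insert b X) ∧ Φ.card ≤ 18 ∧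
      ∀ z', Six z' → Agree Φ z z' → ∀ p : E6, (∀ i, 0 ≤ p ⬝ᵥ vt z' (τ b i)) → 0 ≤ p ⬝ᵥ z' b := by
    intro b
    by_cases hb : b ∈ B
    · obtain ⟨Φ, h⟩ := cell_cert hz.six hF hFX (hτ b hb)
      exact ⟨Φ, fun _ => h⟩
    · exact ⟨∅, fun h => absurd h hb⟩
  choose Φ2 hΦ2 using e2
  have e3 : ∀ h, ∃ Φ : Finset (Tst ι), h ∉ X → Φ ⊆ loc (insert h X) ∧
      Φ.card ≤ 6 * ((Vx z X).filter fun C => z h ⬝ᵥ vt z C < 0).card + 6 ∧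
      ∀ z', Six z' → Agree Φ z z' → (∀ C ∈ Vx z X, IsVx z' X C) → ∀ C ∈ Vx z X,
        (0 ≤ z h ⬝ᵥ vt z C → 0 ≤ z' h ⬝ᵥ vt z' C) ∧
          (z h ⬝ᵥ vt z C < 0 → z' h ⬝ᵥ vt z' C < 0) := by
    intro h
    by_cases hh : h ∈ X
    · exact ⟨∅, fun h' => absurd hh h'⟩
    · obtain ⟨Φ, h⟩ := kill_cert hz.six hX6 hh
      exact ⟨Φ, fun _ => h⟩
  choose Φ3 hΦ3 using e3
  -- chunks of the blue vectors in a common cell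
  choose T hT1 hT2 hT3 using fun σ : Fin 6 → Code ι =>
    exists_cover (B := B) (t := t) (by omega) (by omega) _ (B.filter fun b => τ b = σ)
      (filter_subset _ _) rfl
  have e4 : ∀ c : Finset ι, ∃ Φ : Finset (Tst ι), c.card = t → Φ ⊆ loc c ∧ Φ.card ≤ 100 * t ^ 2 ∧
      ∀ z', Six z' → Agree Φ z z' → ∀ C ∈ Vx z c, IsVx z' c C := by
    intro c
    by_cases hc : c.card = t
    · obtain ⟨Φ, h1, h2, h3⟩ := learn_cert hz (c.card - 6) c (by omega)
      rw [show c.card - 6 + 6 = t by omega] at h2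
      exact ⟨Φ, fun _ => ⟨h1, by omega, h3⟩⟩
    · exact ⟨∅, fun h => absurd h hc⟩
  choose Φ4 hΦ4 using e4
  have e5 : ∀ (c : Finset ι) (ρ : ι), ∃ Φ : Finset (Tst ι), c ⊆ B ∧ c.card = t → ρ ∈ R →
      Φ ⊆ loc (insert ρ c) ∧ Φ.card ≤ 18 ∧
      ∀ z', Six z' → Agree Φ z z' → (∀ C ∈ Vx z c, IsVx z' c C) → ∀ b ∈ c, 0 ≤ z' b ⬝ᵥ z' ρ := by
    intro c ρ
    by_cases h : (c ⊆ B ∧ c.card = t) ∧ ρ ∈ R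
    · obtain ⟨⟨hcB, hct⟩, hρ⟩ := h
      obtain ⟨F', hF'c, hF'⟩ := Finset.exists_subset_card_eq (s := c) (n := 6) (by omega)
      obtain ⟨κ, hκ⟩ := exists_cell hz hF' hF'c (b := ρ)
        (fun b hb => by rw [dotProduct_comm]; exact hg ρ hρ b (hcB hb)) (hz.six.ne_zero hR6 ρ)
      obtain ⟨Φ, h1, h2, h3⟩ := cell_cert hz.six hF' hF'c hκ
      exact ⟨Φ, fun _ _ => ⟨h1, h2, fun z' hz' hag hV b hb => h3 z' hz' hag _ fun i =>
        (hV _ (mem_Vx.2 (hκ.isVx i))).2 b hb⟩⟩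
    · exact ⟨∅, fun h1 h2 => absurd ⟨h1, h2⟩ h⟩
  choose Φ5 hΦ5 using e5
  set CS := Cells z F X B with hCS
  have hτCS : ∀ b ∈ B, τ b ∈ CS := fun b hb => mem_Cells.2 ⟨b, hb, hτ b hb⟩
  have hconfR : ∀ σ, conf z R σ ⊆ R := fun σ ρ hρ => (mem_conf.1 hρ).1
  refine ⟨Φ1 ∪ B.biUnion Φ2 ∪ (R \ X).biUnion Φ3 ∪ CS.biUnion fun σ => (T σ).biUnion fun c =>
    Φ4 c ∪ (conf z R σ).biUnion (Φ5 c), ?_, ?_, ?_⟩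
  · refine union_subset (union_subset (union_subset ?_ ?_) ?_) ?_
    · exact hΦ1.trans (loc_mono (hXR.trans subset_union_left))
    · refine biUnion_subset.2 fun b hb => (hΦ2 b hb).1.trans (loc_mono ?_)
      exact insert_subset (mem_union_right _ hb) (hXR.trans subset_union_left)
    · refine biUnion_subset.2 fun ρ hρ => (hΦ3 ρ (mem_sdiff.1 hρ).2).1.trans (loc_mono ?_)
      exact insert_subset (mem_union_left _ (mem_sdiff.1 hρ).1) (hXR.trans subset_union_left)
    · refine biUnion_subset.2 fun σ hσ => biUnion_subset.2 fun c hc => union_subset ?_ ?_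
      · exact (hΦ4 c (hT1 σ c hc).2).1.trans (loc_mono ((hT1 σ c hc).1.trans subset_union_right))
      · refine biUnion_subset.2 fun ρ hρ =>
          (hΦ5 c ρ (hT1 σ c hc) (hconfR σ hρ)).1.trans (loc_mono ?_)
        exact insert_subset (mem_union_left _ (hconfR σ hρ)) ((hT1 σ c hc).1.trans subset_union_right)
  · have d1 : Φ1.card ≤ 6400 * t ^ 2 := by
      rw [show X.card - 6 + 6 = X.card by omega] at c1
      have : X.card ^ 2 ≤ (8 * t) ^ 2 := Nat.pow_le_pow_left hXc 2
      nlinarith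
    have d2 : (B.biUnion Φ2).card ≤ t ^ 3 * 18 := by
      rw [← hB]; exact card_biUnion_le_card_mul _ _ _ fun b hb => (hΦ2 b hb).2.1
    have d3 : ((R \ X).biUnion Φ3).card ≤ 6 * (Ks * t * t ^ 3) + 6 * t ^ 3 := by
      refine card_biUnion_le.trans ((Finset.sum_le_sum fun ρ hρ =>
        (hΦ3 ρ (mem_sdiff.1 hρ).2).2.1).trans ?_)
      rw [sum_add_distrib, ← mul_sum, sum_const, smul_eq_mul]
      have h1 : ∑ ρ ∈ R \ X, ((Vx z X).filter fun C => z ρ ⬝ᵥ vt z C < 0).card ≤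
          ∑ C ∈ Vx z X, (conf z R fun _ => C).card := by
        have := Finset.sum_card_bipartiteAbove_eq_sum_card_bipartiteBelow (s := R \ X) (t := Vx z X)
          (fun ρ C => z ρ ⬝ᵥ vt z C < 0)
        refine this.le.trans (Finset.sum_le_sum fun C _ => card_le_card fun ρ hρ => ?_)
        obtain ⟨h1, h2⟩ := mem_filter.1 hρ
        exact mem_conf.2 ⟨(mem_sdiff.1 h1).1, 0, h2⟩
      have h2 : (R \ X).card ≤ t ^ 3 := hR ▸ card_le_card sdiff_subset
      rw [hR] at s3
      have := h1.trans s3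
      omega
    have d4 : t * (CS.biUnion fun σ => (T σ).biUnion fun c =>
        Φ4 c ∪ (conf z R σ).biUnion (Φ5 c)).card ≤
        t * ((100 + 6400 * 2 ^ 30 + 36 * Ks) * t ^ 4) := by
      have f1 : ∀ σ ∈ CS, t * ((T σ).biUnion fun c => Φ4 c ∪ (conf z R σ).biUnion (Φ5 c)).card ≤
          ((B.filter fun b => τ b = σ).card + t) * (100 * t ^ 2 + 18 * (conf z R σ).card) := by
        intro σ hσ
        have : ((T σ).biUnion fun c => Φ4 c ∪ (conf z R σ).biUnion (Φ5 c)).card ≤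
            (T σ).card * (100 * t ^ 2 + 18 * (conf z R σ).card) := by
          refine card_biUnion_le_card_mul _ _ _ fun c hc => (card_union_le _ _).trans ?_
          refine add_le_add (hΦ4 c (hT1 σ c hc).2).2.1 ?_
          rw [mul_comm]
          exact card_biUnion_le_card_mul _ _ _ fun ρ hρ =>
            (hΦ5 c ρ (hT1 σ c hc) (hconfR σ hρ)).2.1
        calc _ ≤ t * ((T σ).card * (100 * t ^ 2 + 18 * (conf z R σ).card)) :=
              Nat.mul_le_mul_left _ this
          _ = ((T σ).card * t) * (100 * t ^ 2 + 18 * (conf z R σ).card) := by ring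
          _ ≤ _ := Nat.mul_le_mul_right _ (hT3 σ)
      have f2 : ∑ σ ∈ CS, (B.filter fun b => τ b = σ).card = t ^ 3 := by
        rw [← hB, Finset.card_eq_sum_card_fiberwise (f := τ) (t := CS) fun b hb => hτCS b hb]
      have f3 : ∑ σ ∈ CS, (B.filter fun b => τ b = σ).card * (conf z R σ).card =
          ∑ b ∈ B, (conf z R (τ b)).card := by
        rw [← Finset.sum_fiberwise_of_maps_to (g := τ) (t := CS) fun b hb => hτCS b hb]
        refine Finset.sum_congr rfl fun σ _ => ?_
        rw [Finset.sum_congr rfl fun b hb => by rw [(mem_filter.1 hb).2], sum_const, smul_eq_mul]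
      have f4 : CS.card ≤ 2 ^ 30 * (64 * t ^ 2) := by
        refine (card_Cells_le hz hF hFX).trans (Nat.mul_le_mul_left _ ?_)
        calc X.card ^ 2 ≤ (8 * t) ^ 2 := Nat.pow_le_pow_left hXc 2
          _ = 64 * t ^ 2 := by ring
      have f5 : ∑ b ∈ B, (conf z R (τ b)).card ≤ Ks * t ^ 5 := by
        rw [hB, hR] at s2
        have : t * ∑ b ∈ B, (conf z R (τ b)).card ≤ t * (Ks * t ^ 5) := s2.trans (by
          apply le_of_eq; ring)
        exact Nat.le_of_mul_le_mul_left this (by omega)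
      have f6 : ∑ σ ∈ CS, (conf z R σ).card ≤ Ks * t ^ 4 := by
        rw [hR] at s1; exact s1.trans (by apply le_of_eq; ring)
      have f7 : ∑ σ ∈ CS, ((B.filter fun b => τ b = σ).card + t) *
          (100 * t ^ 2 + 18 * (conf z R σ).card) = 100 * t ^ 2 * t ^ 3 +
          18 * ∑ b ∈ B, (conf z R (τ b)).card + 100 * (t * t ^ 2) * CS.card +
          18 * t * ∑ σ ∈ CS, (conf z R σ).card := by
        rw [← f2, ← f3, card_eq_sum_ones CS, mul_sum CS _ (100 * t ^ 2), mul_sum CS _ 18,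
          mul_sum CS _ (100 * (t * t ^ 2)), mul_sum CS _ (18 * t), ← sum_add_distrib,
          ← sum_add_distrib, ← sum_add_distrib]
        exact Finset.sum_congr rfl fun σ _ => by ring
      calc _ ≤ t * ∑ σ ∈ CS, ((T σ).biUnion fun c => Φ4 c ∪ (conf z R σ).biUnion (Φ5 c)).card :=
            Nat.mul_le_mul_left _ card_biUnion_le
        _ ≤ ∑ σ ∈ CS, ((B.filter fun b => τ b = σ).card + t) *
            (100 * t ^ 2 + 18 * (conf z R σ).card) := by rw [mul_sum]; exact Finset.sum_le_sum f1
        _ ≤ 100 * t ^ 2 * t ^ 3 + 18 * (Ks * t ^ 5) + 100 * (t * t ^ 2) * (2 ^ 30 * (64 * t ^ 2)) +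
            18 * t * (Ks * t ^ 4) := by rw [f7]; gcongr
        _ = _ := by ring
    have d5 := Nat.le_of_mul_le_mul_left d4 (by omega)
    have g1 : t ^ 2 ≤ t ^ 4 := Nat.pow_le_pow_right (by omega) (by omega)
    have g2 : t ^ 3 ≤ t ^ 4 := Nat.pow_le_pow_right (by omega) (by omega)
    have g3 : Ks * t * t ^ 3 = Ks * t ^ 4 := by ring
    have g4 : Kc * t ^ 4 = 10000 * t ^ 4 + 50 * (Ks * t ^ 4) + 6400 * 2 ^ 30 * t ^ 4 := by
      unfold Kc; generalize Ks = k; ring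
    have g5 : (100 + 6400 * 2 ^ 30 + 36 * Ks) * t ^ 4 =
        100 * t ^ 4 + 36 * (Ks * t ^ 4) + 6400 * 2 ^ 30 * t ^ 4 := by ring
    have u1 := card_union_le (Φ1 ∪ B.biUnion Φ2 ∪ (R \ X).biUnion Φ3) (CS.biUnion fun σ =>
      (T σ).biUnion fun c => Φ4 c ∪ (conf z R σ).biUnion (Φ5 c))
    have u2 := card_union_le (Φ1 ∪ B.biUnion Φ2) ((R \ X).biUnion Φ3)
    have u3 := card_union_le Φ1 (B.biUnion Φ2)
    omega
  · intro z' hz' hag ρ hρ b hb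
    have hV' := L1 z' hz' (hag.mono (subset_union_left.trans (subset_union_left.trans
      subset_union_left)))
    have a2 : Agree (Φ2 b) z z' := hag.mono fun φ hφ => mem_union_left _ (mem_union_left _
      (mem_union_right _ (mem_biUnion.2 ⟨b, hb, hφ⟩)))
    by_cases hc : ρ ∈ conf z R (τ b)
    · obtain ⟨c, hcT, hbc⟩ := hT2 (τ b) b (mem_filter.2 ⟨hb, rfl⟩)
      have sub : Φ4 c ∪ (conf z R (τ b)).biUnion (Φ5 c) ⊆
          Φ1 ∪ B.biUnion Φ2 ∪ (R \ X).biUnion Φ3 ∪ CS.biUnion fun σ => (T σ).biUnion fun c =>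
            Φ4 c ∪ (conf z R σ).biUnion (Φ5 c) := fun φ hφ =>
        mem_union_right _ (mem_biUnion.2 ⟨τ b, hτCS b hb, mem_biUnion.2 ⟨c, hcT, hφ⟩⟩)
      have a4 : Agree (Φ4 c) z z' := hag.mono (subset_union_left.trans sub)
      have a5 : Agree (Φ5 c ρ) z z' := hag.mono fun φ hφ =>
        sub (mem_union_right _ (mem_biUnion.2 ⟨ρ, hc, hφ⟩))
      have := (hΦ5 c ρ (hT1 _ c hcT) hρ).2.2 z' hz' a5
        ((hΦ4 c (hT1 _ c hcT).2).2.2 z' hz' a4) b hbc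
      rwa [dotProduct_comm]
    · refine (hΦ2 b hb).2.2 z' hz' a2 _ fun i => ?_
      have hiV : τ b i ∈ Vx z X := mem_Vx.2 ((hτ b hb).isVx i)
      by_cases hρX : ρ ∈ X
      · exact (hV' _ hiV).2 ρ hρX
      · have a3 : Agree (Φ3 ρ) z z' := hag.mono fun φ hφ => mem_union_left _ (mem_union_right _
          (mem_biUnion.2 ⟨ρ, mem_sdiff.2 ⟨hρ, hρX⟩, hφ⟩))
        refine ((hΦ3 ρ hρX).2.2 z' hz' a3 hV' _ hiV).1 ?_
        by_contra hneg
        exact hc (mem_conf.2 ⟨hρ, i, not_le.1 hneg⟩)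

end LT

namespace LT

open Matrix Finset Code

set_option linter.unusedSectionVars false
set_option linter.unusedVariables false
set_option linter.unusedSimpArgs false

/-! ### From certificates to strategies -/

section
variable {α Q : Type*} {val : Q → α → SignType} {w : ℝ} {G : Finset α → Prop}

/-- Asking a list of questions whose expected answers are those of `x`, stopping at the first
mismatch. -/
lemma Can.follow (x : α) {T : ℝ} : ∀ (l : List Q) (S : Finset α),
    (∀ S' ⊆ S, S'.Nonempty → (∃ q ∈ l, ∀ y ∈ S', val q y ≠ val q x) → Can val w G T S') →
    (∀ S' ⊆ S, S'.Nonempty → (∀ q ∈ l, ∀ y ∈ S', val q y = val q x) → Can val w G T S') →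
    S.Nonempty → Can val w G (T + l.length) S := by
  intro l
  induction l with
  | nil => intro S _ h2 hS; simpa using h2 S subset_rfl hS (by simp)
  | cons q l ih =>
    intro S h1 h2 hS
    refine Can.ask _ _ q fun v hv => ?_
    rw [List.length_cons, show T + ((l.length + 1 : ℕ) : ℝ) - 1 = T + l.length by push_cast; ring]
    by_cases hvx : v = val q x
    · refine ih _ (fun S' hS' hne ⟨q', hq', h⟩ => h1 S' (hS'.trans (filter_subset _ _)) hne
        ⟨q', by simp [hq'], h⟩) (fun S' hS' hne h => h2 S' (hS'.trans (filter_subset _ _)) hne ?_) hv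
      intro q' hq' y hy
      rcases List.mem_cons.1 hq' with rfl | hq'
      · rw [(mem_filter.1 (hS' hy)).2, hvx]
      · exact h q' hq' y hy
    · refine (h1 _ (filter_subset _ _) hv ⟨q, by simp, fun y hy => ?_⟩).mono
        (by have : (0 : ℝ) ≤ l.length := Nat.cast_nonneg _
            linarith)
      rw [(mem_filter.1 hy).2]; exact hvx

/-- If each candidate has a certificate of size `a` out of a small pool of questions, then the game
is won at amortized cost `a`. -/
lemma Can.unit (Φ : Finset Q) {q a : ℕ} (hq : 3 ≤ q) (hΦ : Φ.card < q) (ha : a ≤ q)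
    (hw : (q : ℝ) ≤ w) (S0 : Finset α)
    (hc : ∀ x ∈ S0, ∃ Ψ ⊆ Φ, Ψ.card ≤ a ∧
      ∀ S ⊆ S0, (∀ y ∈ S, ∀ φ ∈ Ψ, val φ y = val φ x) → G S) :
    ∀ (n : ℕ) (S : Finset α), S.card = n → S ⊆ S0 → S.Nonempty →
      Can val w G (a + w * Real.log S.card) S := by
  classical
  have hq0 : (3 : ℝ) ≤ q := by exact_mod_cast hq
  have hw0 : 0 < w := by linarith
  intro n
  induction n using Nat.strong_induction_on with
  | _ n ih =>
    intro S hn hS hne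
    have hSp : (0 : ℝ) < S.card := by exact_mod_cast hne.card_pos
    by_cases hcase : ∃ φ ∈ Φ, ∀ v, (S.filter fun x => val φ x = v).card * q ≤ S.card * (q - 1)
    · obtain ⟨φ, -, hφ⟩ := hcase
      refine Can.ask _ _ φ fun v hv => ?_
      have h1 := hφ v
      have hp := hv.card_pos
      have hlt : (S.filter fun x => val φ x = v).card < n := by
        rw [← hn]
        by_contra hcon
        have := Nat.mul_le_mul_right q (not_lt.1 hcon)
        have h3 : S.card * q ≤ S.card * (q - 1) := this.trans h1
        have := Nat.le_of_mul_le_mul_left h3 hne.card_pos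
        omega
      refine (ih _ hlt _ rfl ((filter_subset _ _).trans hS) hv).mono ?_
      have hp' : (0 : ℝ) < (S.filter fun x => val φ x = v).card := by exact_mod_cast hp
      have h1' : ((S.filter fun x => val φ x = v).card : ℝ) * q ≤ S.card * (q - 1) := by
        have : (((S.filter fun x => val φ x = v).card * q : ℕ) : ℝ) ≤ ((S.card * (q - 1) : ℕ) : ℝ) := by
          exact_mod_cast h1
        rw [Nat.cast_mul, Nat.cast_mul, Nat.cast_sub (by omega)] at this
        simpa using this
      generalize ((S.filter fun x => val φ x = v).card : ℝ) = m at hp' h1'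
      have h2 : Real.log m - Real.log S.card ≤ - (1 / q) := by
        rw [← Real.log_div hp'.ne' hSp.ne']
        refine (Real.log_le_sub_one_of_pos (div_pos hp' hSp)).trans ?_
        rw [sub_le_iff_le_add, div_le_iff₀ hSp]
        have : (- (1 / (q : ℝ)) + 1) * S.card = (S.card * (q - 1)) / q := by field_simp; ring
        rw [this, le_div_iff₀ (by linarith)]
        exact h1'
      have h3 : w * (1 / q) ≥ 1 := by
        rw [mul_one_div, ge_iff_le, le_div_iff₀ (by linarith)]; linarith
      nlinarith
    · push Not at hcase
      choose! v hv using hcase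
      -- a candidate agreeing with the majority answer to every question
      have hx : ∃ x ∈ S, ∀ φ ∈ Φ, val φ x = v φ := by
        by_contra hcon
        push Not at hcon
        have hcov : S ⊆ Φ.biUnion fun φ => S.filter fun x => ¬ val φ x = v φ := by
          intro x hx
          obtain ⟨φ, h1, h2⟩ := hcon x hx
          exact mem_biUnion.2 ⟨φ, h1, mem_filter.2 ⟨hx, h2⟩⟩
        have h1 := (card_le_card hcov).trans card_biUnion_le
        have h2 : (∑ φ ∈ Φ, (S.filter fun x => ¬ val φ x = v φ).card) * q ≤ Φ.card * S.card := by
          rw [sum_mul]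
          refine (Finset.sum_le_sum (g := fun _ => S.card) fun φ hφ => ?_).trans (by simp)
          have e := Finset.card_filter_add_card_filter_not (s := S) (fun x => val φ x = v φ)
          have h3 := hv φ hφ
          obtain ⟨q', rfl⟩ : ∃ q', q = q' + 1 := ⟨q - 1, by omega⟩
          rw [Nat.add_sub_cancel] at h3
          nlinarith
        have h3 := Nat.mul_le_mul_right q h1
        have h4 : q * S.card ≤ Φ.card * S.card := by rw [mul_comm]; exact h3.trans h2
        have := Nat.le_of_mul_le_mul_right h4 hne.card_pos
        omega
      obtain ⟨x, hxS, hxv⟩ := hx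
      obtain ⟨Ψ, hΨ, hΨa, hΨG⟩ := hc x (hS hxS)
      have := Can.follow (val := val) (w := w) (G := G) x (T := w * Real.log S.card) Ψ.toList S
        ?_ ?_ hne
      · refine this.mono ?_
        rw [Finset.length_toList]
        have : (Ψ.card : ℝ) ≤ a := by exact_mod_cast hΨa
        linarith
      · rintro S' hS' hne' ⟨φ, hφ, h⟩
        rw [Finset.mem_toList] at hφ
        have hsub : S' ⊆ S.filter fun y => ¬ val φ y = v φ := fun y hy =>
          mem_filter.2 ⟨hS' hy, by rw [← hxv φ (hΨ hφ)]; exact h y hy⟩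
        have h1 := card_le_card hsub
        have e := Finset.card_filter_add_card_filter_not (s := S) (fun x => val φ x = v φ)
        have h3 := hv φ (hΨ hφ)
        have h4 : S'.card * q ≤ S.card := by
          obtain ⟨q', rfl⟩ : ∃ q', q = q' + 1 := ⟨q - 1, by omega⟩
          rw [Nat.add_sub_cancel] at h3
          nlinarith
        have hp := hne'.card_pos
        refine (ih _ (by nlinarith) S' rfl (hS'.trans hS) hne').mono ?_
        have hp' : (0 : ℝ) < S'.card := by exact_mod_cast hp
        have h5 : Real.log S'.card + Real.log q ≤ Real.log S.card := by
          rw [← Real.log_mul hp'.ne' (by linarith)]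
          exact Real.log_le_log (by positivity) (by exact_mod_cast h4)
        have h6 : 1 ≤ Real.log q := by
          rw [Real.le_log_iff_exp_le (by linarith)]
          exact (Real.exp_one_lt_d9.le.trans (by norm_num)).trans hq0
        have h7 : (a : ℝ) ≤ q := by exact_mod_cast ha
        nlinarith
      · intro S' hS' hne' h
        refine Can.done _ _ (hΨG S' (hS'.trans hS) fun y hy φ hφ =>
          h φ (by rwa [Finset.mem_toList]) y hy) ?_
        exact mul_le_mul_of_nonneg_left (Can.log_card_le hS' hne') hw0.le

end

variable {ι : Type*} [DecidableEq ι]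

/-- The answer of a configuration to a test. -/
noncomputable def tval (φ : Tst ι) (z : ι → E6) : SignType := SignType.sign (φ.fval z)

/-- Either a common bad pair of type `E` is known, or all pairs of `R × B` are known to be good. -/
def Res (E : ι → ι → Prop) (R B : Finset ι) (S : Finset (ι → E6)) : Prop :=
  (∃ ρ b, E ρ b ∧ ∀ z ∈ S, z ρ ⬝ᵥ z b < 0) ∨ ∀ ρ ∈ R, ∀ b ∈ B, ∀ z ∈ S, 0 ≤ z ρ ⬝ᵥ z b

lemma Res.anti {E : ι → ι → Prop} {R B : Finset ι} {S S' : Finset (ι → E6)} (h : Res E R B S)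
    (hS : S' ⊆ S) : Res E R B S' := by
  rcases h with ⟨ρ, b, h1, h2⟩ | h
  · exact Or.inl ⟨ρ, b, h1, fun z hz => h2 z (hS hz)⟩
  · exact Or.inr fun ρ hρ b hb z hz => h ρ hρ b hb z (hS hz)

lemma Res.symm {E : ι → ι → Prop} {R B : Finset ι} {S : Finset (ι → E6)} (h : Res E R B S) :
    Res E B R S := by
  rcases h with h | h
  · exact Or.inl h
  · exact Or.inr fun ρ hρ b hb z hz => by rw [dotProduct_comm]; exact h b hb ρ hρ z hz

/-- The entropy weight: more than the number of tests on `2 t ^ 3` indices and the size of the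
certificates. -/
def Wu (t : ℕ) : ℕ := 9 * (2 * t ^ 3) ^ 38 + Kc * t ^ 4 + 3

lemma Kc_pos : 0 < Kc := by unfold Kc; positivity

/-- Subproblems of size `t ^ 3` are solved at amortized cost `O(t ^ 4)`. -/
lemma unit_pairs [Fintype ι] {t : ℕ} (ht : 6 ≤ t) {w : ℝ} (hw : (Wu t : ℝ) ≤ w)
    {E : ι → ι → Prop} {R B : Finset ι} (hR : R.card = t ^ 3) (hB : B.card = t ^ 3)
    (hE : ∀ ρ ∈ R, ∀ b ∈ B, E ρ b) (S : Finset (ι → E6)) (hS : S.Nonempty) (hGP : ∀ z ∈ S, GP z) :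
    Can tval w (Res E R B) (((Kc * t ^ 4 : ℕ) : ℝ) + w * Real.log S.card) S := by
  have hcard : (Tst.loc (R ∪ B)).card ≤ 9 * (2 * t ^ 3) ^ 38 := by
    rw [Tst.card_loc]
    refine Nat.mul_le_mul_left _ (Nat.pow_le_pow_left ?_ _)
    refine (card_union_le _ _).trans ?_
    omega
  refine Can.unit (Tst.loc (R ∪ B)) (q := Wu t) ?_ ?_ ?_ hw S ?_ _ S rfl subset_rfl hS
  · unfold Wu; omega
  · unfold Wu; omega
  · unfold Wu; omega
  · intro x hx
    by_cases hg : ∀ ρ ∈ R, ∀ b ∈ B, 0 ≤ x ρ ⬝ᵥ x b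
    · obtain ⟨Φ, h1, h2, h3⟩ := pair_cert (hGP x hx) ht hR hB hg
      refine ⟨Φ, h1, h2, fun S' hS' h => Or.inr fun ρ hρ b hb z hz => ?_⟩
      exact h3 z (hGP z (hS' hz)).six (fun φ hφ => (h z hz φ hφ).symm) ρ hρ b hb
    · push Not at hg
      obtain ⟨ρ, hρ, b, hb, hneg⟩ := hg
      refine ⟨{Tst.pair ρ b}, ?_, ?_, fun S' _ h => Or.inl ⟨ρ, b, hE ρ hρ b hb, fun z hz => ?_⟩⟩
      · rw [singleton_subset_iff]
        exact Tst.pair_mem (mem_union_left _ hρ) (mem_union_right _ hb)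
      · rw [card_singleton]
        exact Nat.mul_pos Kc_pos (pow_pos (by omega) 4)
      · have := h z hz _ (mem_singleton_self _)
        unfold tval at this
        rw [Tst.fval_pair, Tst.fval_pair, sign_neg hneg] at this
        exact sign_eq_neg_one_iff.1 this

end LT

namespace LT

open Matrix Finset Code

set_option linter.unusedSectionVars false
set_option linter.unusedVariables false
set_option linter.unusedSimpArgs false

variable {ι : Type*} [DecidableEq ι]

/-! ### Deterministic approximations -/

/-- Splitting a finite set into `a` groups of size `g`. -/
lemma exists_groups {R : Finset ι} {a g : ℕ} (h : R.card = a * g) :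
    ∃ G : Fin a → Finset ι, (∀ i, (G i).card = g) ∧ (∀ i j, i ≠ j → Disjoint (G i) (G j)) ∧
      univ.biUnion G = R := by
  let e := (Finset.equivFinOfCardEq h).trans finProdFinEquiv.symm
  have hinj : ∀ p q, (e.symm p : ι) = e.symm q → p = q := fun p q h =>
    e.symm.injective (Subtype.ext h)
  refine ⟨fun i => univ.image fun j => (e.symm (i, j) : ι), fun i => ?_, fun i j hij => ?_, ?_⟩
  · rw [card_image_of_injective _ fun j k h => (Prod.ext_iff.1 (hinj _ _ h)).2, card_univ,
      Fintype.card_fin]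
  · rw [Finset.disjoint_left]
    intro x hx hx'
    obtain ⟨k, -, rfl⟩ := mem_image.1 hx
    obtain ⟨l, -, hl⟩ := mem_image.1 hx'
    exact hij (Prod.ext_iff.1 (hinj _ _ hl)).1.symm
  · ext x
    simp only [mem_biUnion, mem_univ, true_and, mem_image]
    constructor
    · rintro ⟨i, j, rfl⟩; exact (e.symm (i, j)).2
    · intro hx
      exact ⟨(e ⟨x, hx⟩).1, (e ⟨x, hx⟩).2, by simp⟩

/-- One representative is chosen from each block so that an exponential potential stays small. -/
lemma select {κ η : Type*} [DecidableEq η] (K : Finset κ) (Bk : η → Finset ι) {r : ℕ} (hr : 0 < r)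
    (hBk : ∀ i, (Bk i).card = r) (y : κ → ι → ℝ) (hy : ∀ k ρ, 0 ≤ y k ρ ∧ y k ρ ≤ 1) {l : ℝ}
    (hl : 0 ≤ l) (hl1 : l ≤ 1) (s : Finset η) :
    ∃ c : η → ι, (∀ i, c i ∈ Bk i) ∧
      ∑ k ∈ K, Real.exp (l * ∑ i ∈ s, ((∑ ρ ∈ Bk i, y k ρ) / r - y k (c i))) ≤
        K.card * Real.exp (l ^ 2 * s.card) := by
  have hr' : (0 : ℝ) < r := by exact_mod_cast hr
  have hne : ∀ i, (Bk i).Nonempty := fun i => card_pos.1 (by rw [hBk]; exact hr)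
  induction s using Finset.induction_on with
  | empty =>
    choose c hc using hne
    exact ⟨c, hc, by simp⟩
  | insert a s ha ih =>
    obtain ⟨c, hc, hp⟩ := ih
    set p : κ → ℝ := fun k => (∑ ρ ∈ Bk a, y k ρ) / r with hpdef
    set W : κ → ℝ := fun k => Real.exp (l * ∑ i ∈ s, ((∑ ρ ∈ Bk i, y k ρ) / r - y k (c i))) with hW
    have hpb : ∀ k, 0 ≤ p k ∧ p k ≤ 1 := by
      intro k
      refine ⟨div_nonneg (Finset.sum_nonneg fun ρ _ => (hy k ρ).1) hr'.le, ?_⟩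
      rw [hpdef, div_le_one hr']
      refine (Finset.sum_le_sum fun ρ _ => (hy k ρ).2).trans ?_
      simp [hBk]
    have key : ∀ k, ∑ ρ ∈ Bk a, Real.exp (l * (p k - y k ρ)) ≤ r * Real.exp (l ^ 2) := by
      intro k
      have h1 : ∀ ρ ∈ Bk a, Real.exp (l * (p k - y k ρ)) ≤ 1 + l * (p k - y k ρ) + l ^ 2 := by
        intro ρ _
        have hd : |p k - y k ρ| ≤ 1 := by
          rw [abs_le]; constructor <;> linarith [(hpb k).1, (hpb k).2, (hy k ρ).1, (hy k ρ).2]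
        have hx : |l * (p k - y k ρ)| ≤ 1 := by
          rw [abs_mul, abs_of_nonneg hl]
          exact mul_le_one₀ hl1 (abs_nonneg _) hd
        have h2 := (abs_le.1 (Real.abs_exp_sub_one_sub_id_le hx)).2
        have h3 : (l * (p k - y k ρ)) ^ 2 ≤ l ^ 2 := by
          rw [mul_pow]
          have := (sq_le_one_iff_abs_le_one _).2 hd
          nlinarith [sq_nonneg l]
        linarith
      refine (Finset.sum_le_sum h1).trans ?_
      rw [sum_add_distrib, sum_add_distrib, ← mul_sum, sum_sub_distrib, sum_const, sum_const,
        sum_const, hBk, nsmul_eq_mul, nsmul_eq_mul, nsmul_eq_mul]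
      have h2 : (r : ℝ) * p k = ∑ ρ ∈ Bk a, y k ρ := by rw [hpdef]; field_simp
      rw [h2, sub_self]
      have := Real.add_one_le_exp (l ^ 2)
      nlinarith
    have hex : ∃ ρ ∈ Bk a, ∑ k ∈ K, W k * Real.exp (l * (p k - y k ρ)) ≤
        Real.exp (l ^ 2) * ∑ k ∈ K, W k := by
      refine Finset.exists_le_of_sum_le (hne a) ?_
      rw [sum_comm, sum_const, hBk, nsmul_eq_mul, mul_sum, mul_sum]
      refine Finset.sum_le_sum fun k _ => ?_
      rw [← mul_sum]
      have := mul_le_mul_of_nonneg_left (key k) (Real.exp_pos _ : 0 < W k).le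
      calc _ ≤ _ := this
        _ = _ := by ring
    obtain ⟨ρ, hρ, hle⟩ := hex
    refine ⟨Function.update c a ρ, fun i => ?_, ?_⟩
    · by_cases hi : i = a
      · subst hi; simpa using hρ
      · simpa [Function.update_of_ne hi] using hc i
    · have e : ∀ k, Real.exp (l * ∑ i ∈ insert a s, ((∑ ρ ∈ Bk i, y k ρ) / r -
          y k (Function.update c a ρ i))) = W k * Real.exp (l * (p k - y k ρ)) := by
        intro k
        rw [hW, ← Real.exp_add, sum_insert ha, Function.update_self]
        congr 1
        have : ∑ i ∈ s, ((∑ ρ ∈ Bk i, y k ρ) / r - y k (Function.update c a ρ i)) =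
            ∑ i ∈ s, ((∑ ρ ∈ Bk i, y k ρ) / r - y k (c i)) :=
          Finset.sum_congr rfl fun i hi => by
            have hne' : i ≠ a := fun h => ha (h ▸ hi)
            rw [Function.update_of_ne hne']
        rw [this]; ring
      rw [Finset.sum_congr rfl fun k _ => e k]
      refine hle.trans ((mul_le_mul_of_nonneg_left hp (Real.exp_pos _).le).trans (le_of_eq ?_))
      rw [card_insert_of_notMem ha]
      push_cast
      rw [mul_add, Real.exp_add, mul_one]
      ring

/-- The vectors of `R` that are negative on some member of `v`. -/
noncomputable def hit (z : ι → E6) (R : Finset ι) (v : Fin 6 → E6) : Finset ι :=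
  R.filter fun ρ => ∃ i, z ρ ⬝ᵥ v i < 0

lemma mem_hit {z : ι → E6} {R : Finset ι} {v : Fin 6 → E6} {ρ : ι} :
    ρ ∈ hit z R v ↔ ρ ∈ R ∧ ∃ i, z ρ ⬝ᵥ v i < 0 := by simp [hit]

/-- The codes with indices in `G`. -/
noncomputable def codesIn [Fintype ι] (G : Finset ι) : Finset (Code ι) :=
  univ.filter fun C => C.set ⊆ G

lemma card_codesIn [Fintype ι] (G : Finset ι) : (codesIn G).card ≤ 2 * G.card ^ 5 := by
  have : (codesIn G).card ≤ ((powersetCard 5 G) ×ˢ (univ : Finset Bool)).card := by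
    refine card_le_card_of_injOn (fun C => (C.set, C.2)) (fun C hC => ?_) ?_
    · simp only [codesIn, coe_filter, Set.mem_ofPred_eq] at hC
      simp only [coe_product, Set.mem_prod, mem_coe, mem_powersetCard, mem_univ, and_true]
      exact ⟨hC.2, C.1.2⟩
    · intro C _ C' _ h
      simp only [Prod.mk.injEq] at h
      exact Prod.ext (Subtype.ext h.1) h.2
  rw [card_product, card_powersetCard, card_univ, Fintype.card_bool, mul_comm] at this
  exact this.trans (Nat.mul_le_mul_left _ (Nat.choose_le_pow _ _))

/-- Halfspace traces are those of codes, up to five elements for each halfspace. -/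
lemma hit_trace [Fintype ι] {z : ι → E6} (hz : Six z) {G : Finset ι} (hG : 6 ≤ G.card)
    {v : Fin 6 → E6} (hv : ∀ i, v i ≠ 0) : ∃ σ : Fin 6 → Code ι, (∀ i, (σ i).set ⊆ G) ∧
      ∀ H ⊆ G, (hit z H v).card ≤ (conf z H σ).card + 30 ∧
        (conf z H σ).card ≤ (hit z H v).card + 30 := by
  choose σ h1 h2 using fun i => exists_trace hz hG (hv i)
  set L := univ.biUnion fun i => (σ i).set with hL
  have hLc : L.card ≤ 30 := by
    refine (card_biUnion_le_card_mul _ _ 5 fun i _ => by rw [(σ i).1.2]).trans ?_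
    simp
  have hiff : ∀ ρ ∈ G, ρ ∉ L → ∀ i, (z ρ ⬝ᵥ v i < 0 ↔ z ρ ⬝ᵥ vt z (σ i) < 0) := by
    intro ρ hρ hn i
    exact h2 i ρ hρ fun hm => hn (mem_biUnion.2 ⟨i, mem_univ _, hm⟩)
  refine ⟨σ, h1, fun H hH => ⟨?_, ?_⟩⟩
  · have : hit z H v ⊆ conf z H σ ∪ L := by
      intro ρ hρ
      obtain ⟨h3, i, h4⟩ := mem_hit.1 hρ
      by_cases hρL : ρ ∈ L
      · exact mem_union_right _ hρL
      · exact mem_union_left _ (mem_conf.2 ⟨h3, i, (hiff ρ (hH h3) hρL i).1 h4⟩)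
    have := (card_le_card this).trans (card_union_le _ _)
    omega
  · have : conf z H σ ⊆ hit z H v ∪ L := by
      intro ρ hρ
      obtain ⟨h3, i, h4⟩ := mem_conf.1 hρ
      by_cases hρL : ρ ∈ L
      · exact mem_union_right _ hρL
      · exact mem_union_left _ (mem_hit.2 ⟨h3, i, (hiff ρ (hH h3) hρL i).2 h4⟩)
    have := (card_le_card this).trans (card_union_le _ _)
    omega

lemma conf_congr {z z' : ι → E6} {Φ : Finset (Tst ι)} (h : Agree Φ z z') {H : Finset ι}
    {σ : Fin 6 → Code ι} (hΦ : ∀ ρ ∈ H, ∀ i, Tst.det ρ (σ i) ∈ Φ) : conf z H σ = conf z' H σ := by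
  ext ρ
  rw [mem_conf, mem_conf]
  refine and_congr_right fun hρ => exists_congr fun i => ?_
  have := h _ (hΦ ρ hρ i)
  rw [Tst.fval_det, Tst.fval_det] at this
  rw [← sign_eq_neg_one_iff, this, sign_eq_neg_one_iff]

/-- `A` approximates `R` with error `δ` for all unions of six halfspaces. -/
def Approx (z : ι → E6) (δ : ℝ) (R A : Finset ι) : Prop :=
  ∀ v : Fin 6 → E6, (∀ i, v i ≠ 0) →
    ((hit z R v).card : ℝ) * A.card ≤ (hit z A v).card * R.card + δ * R.card * A.card

lemma numeric_pool {r : ℕ} (hr : 2000 ≤ r) :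
    Real.log (((2 * (r ^ 7) ^ 5) ^ 6 : ℕ) : ℝ) + (1 / (4 * (r : ℝ) ^ 2)) ^ 2 * (r : ℝ) ^ 6 ≤
      1 / (4 * (r : ℝ) ^ 2) * ((r : ℝ) ^ 4 - 60) := by
  have hr' : (2000 : ℝ) ≤ r := by exact_mod_cast hr
  have h1 : Real.log (((2 * (r ^ 7) ^ 5) ^ 6 : ℕ) : ℝ) = 6 * Real.log 2 + 210 * Real.log r := by
    push_cast
    rw [← pow_mul, mul_pow, ← pow_mul, Real.log_mul (by positivity) (by positivity), Real.log_pow,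
      Real.log_pow]
    norm_num
  have h2 : Real.log r ≤ r := (Real.log_le_sub_one_of_pos (by linarith)).trans (by linarith)
  have h3 : Real.log 2 ≤ 1 := by have := Real.log_two_lt_d9; linarith
  have h4 : (1 / (4 * (r : ℝ) ^ 2)) ^ 2 * (r : ℝ) ^ 6 = r ^ 2 / 16 := by
    have : (r : ℝ) ≠ 0 := by linarith
    field_simp; ring
  have h5 : 1 / (4 * (r : ℝ) ^ 2) * ((r : ℝ) ^ 4 - 60) = r ^ 2 / 4 - 15 / r ^ 2 := by
    have : (r : ℝ) ≠ 0 := by linarith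
    field_simp; ring
  have h6 : 15 / (r : ℝ) ^ 2 ≤ 1 := by
    rw [div_le_one (by positivity)]; nlinarith
  rw [h1, h4, h5]
  nlinarith

/-- A group of size `r ^ 7` is approximated by a subset of size `r ^ 6`, simultaneously for all
configurations with the same tests on the group. -/
lemma group_approx [Fintype ι] {z0 : ι → E6} (hz0 : Six z0) {r : ℕ} (hr : 2000 ≤ r) {G : Finset ι}
    (hG : G.card = r ^ 7) : ∃ G' ⊆ G, G'.card = r ^ 6 ∧
      ∀ z, Six z → Agree (Tst.loc G) z0 z → ∀ v : Fin 6 → E6, (∀ i, v i ≠ 0) →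
        ((hit z G v).card : ℝ) ≤ r * (hit z G' v).card + r * (r ^ 4 + 1) := by
  have hr' : (2000 : ℝ) ≤ r := by exact_mod_cast hr
  have hr0 : (0 : ℝ) < r := by linarith
  obtain ⟨Bk, b1, b2, b3⟩ := exists_groups (R := G) (a := r ^ 6) (g := r) (by rw [hG]; ring)
  set K : Finset (Fin 6 → Code ι) := Fintype.piFinset fun _ => codesIn G with hK
  have hKc : K.card ≤ (2 * (r ^ 7) ^ 5) ^ 6 := by
    rw [hK, Fintype.card_piFinset_const, ← hG]
    exact Nat.pow_le_pow_left (card_codesIn G) 6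
  have hl1 : 1 / (4 * (r : ℝ) ^ 2) ≤ 1 := by
    rw [div_le_one (by positivity)]; nlinarith
  obtain ⟨c, hc, hsum⟩ := select K Bk (by omega : 0 < r) b1
    (fun σ ρ => if ∃ i, z0 ρ ⬝ᵥ vt z0 (σ i) < 0 then 1 else 0)
    (fun k ρ => by split_ifs <;> norm_num) (l := 1 / (4 * (r : ℝ) ^ 2)) (by positivity) hl1 univ
  have hcinj : Function.Injective c := by
    intro i j hij
    by_contra hne
    exact Finset.disjoint_left.1 (b2 i j hne) (hc i) (hij ▸ hc j)
  have hG' : univ.image c ⊆ G := by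
    intro x hx
    obtain ⟨i, -, rfl⟩ := mem_image.1 hx
    rw [← b3]; exact mem_biUnion.2 ⟨i, mem_univ _, hc i⟩
  have hconf : ∀ σ ∈ K, ((conf z0 G σ).card : ℝ) ≤
      r * (conf z0 (univ.image c) σ).card + r * (r ^ 4 - 60) := by
    intro σ hσ
    have h1 := (Finset.single_le_sum (fun k _ => (Real.exp_pos _).le) hσ).trans hsum
    have h2 : (∑ i, ((∑ ρ ∈ Bk i, if ∃ i, z0 ρ ⬝ᵥ vt z0 (σ i) < 0 then (1 : ℝ) else 0) / r -
        if ∃ k, z0 (c i) ⬝ᵥ vt z0 (σ k) < 0 then (1 : ℝ) else 0)) =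
        (conf z0 G σ).card / r - (conf z0 (univ.image c) σ).card := by
      rw [sum_sub_distrib, ← sum_div]
      congr 2
      · rw [← sum_biUnion fun i _ j _ hij => b2 i j hij, b3, sum_boole, conf]
      · rw [conf, ← sum_boole, sum_image fun i _ j _ h => hcinj h]
    have hKp : (0 : ℝ) < K.card := by exact_mod_cast card_pos.2 ⟨σ, hσ⟩
    simp only [h2] at h1
    rw [← Real.exp_log hKp, ← Real.exp_add, Real.exp_le_exp, card_univ, Fintype.card_fin] at h1
    have h3 : Real.log K.card ≤ Real.log (((2 * (r ^ 7) ^ 5) ^ 6 : ℕ) : ℝ) :=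
      Real.log_le_log hKp (by exact_mod_cast hKc)
    have h4 := numeric_pool hr
    rw [Nat.cast_pow r 6] at h1
    have h5 := le_of_mul_le_mul_left (h1.trans ((add_le_add_left h3 _).trans h4))
      (by positivity : (0 : ℝ) < 1 / (4 * (r : ℝ) ^ 2))
    have h6 : ((conf z0 G σ).card : ℝ) / r ≤ (conf z0 (univ.image c) σ).card + (r ^ 4 - 60) := by
      linarith
    rw [div_le_iff₀ hr0] at h6
    linarith
  refine ⟨univ.image c, hG', ?_, ?_⟩
  · rw [card_image_of_injective _ hcinj, card_univ, Fintype.card_fin]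
  · intro z hz hag v hv
    have hG6 : 6 ≤ G.card := by
      rw [hG]; exact (by omega : 6 ≤ r).trans (Nat.le_self_pow (by norm_num) r)
    obtain ⟨σ, h1, h2⟩ := hit_trace hz hG6 hv
    have hσK : σ ∈ K := Fintype.mem_piFinset.2 fun i => by
      rw [codesIn, mem_filter]; exact ⟨mem_univ _, h1 i⟩
    have e1 : conf z0 G σ = conf z G σ := conf_congr hag fun ρ hρ i => Tst.det_mem hρ (h1 i)
    have e2 : conf z0 (univ.image c) σ = conf z (univ.image c) σ :=
      conf_congr hag fun ρ hρ i => Tst.det_mem (hG' hρ) (h1 i)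
    have h3 := hconf σ hσK
    rw [e1, e2] at h3
    have h4 : ((hit z G v).card : ℝ) ≤ (conf z G σ).card + 30 := by
      exact_mod_cast (h2 G subset_rfl).1
    have h5 : ((conf z (univ.image c) σ).card : ℝ) ≤ (hit z (univ.image c) v).card + 30 := by
      exact_mod_cast (h2 _ hG').2
    have h6 := mul_le_mul_of_nonneg_left h5 hr0.le
    nlinarith

end LT

/-! ### One step of the divide and conquer -/

namespace LT

open Matrix Finset Code

set_option linter.unusedSectionVars false
set_option linter.unusedVariables false
set_option linter.unusedSimpArgs false

variable {ι : Type*} [DecidableEq ι]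

lemma hit_biUnion_card {κ : Type*} [Fintype κ] [DecidableEq κ] (z : ι → E6) (G : κ → Finset ι)
    (hd : ∀ i j, i ≠ j → Disjoint (G i) (G j)) (v : Fin 6 → E6) :
    (hit z (univ.biUnion G) v).card = ∑ i, (hit z (G i) v).card := by
  have : hit z (univ.biUnion G) v = univ.biUnion fun i => hit z (G i) v := by
    ext ρ; simp only [mem_hit, mem_biUnion, mem_univ, true_and]
    constructor
    · rintro ⟨⟨i, hi⟩, h⟩; exact ⟨i, hi, h⟩
    · rintro ⟨i, hi, h⟩; exact ⟨⟨i, hi⟩, h⟩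
  rw [this, card_biUnion]
  intro i _ j _ hij
  exact (hd i j hij).mono (filter_subset _ _) (filter_subset _ _)

/-- A set of size `r ^ (6 + e)` is replaced by a subset of size `r ^ 6` that approximates it for
all remaining candidates; one level of grouping is used for each factor `r`. -/
lemma pool [Fintype ι] {r : ℕ} (hr : 2000 ≤ r) {w : ℝ} (hw : 0 ≤ w) : ∀ (e : ℕ) (R : Finset ι),
    R.card = r ^ (6 + e) → ∀ S : Finset (ι → E6), S.Nonempty → (∀ z ∈ S, GP z) →
    Can tval w (fun S' => S' ⊆ S ∧ ∃ A ⊆ R, A.card = r ^ 6 ∧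
      ∀ z ∈ S', Approx z (e * (2 / (r : ℝ) ^ 2)) R A)
      (((e * (9 * r ^ (e + 266)) : ℕ) : ℝ) + w * Real.log S.card) S := by
  have hr' : (2000 : ℝ) ≤ r := by exact_mod_cast hr
  intro e
  induction e with
  | zero =>
    intro R hR S hS hGP
    refine Can.done _ _ ⟨subset_rfl, R, subset_rfl, hR, fun z _ v _ => ?_⟩ (by simp)
    simp
  | succ e ih =>
    intro R hR S hS hGP
    obtain ⟨G, g1, g2, g3⟩ := exists_groups (R := R) (a := r ^ e) (g := r ^ 7)
      (by rw [hR, ← pow_add]; congr 1; omega)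
    set Φ : Finset (Tst ι) := univ.biUnion fun i => Tst.loc (G i) with hΦ
    have hΦc : Φ.card ≤ 9 * r ^ (e + 266) := by
      refine (card_biUnion_le_card_mul _ _ (9 * (r ^ 7) ^ 38) fun i _ => ?_).trans ?_
      · rw [Tst.card_loc, g1]
      · rw [card_univ, Fintype.card_fin, ← pow_mul, pow_add]
        apply le_of_eq; ring
    have := (Can.askAll (val := tval) hw Φ S hS).bind (a := ((e * (9 * r ^ (e + 266)) : ℕ) : ℝ))
      (G' := fun S' => S' ⊆ S ∧ ∃ A ⊆ R, A.card = r ^ 6 ∧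
        ∀ z ∈ S', Approx z ((e + 1 : ℕ) * (2 / (r : ℝ) ^ 2)) R A) hS ?_
    · refine this.mono ?_
      have h1 : (Φ.card : ℝ) ≤ ((9 * r ^ (e + 266) : ℕ) : ℝ) := by exact_mod_cast hΦc
      have h2 : (e + 1) * (9 * r ^ (e + 266)) ≤ (e + 1) * (9 * r ^ (e + 1 + 266)) := by
        gcongr <;> omega
      have h3 : (((e + 1) * (9 * r ^ (e + 266)) : ℕ) : ℝ) ≤
        (((e + 1) * (9 * r ^ (e + 1 + 266)) : ℕ) : ℝ) := by exact_mod_cast h2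
      have h4 : (((e + 1) * (9 * r ^ (e + 266)) : ℕ) : ℝ) = ((e * (9 * r ^ (e + 266)) : ℕ) : ℝ) +
        ((9 * r ^ (e + 266) : ℕ) : ℝ) := by rw [← Nat.cast_add]; congr 1; ring
      linarith
    · rintro S' hS' ⟨x0, hx0⟩ ⟨-, hag⟩
      have hag' : ∀ z ∈ S', ∀ i, Agree (Tst.loc (G i)) x0 z := fun z hz i φ hφ =>
        hag φ (mem_biUnion.2 ⟨i, mem_univ _, hφ⟩) x0 hx0 z hz
      choose G' k1 k2 k3 using fun i => group_approx (hGP x0 (hS' hx0)).six hr (g1 i)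
      have k4 : ∀ i j, i ≠ j → Disjoint (G' i) (G' j) := fun i j hij =>
        (g2 i j hij).mono (k1 i) (k1 j)
      have hRc0 : (univ.biUnion G').card = r ^ (6 + e) := by
        rw [card_biUnion fun i _ j _ hij => k4 i j hij, sum_congr rfl fun i _ => k2 i, sum_const,
          card_univ, Fintype.card_fin, smul_eq_mul, ← pow_add]
        congr 1; omega
      have hR'R : univ.biUnion G' ⊆ R := by
        rw [← g3]; exact biUnion_mono fun i _ => k1 i
      have h0 := (ih _ hRc0 S' ⟨x0, hx0⟩ fun z hz => hGP z (hS' hz)).bind (a := 0)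
        (G' := fun S' => S' ⊆ S ∧ ∃ A ⊆ R, A.card = r ^ 6 ∧
          ∀ z ∈ S', Approx z ((e + 1 : ℕ) * (2 / (r : ℝ) ^ 2)) R A) ⟨x0, hx0⟩ ?_
      · rwa [add_zero] at h0
      · rintro S'' hS'' hne ⟨-, A, hA, hAc, hap⟩
        refine Can.done _ _ ⟨hS''.trans hS', A, hA.trans hR'R, hAc, fun z hz v hv => ?_⟩ (by simp)
        have h1 := hap z hz v hv
        have h2 : ((hit z R v).card : ℝ) ≤ r * (hit z (univ.biUnion G') v).card +
            r ^ e * (r * (r ^ 4 + 1)) := by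
          rw [← g3, hit_biUnion_card z G g2, hit_biUnion_card z G' k4]
          push_cast
          rw [mul_sum]
          refine (Finset.sum_le_sum fun i _ => k3 i z (hGP z (hS' (hS'' hz))).six
            (hag' z (hS'' hz) i) v hv).trans ?_
          rw [sum_add_distrib, sum_const, card_univ, Fintype.card_fin, nsmul_eq_mul]
          push_cast
          exact le_refl _
        rw [hRc0, hAc] at h1
        rw [hR, hAc]
        push_cast at h1 ⊢
        have hrp : (0 : ℝ) < r := by linarith
        have e1 : (r : ℝ) ^ (6 + (e + 1)) = r ^ e * r ^ 7 := by rw [← pow_add]; congr 1; omega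
        have e2 : (r : ℝ) ^ (6 + e) = r ^ e * r ^ 6 := by rw [← pow_add]; congr 1; omega
        rw [e2] at h1
        rw [e1]
        have hq : (0 : ℝ) < r ^ e := by positivity
        generalize (r : ℝ) ^ e = q at *
        have h3 := mul_le_mul_of_nonneg_left h1 hrp.le
        have h4 := mul_le_mul_of_nonneg_right h2 (by positivity : (0 : ℝ) ≤ r ^ 6)
        have e3 : (2 / (r : ℝ) ^ 2) * (q * r ^ 7) * r ^ 6 = 2 * r ^ 4 * (q * r ^ 7) := by
          field_simp
        have h5 : (0 : ℝ) ≤ (r ^ 4 - 1) * (q * r ^ 7) := by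
          refine mul_nonneg ?_ (by positivity)
          have : (1 : ℝ) ≤ r ^ 4 := one_le_pow₀ (by linarith)
          linarith
        have e4 : ((e : ℝ) + 1) * (2 / (r : ℝ) ^ 2) * (q * r ^ 7) * r ^ 6 =
          r * (e * (2 / (r : ℝ) ^ 2) * (q * r ^ 6) * r ^ 6) + 2 * r ^ 4 * (q * r ^ 7) := by
          rw [← e3]; ring
        rw [e4]
        nlinarith

/-- Either the problem `R × B` is resolved, or it is reduced to at most `K` subproblems with `a`
red and `b` blue vectors. -/
def Split (E : ι → ι → Prop) (R B : Finset ι) (a b K : ℕ) (S : Finset (ι → E6)) : Prop :=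
  Res E R B S ∨ ∃ Pr : Finset (Finset ι × Finset ι), Pr.card ≤ K ∧
    (∀ p ∈ Pr, p.1 ⊆ R ∧ p.2 ⊆ B ∧ p.1.card = a ∧ p.2.card = b) ∧
    ∀ S' ⊆ S, (∀ p ∈ Pr, Res E p.1 p.2 S') → Res E R B S'

/-- Solving all subproblems solves the problem. -/
lemma Split.solve {w : ℝ} {E : ι → ι → Prop} {R B : Finset ι} {a b K : ℕ} {T0 T : ℝ} (hT : 0 ≤ T)
    {S : Finset (ι → E6)} (hS : S.Nonempty)
    (H : Can tval w (fun S' => S' ⊆ S ∧ Split E R B a b K S') (T0 + w * Real.log S.card) S)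
    (h : ∀ R' ⊆ R, ∀ B' ⊆ B, R'.card = a → B'.card = b → ∀ S' ⊆ S, S'.Nonempty →
      Can tval w (fun S'' => S'' ⊆ S' ∧ Res E R' B' S'') (T + w * Real.log S'.card) S') :
    Can tval w (fun S' => S' ⊆ S ∧ Res E R B S') (T0 + K * T + w * Real.log S.card) S := by
  have := H.bind (a := K * T) (G' := fun S' => S' ⊆ S ∧ Res E R B S') hS ?_
  · exact this.mono (by linarith)
  · rintro S' hS' hne ⟨-, hres | ⟨Pr, h1, h2, h3⟩⟩
    · refine Can.done _ _ ⟨hS', hres⟩ ?_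
      have : 0 ≤ K * T := by positivity
      linarith
    · have hl := Can.list (val := tval) (w := w) Pr.toList (fun p S' => Res E p.1 p.2 S')
        (fun _ => T) S' (fun p S1 S2 hs hh => hh.anti hs) hne (fun p hp S1 hS1 hne1 => by
          rw [Finset.mem_toList] at hp
          obtain ⟨q1, q2, q3, q4⟩ := h2 p hp
          exact h _ q1 _ q2 q3 q4 S1 (hS1.trans hS') hne1)
      have h4 := hl.bind (a := 0) (G' := fun S' => S' ⊆ S ∧ Res E R B S') hne ?_
      · refine h4.mono ?_
        rw [List.map_const', List.sum_replicate, Finset.length_toList, nsmul_eq_mul]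
        have : (Pr.card : ℝ) ≤ K := by exact_mod_cast h1
        nlinarith
      · rintro S1 hS1 hne1 ⟨-, hres⟩
        exact Can.done _ _ ⟨hS1.trans hS', h3 S1 hS1 fun p hp => hres p (Finset.mem_toList.2 hp)⟩
          (by simp)

/-- The constant in the number of subproblems of one step. -/
def Kd : ℕ := 2 * Ks + 2 + 2 ^ 37

/-- One step: by sampling from the pool, `r ^ (6 + e)` red and `r ^ (s + 2)` blue vectors are
reduced to `O(r ^ 2)` subproblems, with red parts smaller by `r` and blue parts by `r ^ 2`. -/
lemma cut_step [Fintype ι] {r : ℕ} (hr : 2000 ≤ r) {w : ℝ} (hw : 0 ≤ w) {e s : ℕ} (he : 2 * e ≤ r)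
    {E : ι → ι → Prop} {R B : Finset ι} (hR : R.card = r ^ (6 + e)) (hB : B.card = r ^ (s + 2))
    (hE : ∀ ρ ∈ R, ∀ b ∈ B, E ρ b) (S : Finset (ι → E6)) (hS : S.Nonempty) (hGP : ∀ z ∈ S, GP z) :
    Can tval w (fun S' => S' ⊆ S ∧ Split E R B (r ^ (5 + e)) (r ^ s) (Kd * r ^ 2) S')
      (((e * (9 * r ^ (e + 266)) + (R.card + B.card) * (9 * (2 * r ^ 6) ^ 38) : ℕ) : ℝ) +
        w * Real.log S.card) S := by
  have hr' : (2000 : ℝ) ≤ r := by exact_mod_cast hr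
  have hrp : (0 : ℝ) < r := by linarith
  have hr0 : 0 < r := by omega
  have := (pool hr hw e R hR S hS hGP).bind
    (a := (((R.card + B.card) * (9 * (2 * r ^ 6) ^ 38) : ℕ) : ℝ))
    (G' := fun S' => S' ⊆ S ∧ Split E R B (r ^ (5 + e)) (r ^ s) (Kd * r ^ 2) S') hS ?_
  · refine this.mono (le_of_eq ?_)
    rw [Nat.cast_add]; ring
  rintro S1 hS1 hne1 ⟨-, A, hAR, hAc, hap⟩
  have hA6 : r ≤ r ^ 6 := Nat.le_self_pow (by norm_num) r
  have hA2 : 2000 * r ≤ r ^ 6 := by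
    calc 2000 * r ≤ r * r := Nat.mul_le_mul_right _ hr
      _ = r ^ 2 := by ring
      _ ≤ r ^ 6 := Nat.pow_le_pow_right hr0 (by norm_num)
  set Φ : Finset (Tst ι) := (R ∪ B).biUnion fun x => Tst.loc (insert x A) with hΦ
  have hΦc : Φ.card ≤ (R.card + B.card) * (9 * (2 * r ^ 6) ^ 38) := by
    refine (card_biUnion_le_card_mul _ _ (9 * (2 * r ^ 6) ^ 38) fun x _ => ?_).trans
      (Nat.mul_le_mul_right _ (card_union_le _ _))
    rw [Tst.card_loc]
    refine Nat.mul_le_mul_left _ (Nat.pow_le_pow_left ((card_insert_le _ _).trans ?_) _)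
    omega
  have h0 := (Can.askAll (val := tval) hw Φ S1 hne1).bind (a := 0)
    (G' := fun S' => S' ⊆ S ∧ Split E R B (r ^ (5 + e)) (r ^ s) (Kd * r ^ 2) S') hne1 ?_
  · refine h0.mono ?_
    have : (Φ.card : ℝ) ≤ (((R.card + B.card) * (9 * (2 * r ^ 6) ^ 38) : ℕ) : ℝ) := by
      exact_mod_cast hΦc
    linarith
  rintro S2 hS2 ⟨z0, hz0⟩ ⟨-, hag0⟩
  have hag : ∀ z ∈ S2, Agree Φ z0 z := fun z hz φ hφ => hag0 φ hφ z0 hz0 z hz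
  have hGP2 : ∀ z ∈ S2, GP z := fun z hz => hGP z (hS1 (hS2 hz))
  have hlocR : ∀ ρ ∈ R, Tst.loc (insert ρ A) ⊆ Φ := fun ρ hρ φ hφ =>
    mem_biUnion.2 ⟨ρ, mem_union_left _ hρ, hφ⟩
  have hlocB : ∀ b ∈ B, Tst.loc (insert b A) ⊆ Φ := fun b hb φ hφ =>
    mem_biUnion.2 ⟨b, mem_union_right _ hb, hφ⟩
  refine Can.done _ _ ⟨hS2.trans hS1, ?_⟩ (by simp)
  by_cases hg : ∀ ρ ∈ A, ∀ b ∈ B, 0 ≤ z0 ρ ⬝ᵥ z0 b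
  swap
  · push Not at hg
    obtain ⟨ρ, hρ, b, hb, hneg⟩ := hg
    refine Or.inl (Or.inl ⟨ρ, b, hE ρ (hAR hρ) b hb, fun z hz => ?_⟩)
    have := (hag z hz).neg (φ := Tst.pair ρ b) (hlocB b hb (Tst.pair_mem
      (mem_insert_of_mem hρ) (mem_insert_self _ _))) (by rw [Tst.fval_pair]; exact hneg)
    rwa [Tst.fval_pair] at this
  refine Or.inr ?_
  have hz := hGP2 z0 hz0
  obtain ⟨F, hFA, hF⟩ := Finset.exists_subset_card_eq (s := A) (n := 6) (by omega)
  have hBn : B.Nonempty := card_pos.1 (by rw [hB]; positivity)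
  obtain ⟨X, hXA, hFX, hXc, τ, hτ, s1, s2, -⟩ := exists_good_sample hz hF hFA hBn
    (fun b hb => ⟨fun ρ hρ => hg ρ hρ b hb, hz.six.ne_zero (X := A) (by omega) b⟩) (r := r) hr0
    (by omega)
  have hX6 := six_le hF hFX
  set CS := Cells z0 F X B with hCS
  have hτCS : ∀ b ∈ B, τ b ∈ CS := fun b hb => mem_Cells.2 ⟨b, hb, hτ b hb⟩
  have hconf : ∀ σ ∈ CS, (conf z0 R σ).card ≤ (conf z0 A σ).card * r ^ e + r ^ (5 + e) := by
    intro σ hσ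
    obtain ⟨b, hb, hcell⟩ := mem_Cells.1 hσ
    have h1 := hap z0 (hS2 hz0) (fun i => vt z0 (σ i)) fun i => IsVx.ne_zero hz.six hX6
    have e1 : hit z0 R (fun i => vt z0 (σ i)) = conf z0 R σ := rfl
    have e2 : hit z0 A (fun i => vt z0 (σ i)) = conf z0 A σ := rfl
    rw [e1, e2, hR, hAc] at h1
    push_cast at h1
    have e3 : (r : ℝ) ^ (6 + e) = r ^ e * r ^ 6 := by rw [← pow_add]; congr 1; omega
    have e4 : (r : ℝ) ^ (5 + e) = r ^ e * r ^ 5 := by rw [← pow_add]; congr 1; omega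
    rw [e3] at h1
    have h2 : ((conf z0 R σ).card : ℝ) ≤ (conf z0 A σ).card * r ^ e + r ^ (5 + e) := by
      rw [e4]
      have hq : (0 : ℝ) < r ^ e := by positivity
      generalize (r : ℝ) ^ e = q at *
      refine le_of_mul_le_mul_right ?_ (by positivity : (0 : ℝ) < r ^ 6)
      have e5 : (e : ℝ) * (2 / (r : ℝ) ^ 2) * (q * r ^ 6) * r ^ 6 = (2 * e) * (q * r ^ 4 * r ^ 6) := by
        field_simp
      rw [e5] at h1
      have h3 : (2 * e : ℝ) * (q * r ^ 4 * r ^ 6) ≤ r * (q * r ^ 4 * r ^ 6) := by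
        gcongr; exact_mod_cast he
      nlinarith
    exact_mod_cast h2
  have hsB : r ^ s ≤ B.card := by rw [hB]; exact Nat.pow_le_pow_right hr0 (by omega)
  have huR : r ^ (5 + e) ≤ R.card := by rw [hR]; exact Nat.pow_le_pow_right hr0 (by omega)
  choose T hT1 hT2 hT3 using fun σ : Fin 6 → Code ι =>
    exists_cover (B := B) (t := r ^ s) (by positivity) hsB _ (B.filter fun b => τ b = σ)
      (filter_subset _ _) rfl
  choose U hU1 hU2 hU3 using fun σ : Fin 6 → Code ι =>
    exists_cover (B := R) (t := r ^ (5 + e)) (by positivity) huR _ (conf z0 R σ)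
      (filter_subset _ _) rfl
  refine ⟨CS.biUnion fun σ => U σ ×ˢ T σ, ?_, ?_, ?_⟩
  · have hq0 : 0 < r ^ e := by positivity
    have f0 : ∀ σ ∈ CS, (U σ).card * r ^ 5 ≤ (conf z0 A σ).card + 2 * r ^ 5 := by
      intro σ hσ
      have h1 := (hU3 σ).trans (Nat.add_le_add_right (hconf σ hσ) _)
      have e4 : r ^ (5 + e) = r ^ e * r ^ 5 := by rw [← pow_add]; congr 1; omega
      rw [e4] at h1
      refine Nat.le_of_mul_le_mul_left ?_ hq0
      generalize r ^ e = q at *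
      nlinarith
    have f1 : ∀ σ ∈ CS, (U σ ×ˢ T σ).card * (r ^ 5 * r ^ s) ≤
        ((conf z0 A σ).card + 2 * r ^ 5) * ((B.filter fun b => τ b = σ).card + r ^ s) := by
      intro σ hσ
      rw [card_product]
      calc _ = ((U σ).card * r ^ 5) * ((T σ).card * r ^ s) := by ring
        _ ≤ _ := Nat.mul_le_mul (f0 σ hσ) (hT3 σ)
    have f2 : ∑ σ ∈ CS, (B.filter fun b => τ b = σ).card = r ^ (s + 2) := by
      rw [← hB, Finset.card_eq_sum_card_fiberwise (f := τ) (t := CS) fun b hb => hτCS b hb]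
    have f3 : ∑ σ ∈ CS, (B.filter fun b => τ b = σ).card * (conf z0 A σ).card =
        ∑ b ∈ B, (conf z0 A (τ b)).card := by
      rw [← Finset.sum_fiberwise_of_maps_to (g := τ) (t := CS) fun b hb => hτCS b hb]
      refine Finset.sum_congr rfl fun σ _ => ?_
      rw [Finset.sum_congr rfl fun b hb => by rw [(mem_filter.1 hb).2], sum_const, smul_eq_mul]
    have f4 : CS.card ≤ 2 ^ 30 * (64 * r ^ 2) := by
      refine (card_Cells_le hz hF hFX).trans (Nat.mul_le_mul_left _ ?_)
      calc X.card ^ 2 ≤ (8 * r) ^ 2 := Nat.pow_le_pow_left hXc 2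
        _ = 64 * r ^ 2 := by ring
    have f5 : ∑ b ∈ B, (conf z0 A (τ b)).card ≤ Ks * r ^ (s + 2) * r ^ 5 := by
      rw [hB, hAc] at s2
      have : r * ∑ b ∈ B, (conf z0 A (τ b)).card ≤ r * (Ks * r ^ (s + 2) * r ^ 5) := s2.trans (by
        apply le_of_eq; ring)
      exact Nat.le_of_mul_le_mul_left this hr0
    have f6 : ∑ σ ∈ CS, (conf z0 A σ).card ≤ Ks * r ^ 7 := by
      rw [hAc] at s1; exact s1.trans (by apply le_of_eq; ring)
    have f7 : ∑ σ ∈ CS, ((conf z0 A σ).card + 2 * r ^ 5) *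
        ((B.filter fun b => τ b = σ).card + r ^ s) =
        ∑ b ∈ B, (conf z0 A (τ b)).card + 2 * r ^ 5 * r ^ (s + 2) +
        r ^ s * ∑ σ ∈ CS, (conf z0 A σ).card + 2 * r ^ 5 * r ^ s * CS.card := by
      rw [← f2, ← f3, card_eq_sum_ones CS, mul_sum CS _ (2 * r ^ 5), mul_sum CS _ (r ^ s),
        mul_sum CS _ (2 * r ^ 5 * r ^ s), ← sum_add_distrib,
        ← sum_add_distrib, ← sum_add_distrib]
      exact Finset.sum_congr rfl fun σ _ => by ring
    have f8 : (CS.biUnion fun σ => U σ ×ˢ T σ).card * (r ^ 5 * r ^ s) ≤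
        Kd * r ^ 2 * (r ^ 5 * r ^ s) := by
      calc _ ≤ (∑ σ ∈ CS, (U σ ×ˢ T σ).card) * (r ^ 5 * r ^ s) :=
            Nat.mul_le_mul_right _ card_biUnion_le
        _ ≤ ∑ σ ∈ CS, ((conf z0 A σ).card + 2 * r ^ 5) *
            ((B.filter fun b => τ b = σ).card + r ^ s) := by
          rw [sum_mul]; exact Finset.sum_le_sum f1
        _ ≤ Ks * r ^ (s + 2) * r ^ 5 + 2 * r ^ 5 * r ^ (s + 2) + r ^ s * (Ks * r ^ 7) +
            2 * r ^ 5 * r ^ s * (2 ^ 30 * (64 * r ^ 2)) := by rw [f7]; gcongr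
        _ = _ := by
          unfold Kd; generalize Ks = k
          rw [pow_add r s 2]; ring
    exact Nat.le_of_mul_le_mul_right f8 (by positivity)
  · intro p hp
    obtain ⟨σ, hσ, hp⟩ := mem_biUnion.1 hp
    obtain ⟨p1, p2⟩ := mem_product.1 hp
    exact ⟨(hU1 σ _ p1).1, (hT1 σ _ p2).1, (hU1 σ _ p1).2, (hT1 σ _ p2).2⟩
  · intro S' hS' hres
    by_cases hl : ∃ ρ b, E ρ b ∧ ∀ z ∈ S', z ρ ⬝ᵥ z b < 0
    · exact Or.inl hl
    refine Or.inr fun ρ hρ b hb z hzS => ?_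
    have hzag := hag z (hS' hzS)
    by_cases hc : ρ ∈ conf z0 R (τ b)
    · obtain ⟨c, hcT, hbc⟩ := hT2 (τ b) b (mem_filter.2 ⟨hb, rfl⟩)
      obtain ⟨u, huU, hρu⟩ := hU2 (τ b) ρ hc
      rcases hres (u, c) (mem_biUnion.2 ⟨τ b, hτCS b hb, mem_product.2 ⟨huU, hcT⟩⟩) with h | h
      · exact absurd h hl
      · exact h ρ hρu b hbc z hzS
    · obtain ⟨Ψ, p1, -, p3⟩ := cell_cert hz.six hF hFX (hτ b hb)
      refine p3 z (hGP2 z (hS' hzS)).six (hzag.mono (p1.trans ((Tst.loc_mono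
        (insert_subset_insert _ hXA)).trans (hlocB b hb)))) _ fun i => ?_
      have hd : Tst.det ρ (τ b i) ∈ Φ := hlocR ρ hρ (Tst.det_mem (mem_insert_self _ _)
        ((((hτ b hb).isVx i).1.trans hXA).trans (subset_insert _ _)))
      have := hzag.nonneg hd (by
        rw [Tst.fval_det]
        by_contra hneg
        exact hc (mem_conf.2 ⟨hρ, i, not_le.1 hneg⟩))
      rwa [Tst.fval_det] at this

end LT

namespace LT

open Matrix Finset Code

set_option linter.unusedSectionVars false
set_option linter.unusedVariables false
set_option linter.unusedSimpArgs false

variable {ι : Type*} [DecidableEq ι]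

/-! ### The recursion -/

/-- The constants of the recursion. -/
def Cr : ℕ → ℕ
  | 0 => Kc
  | k + 1 => 2 ^ 50 * (1 + Kd) + Kd ^ 2 * Cr k

/-- The cost of a step is negligible for large sets. -/
lemma step_cost {r j e N M : ℕ} (hr : 2000 ≤ r) (he : e ≤ r) (hej : e ≤ 3 * j - 3)
    (hj : 1 ≤ j) (hN : N ≤ r ^ (3 * j + 3)) (hM : M ≤ r ^ (3 * j + 3)) :
    e * (9 * r ^ (e + 266)) + (N + M) * (9 * (2 * r ^ 6) ^ 38) ≤ 2 ^ 50 * r ^ (3 * j + 264) := by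
  have h1 : e * (9 * r ^ (e + 266)) ≤ 9 * r ^ (3 * j + 264) := by
    calc e * (9 * r ^ (e + 266)) ≤ r * (9 * r ^ (3 * j - 3 + 266)) := by
          gcongr; omega
      _ = 9 * r ^ (3 * j - 3 + 266 + 1) := by ring
      _ = _ := by congr 2; omega
  have h2 : (N + M) * (9 * (2 * r ^ 6) ^ 38) ≤ (18 * 2 ^ 38) * r ^ (3 * j + 264) := by
    calc (N + M) * (9 * (2 * r ^ 6) ^ 38) ≤
          (r ^ (3 * j + 3) + r ^ (3 * j + 3)) * (9 * (2 * r ^ 6) ^ 38) := by gcongr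
      _ = (18 * 2 ^ 38) * r ^ (3 * j + 231) := by
        rw [mul_pow, ← pow_mul, show 3 * j + 231 = 3 * j + 3 + 6 * 38 by omega, pow_add r (3 * j + 3)]
        ring
      _ ≤ _ := by gcongr <;> omega
  have h3 : 9 * r ^ (3 * j + 264) + 18 * 2 ^ 38 * r ^ (3 * j + 264) ≤ 2 ^ 50 * r ^ (3 * j + 264) := by
    rw [← add_mul]; exact Nat.mul_le_mul_right _ (by norm_num)
  omega

/-- A primal and a dual step reduce the size by a factor `r ^ 3` at the price of `O(r ^ 4)`
subproblems; subproblems of size `r ^ (3 * c)` are solved directly. -/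
lemma solve_rec [Fintype ι] {c : ℕ} (hc : 263 ≤ c) {r : ℕ} (hr : 2000 ≤ r) {w : ℝ}
    (hw : (Wu (r ^ c) : ℝ) ≤ w) {E : ι → ι → Prop} (hEs : ∀ ρ b, E ρ b → E b ρ) :
    ∀ (k : ℕ), 6 * (c + k) ≤ r → ∀ R B : Finset ι, R.card = r ^ (3 * (c + k)) →
      B.card = r ^ (3 * (c + k)) → (∀ ρ ∈ R, ∀ b ∈ B, E ρ b) →
      ∀ S : Finset (ι → E6), S.Nonempty → (∀ z ∈ S, GP z) →
      Can tval w (fun S' => S' ⊆ S ∧ Res E R B S')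
        (((Cr k * r ^ (4 * (c + k)) : ℕ) : ℝ) + w * Real.log S.card) S := by
  have hw0 : 0 ≤ w := (Nat.cast_nonneg _).trans hw
  have hr0 : 0 < r := by omega
  intro k
  induction k with
  | zero =>
    intro _ R B hR hB hE S hS hGP
    have h6 : 6 ≤ r ^ c := (by omega : 6 ≤ r).trans (Nat.le_self_pow (by omega) r)
    have := (unit_pairs h6 hw (E := E) (R := R) (B := B) (by rw [hR, ← pow_mul]; congr 1; ring)
      (by rw [hB, ← pow_mul]; congr 1; ring) hE S hS hGP).bind (a := 0)
      (G' := fun S' => S' ⊆ S ∧ Res E R B S') hS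
      (fun S' hS' _ h => Can.done _ _ ⟨hS', h⟩ (by simp))
    refine this.mono (le_of_eq ?_)
    rw [add_zero, Cr, ← pow_mul, show c * 4 = 4 * (c + 0) by ring]
  | succ k ih =>
    intro hk R B hR hB hE S hS hGP
    obtain ⟨j, hj⟩ : ∃ j, j = c + k := ⟨_, rfl⟩
    have hj1 : c + (k + 1) = j + 1 := by omega
    rw [hj1] at hk hR hB ⊢
    rw [← hj] at ih
    have hRc : R.card = r ^ (6 + (3 * j - 3)) := by rw [hR]; congr 1; omega
    have hBc : B.card = r ^ (3 * j + 1 + 2) := by rw [hB]; congr 1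
    have st1 := cut_step hr hw0 (e := 3 * j - 3) (s := 3 * j + 1) (by omega) hRc hBc hE S hS hGP
    have hcost1 := step_cost (e := 3 * j - 3) hr (by omega) le_rfl (by omega)
      (le_of_eq hR : R.card ≤ r ^ (3 * j + 3)) (le_of_eq hB : B.card ≤ r ^ (3 * j + 3))
    have hcost1' : ((_ : ℕ) : ℝ) ≤ ((_ : ℕ) : ℝ) := Nat.cast_le.2 hcost1
    set O : ℕ := 2 ^ 50 * r ^ (3 * j + 264) with hO
    set a : ℕ := Cr k * r ^ (4 * j) with ha
    have fin := Split.solve (T := ((O + Kd * r ^ 2 * a : ℕ) : ℝ)) (T0 := (O : ℝ))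
      (Nat.cast_nonneg _) hS (st1.mono (add_le_add_left hcost1' _)) ?_
    · refine fin.mono (add_le_add_left ?_ _)
      rw [← Nat.cast_mul, ← Nat.cast_add]
      refine Nat.cast_le.2 ?_
      have p1 : O ≤ 2 ^ 50 * r ^ (4 * (j + 1)) := by
        rw [hO]; gcongr; omega
      have p2 : r ^ 2 * O ≤ 2 ^ 50 * r ^ (4 * (j + 1)) := by
        calc r ^ 2 * O = 2 ^ 50 * r ^ (3 * j + 264 + 2) := by rw [hO, pow_add r _ 2]; ring
          _ ≤ _ := by gcongr <;> omega
      calc O + Kd * r ^ 2 * (O + Kd * r ^ 2 * a) = O + Kd * (r ^ 2 * O) + Kd ^ 2 * (r ^ 4 * a) := by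
            ring
        _ ≤ 2 ^ 50 * r ^ (4 * (j + 1)) + Kd * (2 ^ 50 * r ^ (4 * (j + 1))) +
            Kd ^ 2 * (r ^ 4 * a) := by gcongr
        _ = _ := by
          rw [ha, Cr, mul_add 4 j 1, pow_add]
          generalize Kd = κ
          generalize Cr k = κ'
          ring
    · intro R' hR' B' hB' hRc0 hBc0 S' hS' hne'
      have hBc1 : B'.card = r ^ (6 + (3 * j - 5)) := by rw [hBc0]; congr 1; omega
      have hRc1 : R'.card = r ^ (3 * j + 2) := by rw [hRc0]; congr 1; omega
      have hE' : ∀ b ∈ B', ∀ ρ ∈ R', E b ρ := fun b hb ρ hρ =>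
        hEs _ _ (hE ρ (hR' hρ) b (hB' hb))
      have hGP' : ∀ z ∈ S', GP z := fun z hz => hGP z (hS' hz)
      have st2 := cut_step hr hw0 (e := 3 * j - 5) (s := 3 * j) (by omega) hBc1 hRc1 hE' S' hne' hGP'
      have hcost2 := step_cost (e := 3 * j - 5) hr (by omega) (by omega : 3 * j - 5 ≤ 3 * j - 3)
        (by omega)
        (by rw [hBc0]; exact Nat.pow_le_pow_right hr0 (by omega) : B'.card ≤ r ^ (3 * j + 3))
        (by rw [hRc1]; exact Nat.pow_le_pow_right hr0 (by omega) : R'.card ≤ r ^ (3 * j + 3))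
      have hcost2' : ((_ : ℕ) : ℝ) ≤ ((_ : ℕ) : ℝ) := Nat.cast_le.2 hcost2
      have fin2 := Split.solve (T := (a : ℝ)) (T0 := (O : ℝ))
        (Nat.cast_nonneg _) hne' (st2.mono (add_le_add_left hcost2' _))
        (fun R1 hR1 B1 hB1 hR1c hB1c S1 hS1 hne1 => ih (by omega) R1 B1
          (by rw [hR1c]; congr 1; omega) hB1c
          (fun ρ hρ b hb => hE' ρ (hR1 hρ) b (hB1 hb)) S1 hne1 fun z hz => hGP' z (hS1 hz))
      have := fin2.bind (a := 0) (G' := fun S'' => S'' ⊆ S' ∧ Res E R' B' S'') hne'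
        (fun S'' hS'' _ h => Can.done _ _ ⟨hS'', h.2.symm⟩ (by simp))
      refine this.mono (le_of_eq ?_)
      push_cast
      ring

end LT

namespace LT

open Matrix Finset Code

set_option linter.unusedSectionVars false
set_option linter.unusedVariables false
set_option linter.unusedSimpArgs false

variable {ι : Type*} [DecidableEq ι]

/-! ### The decision procedure for generic configurations -/

section poly
variable {σ : Type*}

lemma PolyLE.prod {κ : Type*} (s : Finset κ) {f : κ → (σ → ℝ) → ℝ}
    (hf : ∀ i ∈ s, PolyLE 1 (f i)) : PolyLE s.card fun x => ∏ i ∈ s, f i x := by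
  classical
  induction s using Finset.induction_on with
  | empty => simpa using PolyLE.const 1
  | insert a s ha ih =>
    rw [card_insert_of_notMem ha, add_comm]
    have := (hf a (by simp)).mul (ih fun i hi => hf i (by simp [hi]))
    simpa only [prod_insert ha] using this

lemma PolyLE.det {n : ℕ} (M : (σ → ℝ) → Matrix (Fin n) (Fin n) ℝ)
    (hM : ∀ i j, PolyLE 1 fun x => M x i j) : PolyLE n fun x => (M x).det := by
  simp only [Matrix.det_apply]
  refine PolyLE.sum _ fun π _ => ?_
  have h1 : PolyLE n fun x => ∏ i, M x (π i) i := by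
    simpa using PolyLE.prod univ fun i _ => hM (π i) i
  rcases Int.units_eq_one_or (Equiv.Perm.sign π) with h | h
  · simpa [h] using h1
  · simpa [h] using h1.neg

lemma PolyLE.dot {D E : ℕ} {u v : (σ → ℝ) → E6} (hu : ∀ k, PolyLE D fun x => u x k)
    (hv : ∀ k, PolyLE E fun x => v x k) : PolyLE (D + E) fun x => u x ⬝ᵥ v x := by
  simp only [dotProduct]
  exact PolyLE.sum _ fun k _ => (hu k).mul (hv k)

lemma PolyLE.vtx {w : (σ → ℝ) → Fin 5 → E6} (hw : ∀ j k, PolyLE 1 fun x => w x j k) (k : Fin 6) :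
    PolyLE 5 fun x => vtx (w x) k := by
  have h := PolyLE.det (fun x => (Matrix.of (w x)).submatrix id k.succAbove)
    fun i j => hw i (k.succAbove j)
  exact ((PolyLE.const (D := 0) ((-1) ^ (k : ℕ))).mul h).mono (by norm_num)

lemma PolyLE.chain {z : (σ → ℝ) → ι → E6} (hz : ∀ i k, PolyLE 1 fun x => z x i k) (hs : ℕ → ι)
    {v : (σ → ℝ) → ℕ → E6} (hv : ∀ i k, PolyLE 5 fun x => v x i k) (b : ι) : ∀ (i : ℕ) (k : Fin 6),
    PolyLE (1 + 6 * i) fun x => Tst.chain (z x) hs (v x) b i k := by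
  intro i
  induction i with
  | zero => intro k; simpa [Tst.chain] using hz b k
  | succ i ih =>
    intro k
    simp only [Tst.chain, Pi.sub_apply, Pi.smul_apply, smul_eq_mul]
    refine PolyLE.sub ?_ ?_
    · exact ((PolyLE.dot (hz (hs i)) (hv i)).mul (ih k)).mono (by omega)
    · exact ((PolyLE.dot (hz (hs i)) ih).mul (hv i k)).mono (by omega)

end poly

/-- The configuration with the given coordinates. -/
def unfl (x : ι × Fin 6 → ℝ) : ι → E6 := fun i k => x (i, k)

lemma fval_poly (φ : Tst ι) : PolyLE 40 fun x : ι × Fin 6 → ℝ => φ.fval (unfl x) := by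
  have hz : ∀ i k, PolyLE 1 fun x : ι × Fin 6 → ℝ => unfl x i k := fun i k =>
    PolyLE.coord le_rfl (i, k)
  have hv : ∀ (w : Fin 5 → ι) k, PolyLE 5 fun x : ι × Fin 6 → ℝ => vtx (fun j => unfl x (w j)) k :=
    fun w k => PolyLE.vtx (fun j k => hz (w j) k) k
  obtain ⟨s | i, s'⟩ := φ
  · cases s
    · simp only [Tst.fval]
      refine PolyLE.sub ?_ ?_
      · exact ((PolyLE.dot (hz _) (hv _)).mul (PolyLE.dot (hz _) (hv _))).mono (by norm_num)
      · exact ((PolyLE.dot (hz _) (hv _)).mul (PolyLE.dot (hz _) (hv _))).mono (by norm_num)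
    · simp only [Tst.fval]
      exact (PolyLE.dot (hz _) (hv _)).mono (by norm_num)
  · simp only [Tst.fval]
    refine (PolyLE.dot (hz _) (PolyLE.chain hz _ (fun i k => ?_) _ _)).mono (?_ : _ ≤ 40)
    · exact hv _ k
    · have := i.2; omega

/-- The answer set: the truth value of `p` is known. -/
def Known {X : Type*} (p : X → Prop) (S : Set X) : Prop := ∃ b : Bool, ∀ x ∈ S, (p x ↔ b = true)

lemma Known.anti {X : Type*} {p : X → Prop} {S S' : Set X} (h : Known p S) (hS : S' ⊆ S) :
    Known p S' := ⟨h.choose, fun x hx => h.choose_spec x (hS hx)⟩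

/-- A problem with many candidates, restricted to one representative for each sign pattern. -/
lemma dec_of_can [Fintype ι] {w T : ℝ} (hw : 0 ≤ w) {p : (ι → E6) → Prop}
    {G : Finset (ι → E6) → Prop}
    (hp : ∀ z z' : ι → E6, Agree univ z z' → (p z ↔ p z'))
    (hG : ∀ S : Finset (ι → E6), G S → ∃ b : Bool, ∀ z ∈ S, (p z ↔ b = true))
    (H : ∀ S : Finset (ι → E6), S.Nonempty → (∀ z ∈ S, GP z) →
      Can tval w G (T + w * Real.log S.card) S) :
    Dec (PolyLE 40) (Known fun x : ι × Fin 6 → ℝ => p (unfl x))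
      ⌊T + w * (6 * Fintype.card ι * Real.log (4 * (9 * (Fintype.card ι) ^ 38 * 40) + 1))⌋₊
      {x | GP (unfl x)} := by
  classical
  let π : (ι → E6) → (Tst ι → SignType) := fun z φ => tval φ z
  have hinv : ∀ s : Tst ι → SignType, ∃ z : ι → E6, (∃ z', GP z' ∧ π z' = s) → GP z ∧ π z = s := by
    intro s
    by_cases h : ∃ z', GP z' ∧ π z' = s
    · exact ⟨h.choose, fun _ => h.choose_spec⟩
    · exact ⟨0, fun h' => absurd h' h⟩
  choose c hc using hinv
  set S0 : Finset (ι → E6) := (univ.filter fun s => ∃ z', GP z' ∧ π z' = s).image c with hS0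
  have hS0m : ∀ z, GP z → c (π z) ∈ S0 ∧ π (c (π z)) = π z := fun z hz =>
    ⟨mem_image.2 ⟨π z, mem_filter.2 ⟨mem_univ _, z, hz, rfl⟩, rfl⟩, (hc (π z) ⟨z, hz, rfl⟩).2⟩
  have hS0G : ∀ z ∈ S0, GP z ∧ c (π z) = z := by
    intro z hz
    obtain ⟨s, hs, rfl⟩ := mem_image.1 hz
    have := hc s (mem_filter.1 hs).2
    exact ⟨this.1, by rw [this.2]⟩
  by_cases hne : S0.Nonempty
  swap
  · refine Dec.done _ _ ⟨true, fun x hx => absurd ⟨_, (hS0m _ hx).1⟩ hne⟩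
  have hcard : S0.card ≤ (4 * (9 * (Fintype.card ι) ^ 38 * 40) + 1) ^ (Fintype.card ι * 6) := by
    choose P hP1 hP2 using fun φ : Tst ι => fval_poly φ
    have hcu : Fintype.card (Tst ι) = 9 * Fintype.card ι ^ 38 := by
      simp [Fintype.card_prod, Fintype.card_sum]
    have := card_patterns_le P 40 hP1 (S0.image fun z (q : ι × Fin 6) => z q.1 q.2) ?_
    · rw [hcu, Fintype.card_prod, Fintype.card_fin] at this
      refine le_trans (le_of_eq (card_image_of_injective S0 ?_).symm) this
      intro z z' h
      funext i k
      exact congrFun h (i, k)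
    · intro x hx y hy h
      obtain ⟨z, hz, rfl⟩ := mem_image.1 hx
      obtain ⟨z', hz', rfl⟩ := mem_image.1 hy
      have : π z = π z' := by
        funext φ
        have h3 := h φ
        rw [← hP2, ← hP2] at h3
        exact h3
      rw [← (hS0G z hz).2, ← (hS0G z' hz').2, this]
  have h1 := (H S0 hne fun z hz => (hS0G z hz).1).toDec (X := ι × Fin 6 → ℝ) (P := PolyLE 40) hw
    (fun φ x => φ.fval (unfl x)) fval_poly (fun x => c (π (unfl x))) hne
  have h2 := h1.2 {x | GP (unfl x)} fun x hx => ⟨(hS0m _ hx).1, fun φ => by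
    have := congrFun (hS0m _ hx).2 φ
    exact this.symm⟩
  have h3 := h2.imp (G' := Known fun x : ι × Fin 6 → ℝ => p (unfl x)) ?_
  · refine h3.mono (Nat.floor_mono ?_)
    refine add_le_add_right (mul_le_mul_of_nonneg_left ?_ hw) _
    have hp0 : (0 : ℝ) < S0.card := by exact_mod_cast hne.card_pos
    have : (S0.card : ℝ) ≤ (4 * (9 * (Fintype.card ι : ℝ) ^ 38 * 40) + 1) ^ (Fintype.card ι * 6) := by
      exact_mod_cast hcard
    refine (Real.log_le_log hp0 this).trans (le_of_eq ?_)
    rw [Real.log_pow]; push_cast; ring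
  · rintro U - (rfl | ⟨S', hS', hU⟩)
    · exact ⟨true, by simp⟩
    · obtain ⟨b, hb⟩ := hG S' hS'
      refine ⟨b, fun x hx => ?_⟩
      rw [← hb _ (hU x hx).1]
      exact hp _ _ fun φ _ => (hU x hx).2 φ

end LT

/-! ### The cost for generic configurations -/

namespace LT

open Matrix Finset Code

set_option linter.unusedSectionVars false
set_option linter.unusedVariables false
set_option linter.unusedSimpArgs false

/-- The two indices have different colours. -/
def Opp {N : ℕ} (a b : Fin N ⊕ Fin N) : Prop :=
  (a.isLeft ∧ b.isRight) ∨ (a.isRight ∧ b.isLeft)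

/-- Some red vector and some blue vector have a negative inner product. -/
def Bad {N : ℕ} (z : Fin N ⊕ Fin N → E6) : Prop := ∃ i j, z (.inl i) ⬝ᵥ z (.inr j) < 0

lemma Bad_of_opp {N : ℕ} {z : Fin N ⊕ Fin N → E6} {a b : Fin N ⊕ Fin N} (h : Opp a b)
    (hz : z a ⬝ᵥ z b < 0) : Bad z := by
  rcases a with i | i <;> rcases b with j | j <;> simp [Opp] at h
  · exact ⟨i, j, hz⟩
  · exact ⟨j, i, by rwa [dotProduct_comm]⟩

lemma Wu_le {r : ℕ} (hr : 1 ≤ r) (c : ℕ) : Wu (r ^ c) ≤ (9 * 2 ^ 38 + Kc + 3) * r ^ (114 * c) := by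
  have h1 : 9 * (2 * (r ^ c) ^ 3) ^ 38 = 9 * 2 ^ 38 * r ^ (114 * c) := by
    rw [mul_pow, ← pow_mul, ← pow_mul, mul_assoc]
    congr 3
    ring
  have h2 : (r ^ c) ^ 4 ≤ r ^ (114 * c) := by
    rw [← pow_mul]; exact Nat.pow_le_pow_right hr (by omega)
  have h3 : 1 ≤ r ^ (114 * c) := Nat.one_le_pow _ _ hr
  rw [Wu, h1, add_mul, add_mul]
  have h4 := Nat.mul_le_mul_left Kc h2
  omega

lemma log_bound {r q N : ℕ} (hr : 1 ≤ r) (hN : N = r ^ q) :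
    Real.log (4 * (9 * ((N + N : ℕ) : ℝ) ^ 38 * 40) + 1) ≤ (1479 + 38 * q) * r := by
  have hr' : (1 : ℝ) ≤ r := by exact_mod_cast hr
  have hN1 : (1 : ℝ) ≤ N := by rw [hN]; push_cast; exact one_le_pow₀ hr'
  have hlr : Real.log r ≤ r := (Real.log_le_sub_one_of_pos (by linarith)).trans (by linarith)
  have h1 : 4 * (9 * ((N + N : ℕ) : ℝ) ^ 38 * 40) + 1 ≤ 1441 * (2 * N) ^ 38 := by
    have : (1 : ℝ) ≤ (2 * N) ^ 38 := one_le_pow₀ (by linarith)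
    push_cast
    rw [← two_mul]; linarith
  refine (Real.log_le_log (by positivity) h1).trans ?_
  rw [Real.log_mul (by norm_num) (by positivity), Real.log_pow, Real.log_mul (by norm_num)
    (by positivity), hN]
  push_cast
  rw [Real.log_pow]
  have h2 : Real.log 1441 ≤ 1441 := (Real.log_le_sub_one_of_pos (by norm_num)).trans (by norm_num)
  have h3 : Real.log 2 ≤ 1 := by have := Real.log_two_lt_d9; linarith
  have h4 : (q : ℝ) * Real.log r ≤ q * r := by gcongr
  nlinarith

/-- For configurations in general position, `N = r ^ (3 * p)` red and blue vectors are tested at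
cost `O(r ^ (4 * p))`. -/
lemma core_generic : ∃ p C r0 : ℕ, 1 ≤ p ∧ ∀ r, r0 ≤ r → ∀ N, N = r ^ (3 * p) →
    Dec (PolyLE 40) (Known fun x : (Fin N ⊕ Fin N) × Fin 6 → ℝ => Bad (unfl x))
      (C * r ^ (4 * p)) {x | GP (unfl x)} := by
  obtain ⟨c, hc⟩ : ∃ c : ℕ, 263 ≤ c := ⟨263, le_rfl⟩
  -- `w` is of order `r ^ (114 * c)` and the entropy of order `r ^ (3 * p + 1)`, so `p ≥ 114 * c + 1`
  -- makes their product at most of order `r ^ (4 * p)`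
  obtain ⟨k, hk⟩ : ∃ k, k = 113 * c + 1 := ⟨_, rfl⟩
  obtain ⟨p, hp⟩ : ∃ p, p = c + k := ⟨_, rfl⟩
  refine ⟨p, Cr k + (9 * 2 ^ 38 + Kc + 3) * (12 * (1479 + 38 * (3 * p))), 2000 + 6 * p, by omega,
    fun r hr N hN => ?_⟩
  have hr1 : 1 ≤ r := by omega
  have main := dec_of_can (ι := Fin N ⊕ Fin N) (w := Wu (r ^ c)) (T := ((Cr k * r ^ (4 * p) : ℕ) : ℝ))
    (p := Bad) (G := Res Opp (univ.image Sum.inl) (univ.image Sum.inr)) (Nat.cast_nonneg _)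
    ?_ ?_ ?_
  · refine main.mono ?_
    rw [Fintype.card_sum, Fintype.card_fin]
    refine Nat.floor_le_of_le ?_
    have h1 := log_bound hr1 hN
    have h2 : (Wu (r ^ c) : ℝ) ≤ (((9 * 2 ^ 38 + Kc + 3) * r ^ (114 * c) : ℕ) : ℝ) := by
      exact_mod_cast Wu_le hr1 c
    have h3 : (0 : ℝ) ≤ 6 * ((N + N : ℕ) : ℝ) *
        Real.log (4 * (9 * ((N + N : ℕ) : ℝ) ^ 38 * 40) + 1) := by
      refine mul_nonneg (by positivity) (Real.log_nonneg ?_)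
      have : (0 : ℝ) ≤ 4 * (9 * ((N + N : ℕ) : ℝ) ^ 38 * 40) := by positivity
      linarith
    have h4 : 6 * ((N + N : ℕ) : ℝ) * Real.log (4 * (9 * ((N + N : ℕ) : ℝ) ^ 38 * 40) + 1) ≤
        6 * ((N + N : ℕ) : ℝ) * ((1479 + 38 * (3 * p : ℕ)) * r) :=
      mul_le_mul_of_nonneg_left h1 (by positivity)
    have h5 := mul_le_mul h2 h4 h3 (Nat.cast_nonneg _)
    refine (add_le_add_right h5 _).trans (le_of_eq ?_)
    rw [hN]
    generalize 9 * 2 ^ 38 + Kc + 3 = κ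
    generalize Cr k = κ'
    have e : r ^ (4 * p) = r ^ (114 * c) * r * r ^ (3 * p) := by
      rw [← pow_succ, ← pow_add]; congr 1; omega
    rw [e]
    push_cast
    ring
  · intro z z' h
    refine exists_congr fun i => exists_congr fun j => ?_
    have := h (Tst.pair (.inl i) (.inr j)) (mem_univ _)
    rw [Tst.fval_pair, Tst.fval_pair] at this
    rw [← sign_eq_neg_one_iff, this, sign_eq_neg_one_iff]
  · rintro S (⟨a, b, hE, h⟩ | h)
    · exact ⟨true, fun z hz => by simpa using Bad_of_opp hE (h z hz)⟩
    · refine ⟨false, fun z hz => ?_⟩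
      simp only [Bool.false_eq_true, iff_false, Bad, not_exists, not_lt]
      intro i j
      exact h _ (mem_image_of_mem _ (mem_univ _)) _ (mem_image_of_mem _ (mem_univ _)) z hz
  · intro S hS hGP
    have hcard : ∀ f : Fin N → Fin N ⊕ Fin N, Function.Injective f →
        (univ.image f).card = r ^ (3 * (c + k)) := fun f hf => by
      rw [card_image_of_injective _ hf, card_univ, Fintype.card_fin, hN, hp]
    have := (solve_rec hc (by omega : 2000 ≤ r) (w := Wu (r ^ c)) le_rfl (E := Opp (N := N))
      (fun a b h => ?_) k (by omega) (univ.image Sum.inl) (univ.image Sum.inr)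
      (hcard _ Sum.inl_injective) (hcard _ Sum.inr_injective) ?_ S hS hGP).bind (a := 0)
      (G' := Res Opp (univ.image Sum.inl) (univ.image Sum.inr)) hS
      (fun S' _ _ h => Can.done _ _ h.2 (by simp))
    · rw [add_zero, ← hp] at this
      exact this
    · rcases h with h | h
      · exact Or.inr ⟨h.2, h.1⟩
      · exact Or.inl ⟨h.2, h.1⟩
    · intro ρ hρ b hb
      obtain ⟨i, -, rfl⟩ := mem_image.1 hρ
      obtain ⟨j, -, rfl⟩ := mem_image.1 hb
      exact Or.inl ⟨rfl, rfl⟩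

end LT

namespace LT

open Matrix Finset Code

set_option linter.unusedSectionVars false
set_option linter.unusedVariables false
set_option linter.unusedSimpArgs false

/-! ### Perturbation into general position -/

section generic
variable {ι : Type*} [DecidableEq ι]

/-- Finitely many polynomial functions, none identically zero, have a common non-zero. -/
lemma exists_generic {σ κ : Type*} [Finite κ] (g : κ → (σ → ℝ) → ℝ) (hg : ∀ k, ∃ D, PolyLE D (g k))
    (hne : ∀ k, ∃ x, g k x ≠ 0) : ∃ x, ∀ k, g k x ≠ 0 := by
  classical
  have := Fintype.ofFinite κ
  choose D p hp hpe using hg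
  have hP : (∏ k, p k) ≠ 0 := by
    refine Finset.prod_ne_zero_iff.2 fun k _ h => ?_
    obtain ⟨x, hx⟩ := hne k
    exact hx (by rw [hpe, h, map_zero])
  by_contra hcon
  push Not at hcon
  refine hP (MvPolynomial.funext fun x => ?_)
  obtain ⟨k, hk⟩ := hcon x
  rw [map_prod, map_zero]
  exact Finset.prod_eq_zero (mem_univ k) (by rw [← hpe, hk])

/-- The matrix whose non-singularity expresses the second general position condition; its first
row is scaled by `t`. -/
def botM (t : ℝ) (z : ι → E6) (F : Finset ι) (u : Fin 4 → ι) : Matrix (Fin 6) (Fin 6) ℝ :=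
  Matrix.of (Fin.cons (Pi.single 0 t) (Fin.cons (∑ f ∈ F, z f) (z ∘ u)) : Fin 6 → E6)

lemma det_ne_zero_of_ker {n : ℕ} {M : Matrix (Fin n) (Fin n) ℝ} (h : ∀ p, M *ᵥ p = 0 → p = 0) :
    M.det ≠ 0 := by
  intro hM
  obtain ⟨v, hv, hv'⟩ := Matrix.exists_mulVec_eq_zero_iff.2 hM
  exact hv (h v hv')

/-- Generic configurations, described by determinants. -/
def Gen (z : ι → E6) : Prop :=
  (∀ s : Fin 6 → ι, Function.Injective s → (Matrix.of (z ∘ s)).det ≠ 0) ∧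
  ∀ F : Finset ι, F.card = 6 → ∀ u : Fin 4 → ι, Function.Injective u → (botM 1 z F u).det ≠ 0

lemma exists_gen [Fintype ι] : ∃ z : ι → E6, Gen z := by
  have hz : ∀ i k, PolyLE 1 fun x : ι × Fin 6 → ℝ => unfl x i k := fun i k =>
    PolyLE.coord le_rfl (i, k)
  let g : {s : Fin 6 → ι // Function.Injective s} ⊕
      {q : Finset ι × (Fin 4 → ι) // q.1.card = 6 ∧ Function.Injective q.2} →
      (ι × Fin 6 → ℝ) → ℝ := fun k x => match k with
    | .inl s => (Matrix.of (unfl x ∘ s.1)).det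
    | .inr q => (botM 1 (unfl x) q.1.1 q.1.2).det
  suffices h : ∃ x, ∀ k, g k x ≠ 0 by
    obtain ⟨x, hx⟩ := h
    exact ⟨unfl x, fun s hs => hx (.inl ⟨s, hs⟩), fun F hF u hu => hx (.inr ⟨(F, u), hF, hu⟩)⟩
  refine exists_generic g ?_ ?_
  · rintro (s | q)
    · exact ⟨6, PolyLE.det (fun x => Matrix.of (unfl x ∘ s.1)) fun i j => hz _ _⟩
    · refine ⟨6, PolyLE.det (fun x => botM 1 (unfl x) q.1.1 q.1.2) fun i j => ?_⟩
      refine Fin.cases ?_ (fun i => Fin.cases ?_ (fun i => ?_) i) i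
      · exact PolyLE.const _
      · simp only [botM, Matrix.of_apply, Fin.cons_succ, Fin.cons_zero, Finset.sum_apply]
        exact PolyLE.sum _ fun f _ => hz _ _
      · exact hz _ _
  · rintro (⟨s, hs⟩ | ⟨⟨F, u⟩, hF, hu⟩)
    · refine ⟨fun q => if s q.2 = q.1 then 1 else 0, ?_⟩
      have : (Matrix.of (unfl (fun q : ι × Fin 6 => if s q.2 = q.1 then (1 : ℝ) else 0) ∘ s)) = 1 := by
        ext i j
        simp [unfl, Matrix.one_apply, hs.eq_iff, eq_comm]
      change (Matrix.of (unfl (fun q : ι × Fin 6 => if s q.2 = q.1 then (1 : ℝ) else 0) ∘ s)).det ≠ 0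
      rw [this, Matrix.det_one]
      exact one_ne_zero
    · let w : ι → E6 := fun j => Fin.cons 0 (Fin.cons (if j ∈ univ.image u then 0 else 1)
        (fun k : Fin 4 => if u k = j then 1 else 0))
      refine ⟨fun q => w q.1 q.2, ?_⟩
      change (botM 1 w F u).det ≠ 0
      refine det_ne_zero_of_ker fun p hp => ?_
      have h0 : p 0 = 0 := by
        have := congrFun hp 0
        simpa [botM, Matrix.mulVec] using this
      have h2 : ∀ k : Fin 4, p k.succ.succ = 0 := by
        intro k
        have := congrFun hp k.succ.succ
        simpa [botM, Matrix.mulVec, dotProduct, Fin.sum_univ_succ (n := 5), Fin.sum_univ_succ (n := 4),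
          w, h0, hu.eq_iff] using this
      have h1 : p 1 = 0 := by
        have := congrFun hp 1
        have e : ∀ v : E6, v ⬝ᵥ p = v 1 * p 1 := by
          intro v
          rw [dotProduct, Fin.sum_univ_succ, Fin.sum_univ_succ]
          simp only [h2, h0]
          simp
        have h3 : (∑ f ∈ F, w f) ⬝ᵥ p = 0 := this
        rw [e, Finset.sum_apply] at h3
        have h4 : (∑ f ∈ F, w f 1) ≠ 0 := by
          have : ∀ f, w f 1 = if f ∈ univ.image u then 0 else 1 := fun f => rfl
          simp only [this]
          rw [Finset.sum_ite]
          simp only [sum_const_zero, zero_add, sum_const, nsmul_eq_mul, mul_one]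
          have hF' : F.card = 6 := hF
          have hc : (univ.image u).card ≤ 4 := card_image_le.trans (by simp)
          have := Finset.le_card_sdiff (univ.image u) F
          rw [Finset.sdiff_eq_filter] at this
          have : 0 < (F.filter fun f => f ∉ univ.image u).card := by omega
          exact_mod_cast this.ne'
        exact (mul_eq_zero.1 h3).resolve_left h4
      ext k
      refine Fin.cases h0 (fun k => Fin.cases h1 (fun k => h2 k) k) k

lemma eventually_det {n : ℕ} (M0 M1 M2 : Matrix (Fin n) (Fin n) ℝ) (h : M2.det ≠ 0) :
    ∀ᶠ ε in nhdsWithin (0 : ℝ) (Set.Ioi 0), (M0 + ε • M1 + ε ^ 2 • M2).det ≠ 0 := by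
  let Q : Polynomial ℝ := (Matrix.of fun i j => Polynomial.C (M0 i j) +
    Polynomial.X * Polynomial.C (M1 i j) + Polynomial.X ^ 2 * Polynomial.C (M2 i j)).det
  have hQ : ∀ ε, Q.eval ε = (M0 + ε • M1 + ε ^ 2 • M2).det := by
    intro ε
    have := RingHom.map_det (Polynomial.evalRingHom ε) (Matrix.of fun i j => Polynomial.C (M0 i j) +
      Polynomial.X * Polynomial.C (M1 i j) + Polynomial.X ^ 2 * Polynomial.C (M2 i j))
    simp only [Polynomial.coe_evalRingHom] at this
    rw [show Q.eval ε = _ from this]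
    congr 1
    ext i j
    simp
    ring
  have hQ0 : Q ≠ 0 := by
    intro hz
    have hc : Continuous fun η : ℝ => (η ^ 2 • M0 + η • M1 + M2).det := by
      refine Continuous.matrix_det ?_
      fun_prop
    have h1 : ∀ᶠ η in nhdsWithin (0 : ℝ) (Set.Ioi 0), (η ^ 2 • M0 + η • M1 + M2).det ≠ 0 := by
      refine (hc.continuousAt.eventually_ne ?_).filter_mono nhdsWithin_le_nhds
      simpa using h
    obtain ⟨η, hη, hη0⟩ := (h1.and self_mem_nhdsWithin).exists
    have hη0 : (0 : ℝ) < η := hη0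
    apply hη
    have h2 := hQ η⁻¹
    rw [hz, Polynomial.eval_zero] at h2
    have h3 : η ^ 2 • M0 + η • M1 + M2 = η ^ 2 • (M0 + η⁻¹ • M1 + η⁻¹ ^ 2 • M2) := by
      ext i j
      simp only [Matrix.add_apply, Matrix.smul_apply, smul_eq_mul]
      field_simp
    rw [h3, Matrix.det_smul, ← h2, mul_zero]
  have := eventually_sign_poly Q Q.natTrailingDegree
    (fun i hi => Polynomial.coeff_eq_zero_of_lt_natTrailingDegree hi)
    (Polynomial.trailingCoeff_nonzero_iff_nonzero.2 hQ0)
  filter_upwards [this] with ε hε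
  rw [← hQ]
  intro h0
  rw [h0, sign_zero] at hε
  exact (Polynomial.trailingCoeff_nonzero_iff_nonzero.2 hQ0) (sign_eq_zero_iff.1 hε.symm)

lemma eventually_GP [Fintype ι] (z0 z1 z2 : ι → E6) (h : Gen z2) :
    ∀ᶠ ε in nhdsWithin (0 : ℝ) (Set.Ioi 0), GP fun i => z0 i + ε • z1 i + ε ^ 2 • z2 i := by
  have h1 : ∀ s : {s : Fin 6 → ι // Function.Injective s},
      ∀ᶠ ε in nhdsWithin (0 : ℝ) (Set.Ioi 0),
        (Matrix.of ((fun i => z0 i + ε • z1 i + ε ^ 2 • z2 i) ∘ s.1)).det ≠ 0 := by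
    intro s
    exact eventually_det (Matrix.of (z0 ∘ s.1)) (Matrix.of (z1 ∘ s.1)) (Matrix.of (z2 ∘ s.1))
      (h.1 s.1 s.2)
  have h2 : ∀ q : {q : Finset ι × (Fin 4 → ι) // q.1.card = 6 ∧ Function.Injective q.2},
      ∀ᶠ ε in nhdsWithin (0 : ℝ) (Set.Ioi 0),
        (botM (ε ^ 2) (fun i => z0 i + ε • z1 i + ε ^ 2 • z2 i) q.1.1 q.1.2).det ≠ 0 := by
    intro q
    have := eventually_det (botM 0 z0 q.1.1 q.1.2) (botM 0 z1 q.1.1 q.1.2) (botM 1 z2 q.1.1 q.1.2)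
      (h.2 _ q.2.1 _ q.2.2)
    filter_upwards [this] with ε hε
    convert hε using 2
    ext i j
    refine Fin.cases ?_ (fun i => Fin.cases ?_ (fun i => ?_) i) i
    · refine Fin.cases ?_ (fun j => ?_) j <;> simp [botM]
    · simp [botM, Finset.sum_add_distrib, Finset.mul_sum]
    · simp [botM]
  filter_upwards [Filter.eventually_all.2 h1, Filter.eventually_all.2 h2] with ε e1 e2
  refine ⟨fun s hs => e1 ⟨s, hs⟩, fun F J hF hJ p hp0 hF0 hJ0 => ?_⟩
  by_contra hp
  refine e2 ⟨(F, enum J hJ), hF, enum_inj J hJ⟩ (Matrix.exists_mulVec_eq_zero_iff.1 ⟨p, hp, ?_⟩)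
  ext i
  refine Fin.cases ?_ (fun i => Fin.cases ?_ (fun i => ?_) i) i
  · simp [botM, Matrix.mulVec, hp0]
  · change (∑ f ∈ F, _) ⬝ᵥ p = 0
    rw [sum_dotProduct]
    exact hF0
  · exact hJ0 _ (enum_mem J hJ i)

end generic
end LT

/-! ### Degenerate configurations -/

namespace LT

open Matrix Finset Code

set_option linter.unusedSectionVars false
set_option linter.unusedVariables false
set_option linter.unusedSimpArgs false

/-- The perturbation of order `ε` along `f` breaks ties in favour of non-negativity, and the
perturbation of order `ε²` along `y`, `y'` does not matter. -/
lemma eventually_dot (a f b y y' : E6) (h : 0 < f ⬝ᵥ b) :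
    ∀ᶠ ε in nhdsWithin (0 : ℝ) (Set.Ioi 0),
      ((a + ε • f + ε ^ 2 • y) ⬝ᵥ (b + ε • 0 + ε ^ 2 • y') < 0 ↔ a ⬝ᵥ b < 0) := by
  have e : ∀ ε : ℝ, (a + ε • f + ε ^ 2 • y) ⬝ᵥ (b + ε • 0 + ε ^ 2 • y') = a ⬝ᵥ b + ε * (f ⬝ᵥ b +
      ε * (a ⬝ᵥ y' + y ⬝ᵥ b + ε * (f ⬝ᵥ y') + ε ^ 2 * (y ⬝ᵥ y'))) := by
    intro ε
    simp only [smul_zero, add_zero, add_dotProduct, dotProduct_add, smul_dotProduct,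
      dotProduct_smul, smul_eq_mul]
    ring
  by_cases hab : a ⬝ᵥ b < 0
  · have hc : Continuous fun ε : ℝ => (a ⬝ᵥ b + ε * (f ⬝ᵥ b +
      ε * (a ⬝ᵥ y' + y ⬝ᵥ b + ε * (f ⬝ᵥ y') + ε ^ 2 * (y ⬝ᵥ y')))) := by fun_prop
    have := (hc.continuousAt (x := 0)).eventually_lt_const (u := 0) (by simpa using hab)
    filter_upwards [this.filter_mono nhdsWithin_le_nhds] with ε hε
    rw [e]
    exact ⟨fun _ => hab, fun _ => hε⟩
  · have hc : Continuous fun ε : ℝ => (f ⬝ᵥ b +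
      ε * (a ⬝ᵥ y' + y ⬝ᵥ b + ε * (f ⬝ᵥ y') + ε ^ 2 * (y ⬝ᵥ y'))) := by fun_prop
    have := (hc.continuousAt (x := 0)).eventually_const_lt (u := 0) (by simpa using h)
    filter_upwards [this.filter_mono nhdsWithin_le_nhds, self_mem_nhdsWithin] with ε hε h0
    rw [e]
    have h0 : (0 : ℝ) < ε := h0
    refine ⟨fun h' => ?_, fun h' => absurd h' hab⟩
    have := mul_pos h0 hε
    linarith

lemma exists_surj {ι : Type*} {R : Finset ι} (hR : R.Nonempty) {N : ℕ} (h : R.card ≤ N) :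
    ∃ e : Fin N → ι, (∀ i, e i ∈ R) ∧ ∀ r ∈ R, ∃ i, e i = r := by
  obtain ⟨g⟩ : Nonempty (R ↪ Fin N) := Function.Embedding.nonempty_of_card_le (by simpa using h)
  have : Nonempty R := hR.to_subtype
  refine ⟨fun i => (Function.invFun g i : R), fun i => Subtype.coe_prop _, fun r hr => ?_⟩
  obtain ⟨i, hi⟩ := Function.invFun_surjective g.injective ⟨r, hr⟩
  exact ⟨i, by simp only [hi]⟩

/-- The size `r ^ (3 p)` needed for padding. -/
lemma exists_r (p r0 t : ℕ) (hp : 1 ≤ p) (ht : 1 ≤ t) : ∃ r, r0 ≤ r ∧ t ≤ r ^ (3 * p) ∧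
    ((r ^ (4 * p) : ℕ) : ℝ) ≤ ((r0 + 2 : ℕ) : ℝ) ^ (4 * p) * (t : ℝ) ^ ((4 : ℝ) / 3) := by
  have ht' : (1 : ℝ) ≤ t := by exact_mod_cast ht
  set a : ℝ := (t : ℝ) ^ ((1 : ℝ) / (3 * p)) with ha
  have hp' : (0 : ℝ) < p := by exact_mod_cast hp
  have ha1 : 1 ≤ a := Real.one_le_rpow ht' (by positivity)
  have hpow : ∀ m : ℕ, a ^ m = (t : ℝ) ^ ((m : ℝ) / (3 * p)) := by
    intro m
    rw [ha, ← Real.rpow_natCast, ← Real.rpow_mul (by linarith)]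
    congr 1
    ring
  refine ⟨r0 + ⌈a⌉₊, by omega, ?_, ?_⟩
  · have h1 : (t : ℝ) = a ^ (3 * p) := by
      rw [hpow]
      push_cast
      rw [div_self (by positivity), Real.rpow_one]
    have h2 : a ≤ ((r0 + ⌈a⌉₊ : ℕ) : ℝ) := by
      push_cast
      have := Nat.le_ceil a
      have : (0 : ℝ) ≤ r0 := Nat.cast_nonneg _
      linarith
    have h3 : (t : ℝ) ≤ ((r0 + ⌈a⌉₊ : ℕ) : ℝ) ^ (3 * p) := by
      rw [h1]
      exact pow_le_pow_left₀ (by linarith) h2 _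
    exact_mod_cast h3
  · have h2 : ((r0 + ⌈a⌉₊ : ℕ) : ℝ) ≤ ((r0 + 2 : ℕ) : ℝ) * a := by
      push_cast
      have := Nat.ceil_lt_add_one (a := a) (by linarith)
      have : (0 : ℝ) ≤ r0 := Nat.cast_nonneg _
      nlinarith
    have h3 : a ^ (4 * p) = (t : ℝ) ^ ((4 : ℝ) / 3) := by
      rw [hpow]
      congr 1
      push_cast
      field_simp
    rw [Nat.cast_pow, ← h3, ← mul_pow]
    exact pow_le_pow_left₀ (Nat.cast_nonneg _) h2 _

/-- Degenerate configurations: it is enough that a direction `f i` is available with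
`0 < f i ⬝ᵥ B j` throughout. -/
theorem core_pert : ∃ C : ℝ, 0 ≤ C ∧ ∀ (σ ι κ : Type) (l : ℕ) (A f : ι → (σ → ℝ) → E6)
    (B : κ → (σ → ℝ) → E6) (hA : ∀ i k, PolyLE l fun x => A i x k)
    (hf : ∀ i k, PolyLE l fun x => f i x k) (hB : ∀ i k, PolyLE l fun x => B i x k)
    (t : ℕ) (R : Finset ι) (U : Finset κ) (hR : R.card ≤ t) (hU : U.card ≤ t) (S : Set (σ → ℝ))
    (hS : ∀ x ∈ S, ∀ i ∈ R, ∀ j ∈ U, 0 < f i x ⬝ᵥ B j x),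
    Dec (PolyLE (l * 40)) (Known fun x => ∃ i ∈ R, ∃ j ∈ U, A i x ⬝ᵥ B j x < 0)
      ⌊C * (t : ℝ) ^ ((4 : ℝ) / 3)⌋₊ S := by
  obtain ⟨p, C, r0, hp, core⟩ := core_generic
  refine ⟨C * ((r0 + 2 : ℕ) : ℝ) ^ (4 * p) * 81, by positivity, ?_⟩
  intro σ ι κ l A f B hA hf hB t R U hR hU S hS
  rcases R.eq_empty_or_nonempty with rfl | hRn
  · exact Dec.done _ _ ⟨false, by simp⟩
  rcases U.eq_empty_or_nonempty with rfl | hUn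
  · exact Dec.done _ _ ⟨false, by simp⟩
  have ht : 1 ≤ t := hRn.card_pos.trans_le hR
  obtain ⟨r, hr0, hrt, hr⟩ := exists_r p r0 t hp ht
  have H := core r hr0 (r ^ (3 * p)) rfl
  generalize hN : r ^ (3 * p) = N at *
  obtain ⟨e, he1, he2⟩ := exists_surj hRn (hR.trans hrt)
  obtain ⟨e', he1', he2'⟩ := exists_surj hUn (hU.trans hrt)
  obtain ⟨y, hy⟩ := exists_gen (ι := Fin N ⊕ Fin N)
  choose pA hpA hpA' using hA
  choose pf hpf hpf' using hf
  choose pB hpB hpB' using hB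
  let Γ : (Fin N ⊕ Fin N) × Fin 6 → Polynomial (MvPolynomial σ ℝ) := fun q =>
    Polynomial.C (Sum.elim (fun i => pA (e i) q.2) (fun j => pB (e' j) q.2) q.1) +
    Polynomial.X * Polynomial.C (Sum.elim (fun i => pf (e i) q.2) (fun j => 0) q.1) +
    Polynomial.X ^ 2 * Polynomial.C (MvPolynomial.C (y q.1 q.2))
  have hΓ : ∀ q, EpsLE 2 l (Γ q) := by
    rintro ⟨i, k⟩
    refine EpsLE.add (EpsLE.add (EpsLE.C ?_) ?_) ?_
    · rcases i with i | i
      · exact hpA _ _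
      · exact hpB _ _
    · refine ((EpsLE.X (k := 1) (l := 0) le_rfl).mul (EpsLE.C (k := 0) (l := l) ?_)).mono
        (by norm_num) (by omega)
      rcases i with i | i
      · exact hpf _ _
      · simp
    · refine (((EpsLE.X (k := 1) (l := 0) le_rfl).pow 2).mul (EpsLE.C (k := 0) (l := 0) ?_)).mono
        (by norm_num) (by omega)
      simp
  have hz : ∀ x ε, unfl (epsEval Γ x ε) = fun i => Sum.elim (fun i => A (e i) x) (fun j => B (e' j) x) i +
      ε • Sum.elim (fun i => f (e i) x) (fun j => 0) i + ε ^ 2 • y i := by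
    intro x ε
    ext i k
    rcases i with i | i
    · simp [unfl, epsEval, Γ, hpA', hpf', hpB']
      ring
    · simp [unfl, epsEval, Γ, hpA', hpf', hpB']
      ring
  have key := H.limit (k := 2) (l := l) Γ hΓ S ?_
  · refine Dec.imp (key.mono ?_) ?_
    · refine Nat.le_floor ?_
      have : ((C * r ^ (4 * p) * (2 * 40 + 1) : ℕ) : ℝ) = C * ((r ^ (4 * p) : ℕ) : ℝ) * 81 := by
        push_cast; ring
      rw [this]
      have h2 := mul_le_mul_of_nonneg_left hr (Nat.cast_nonneg (α := ℝ) C)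
      linarith
    · rintro S' hS' ⟨T, ⟨b, hb⟩, hT⟩
      refine ⟨b, fun x hx => ?_⟩
      have h1 : ∀ q : Fin N × Fin N, ∀ᶠ ε in nhdsWithin (0 : ℝ) (Set.Ioi 0),
          (unfl (epsEval Γ x ε) (.inl q.1) ⬝ᵥ unfl (epsEval Γ x ε) (.inr q.2) < 0 ↔
            A (e q.1) x ⬝ᵥ B (e' q.2) x < 0) := by
        intro q
        simp only [hz]
        exact eventually_dot _ _ _ _ _ (hS x (hS' hx) _ (he1 _) _ (he1' _))
      obtain ⟨ε, h2, h3⟩ := ((hT x hx).and (Filter.eventually_all.2 h1)).exists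
      rw [← hb _ h2]
      constructor
      · rintro ⟨i, hi, j, hj, hij⟩
        obtain ⟨i, rfl⟩ := he2 i hi
        obtain ⟨j, rfl⟩ := he2' j hj
        exact ⟨i, j, (h3 (i, j)).2 hij⟩
      · rintro ⟨i, j, hij⟩
        exact ⟨_, he1 i, _, he1' j, (h3 (i, j)).1 hij⟩
  · intro x hx
    filter_upwards [eventually_GP (Sum.elim (fun i => A (e i) x) (fun j => B (e' j) x))
      (Sum.elim (fun i => f (e i) x) (fun j => 0)) y hy] with ε hε
    rw [hz]
    exact hε

end LT

namespace LT

open Matrix Finset Code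

set_option linter.unusedSectionVars false
set_option linter.unusedVariables false
set_option linter.unusedSimpArgs false

/-! ### Sorting by binary insertion -/

section sort
variable {ι : Type*} [DecidableEq ι]

lemma exists_median (k : ι → ℝ) {F : Finset ι} (hF : F.Nonempty) :
    ∃ m ∈ F, 2 * (F.filter fun b => k b < k m).card ≤ F.card ∧
      2 * (F.filter fun b => k m < k b).card ≤ F.card := by
  classical
  set H := F.filter fun a => 2 * (F.filter fun b => k b < k a).card ≤ F.card with hH
  have hHn : H.Nonempty := by
    obtain ⟨a, ha, hmin⟩ := F.exists_min_image k hF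
    refine ⟨a, mem_filter.2 ⟨ha, ?_⟩⟩
    rw [filter_false_of_mem fun b hb => not_lt.2 (hmin b hb)]
    simp
  obtain ⟨m, hm, hmax⟩ := H.exists_max_image k hHn
  obtain ⟨hmF, hm1⟩ := mem_filter.1 hm
  refine ⟨m, hmF, hm1, ?_⟩
  by_contra hcon
  push Not at hcon
  have hUn : (F.filter fun b => k m < k b).Nonempty := by
    rw [← card_pos]; omega
  obtain ⟨m', hm', hmin⟩ := exists_min_image _ k hUn
  obtain ⟨hm'F, hlt⟩ := mem_filter.1 hm'
  refine absurd (hmax m' (mem_filter.2 ⟨hm'F, ?_⟩)) (not_le.2 hlt)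
  have hsub : (F.filter fun b => k b < k m') ⊆ F.filter fun b => ¬ k m < k b := by
    intro b hb
    obtain ⟨hbF, hb⟩ := mem_filter.1 hb
    exact mem_filter.2 ⟨hbF, fun h => absurd (hmin b (mem_filter.2 ⟨hbF, h⟩)) (not_le.2 hb)⟩
  have h1 := card_le_card hsub
  have h2 := card_filter_add_card_filter_not (s := F) (fun b => k m < k b)
  omega

variable {X : Type*} {P : (X → ℝ) → Prop} (key : ι → X → ℝ)

/-- The outcome of the comparison of the keys of `i` and `j` is the same throughout `S`. -/
def Cmp (i j : ι) (S : Set X) : Prop := ∃ v : SignType, ∀ x ∈ S, SignType.sign (key i x - key j x) = v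

/-- The order of the keys of the elements of `F` is the same throughout `S`. -/
def Sorted (F : Finset ι) (S : Set X) : Prop := ∀ i ∈ F, ∀ j ∈ F, Cmp key i j S

variable {key}

lemma Cmp.anti {i j : ι} {S S' : Set X} (h : Cmp key i j S) (hS : S' ⊆ S) : Cmp key i j S' :=
  ⟨h.choose, fun x hx => h.choose_spec x (hS hx)⟩

lemma Sorted.anti {F : Finset ι} {S S' : Set X} (h : Sorted key F S) (hS : S' ⊆ S) :
    Sorted key F S' := fun i hi j hj => (h i hi j hj).anti hS

lemma Cmp.sign_eq {i j : ι} {S : Set X} (h : Cmp key i j S) {x y : X} (hx : x ∈ S) (hy : y ∈ S) :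
    SignType.sign (key i x - key j x) = SignType.sign (key i y - key j y) := by
  obtain ⟨v, hv⟩ := h
  rw [hv x hx, hv y hy]

lemma Cmp.lt_iff {i j : ι} {S : Set X} (h : Cmp key i j S) {x y : X} (hx : x ∈ S) (hy : y ∈ S) :
    key i x < key j x ↔ key i y < key j y := by
  rw [← sub_neg, ← sign_eq_neg_one_iff, h.sign_eq hx hy, sign_eq_neg_one_iff, sub_neg]

lemma Cmp.gt_iff {i j : ι} {S : Set X} (h : Cmp key i j S) {x y : X} (hx : x ∈ S) (hy : y ∈ S) :
    key j x < key i x ↔ key j y < key i y := by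
  rw [← sub_pos, ← sign_eq_one_iff, h.sign_eq hx hy, sign_eq_one_iff, sub_pos]

lemma Cmp.eq_iff {i j : ι} {S : Set X} (h : Cmp key i j S) {x y : X} (hx : x ∈ S) (hy : y ∈ S) :
    key i x = key j x ↔ key i y = key j y := by
  rw [← sub_eq_zero, ← sign_eq_zero_iff, h.sign_eq hx hy, sign_eq_zero_iff, sub_eq_zero]

variable {S0 : Set X}

/-- Binary search for the position of `a` in the sorted set `F`. -/
lemma dec_insert (hcmp : ∀ i j, ∀ S ⊆ S0, Dec P (Cmp key i j) 1 S) (a : ι) :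
    ∀ (k : ℕ) (F : Finset ι), F.card < 2 ^ k → ∀ S ⊆ S0, Sorted key F S →
      Dec P (fun S' => ∀ b ∈ F, Cmp key a b S') k S := by
  intro k
  induction k with
  | zero =>
    intro F hF S _ _
    have : F = ∅ := by rw [← card_eq_zero]; simpa using hF
    subst this
    exact Dec.done _ _ (by simp)
  | succ k ih =>
    intro F hF S hS hs
    rcases S.eq_empty_or_nonempty with rfl | ⟨x0, hx0⟩
    · exact Dec.done _ _ fun b _ => ⟨0, by simp⟩
    rcases F.eq_empty_or_nonempty with rfl | hFn
    · exact Dec.done _ _ (by simp)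
    obtain ⟨m, hm, hL, hU⟩ := exists_median (fun i => key i x0) hFn
    rw [pow_succ] at hF
    rw [add_comm]
    refine (hcmp a m S hS).bind_sub ?_
    rintro S' hS' ⟨v, hv⟩
    have hle : ∀ b ∈ F, b ∉ (F.filter fun b => key b x0 < key m x0) → ∀ x ∈ S', key m x ≤ key b x := by
      intro b hb hb' x hx
      rw [mem_filter, not_and] at hb'
      exact not_lt.1 fun h => hb' hb (((hs b hb m hm).lt_iff (hS' hx) hx0).1 h)
    have hge : ∀ b ∈ F, b ∉ (F.filter fun b => key m x0 < key b x0) → ∀ x ∈ S', key b x ≤ key m x := by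
      intro b hb hb' x hx
      rw [mem_filter, not_and] at hb'
      exact not_lt.1 fun h => hb' hb (((hs m hm b hb).lt_iff (hS' hx) hx0).1 h)
    rcases v with _ | _ | _
    · refine Dec.done _ _ fun b hb => ?_
      obtain ⟨v, hv'⟩ := hs m hm b hb
      refine ⟨v, fun x hx => ?_⟩
      have := sub_eq_zero.1 (sign_eq_zero_iff.1 (hv x hx))
      rw [this, hv' x (hS' hx)]
    · refine (ih (F.filter fun b => key b x0 < key m x0) (by omega) S' (hS'.trans hS)
        fun i hi j hj => (hs i (mem_filter.1 hi).1 j (mem_filter.1 hj).1).anti hS').imp ?_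
      intro S'' hS'' h b hb
      by_cases hb' : b ∈ F.filter fun b => key b x0 < key m x0
      · exact h b hb'
      · refine ⟨-1, fun x hx => ?_⟩
        have h1 := sign_eq_neg_one_iff.1 (hv x (hS'' hx))
        have h2 := hle b hb hb' x (hS'' hx)
        rw [sign_eq_neg_one_iff]
        linarith
    · refine (ih (F.filter fun b => key m x0 < key b x0) (by omega) S' (hS'.trans hS)
        fun i hi j hj => (hs i (mem_filter.1 hi).1 j (mem_filter.1 hj).1).anti hS').imp ?_
      intro S'' hS'' h b hb
      by_cases hb' : b ∈ F.filter fun b => key m x0 < key b x0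
      · exact h b hb'
      · refine ⟨1, fun x hx => ?_⟩
        have h1 := sign_eq_one_iff.1 (hv x (hS'' hx))
        have h2 := hge b hb hb' x (hS'' hx)
        rw [sign_eq_one_iff]
        linarith

lemma dec_sort (hcmp : ∀ i j, ∀ S ⊆ S0, Dec P (Cmp key i j) 1 S) (k : ℕ) (F : Finset ι)
    (hk : F.card < 2 ^ k) {S : Set X} (hS : S ⊆ S0) : Dec P (Sorted key F) (F.card * k) S := by
  induction F using Finset.induction_on with
  | empty => exact Dec.done _ _ (by intro i hi; simp at hi)
  | insert a F ha ih =>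
    rw [card_insert_of_notMem ha] at hk ⊢
    rw [add_one_mul]
    refine (ih (by omega)).bind_sub fun S' hS' hs => ?_
    refine (dec_insert hcmp a k F (by omega) S' (hS'.trans hS) hs).imp fun S'' hS'' h => ?_
    have hsymm : ∀ b ∈ F, Cmp key b a S'' := by
      intro b hb
      obtain ⟨v, hv⟩ := h b hb
      refine ⟨-v, fun x hx => ?_⟩
      rw [← hv x hx, ← Left.sign_neg, neg_sub]
    intro i hi j hj
    rcases mem_insert.1 hi with rfl | hi' <;> rcases mem_insert.1 hj with rfl | hj'
    · exact ⟨0, by simp⟩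
    · exact h j hj'
    · exact hsymm i hi'
    · exact (hs i hi' j hj').anti hS''

end sort
end LT

namespace LT

open Matrix Finset Code

set_option linter.unusedSectionVars false
set_option linter.unusedVariables false
set_option linter.unusedSimpArgs false

/-! ### Pairs of lines -/

/-- A line given by two points. -/
abbrev LineQ := Fin 2 → Fin 3 → ℝ

/-- The direction of a line. -/
def dir (q : LineQ) (c : Fin 3) : ℝ := q 1 c - q 0 c

/-- The line `q` passes above the line `q'` somewhere. -/
def Above (q q' : LineQ) : Prop := ∃ τ τ' : ℝ,
  q 0 0 + τ * dir q 0 = q' 0 0 + τ' * dir q' 0 ∧ q 0 1 + τ * dir q 1 = q' 0 1 + τ' * dir q' 1 ∧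
  q' 0 2 + τ' * dir q' 2 < q 0 2 + τ * dir q 2

/-- The four parameters of a line `y = m x + c`, `z = s x + d`, in the order `m, c, s, d`, multiplied
by the first coordinate of the direction. -/
def num (k : Fin 4) (q : LineQ) : ℝ :=
  ![dir q 1, q 0 1 * dir q 0 - dir q 1 * q 0 0, dir q 2, q 0 2 * dir q 0 - dir q 2 * q 0 0] k

/-- The four parameters `m, c, s, d` of a line `y = m x + c`, `z = s x + d`. -/
noncomputable def par (k : Fin 4) (q : LineQ) : ℝ := num k q / dir q 0

/-- The vector `(s, c, d, m, d m - s c, 1)` scaled by a positive factor. -/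
def pa (q : LineQ) : E6 := ![dir q 0 * dir q 2, dir q 0 * num 1 q, dir q 0 * num 3 q,
  dir q 0 * dir q 1, dir q 0 * (q 0 2 * dir q 1 - dir q 2 * q 0 1), dir q 0 * dir q 0]

/-- The vector `(c, s, -m, -d, 1, d m - s c)` scaled by a positive factor. -/
def pb (q : LineQ) : E6 := ![dir q 0 * num 1 q, dir q 0 * dir q 2, - (dir q 0 * dir q 1),
  - (dir q 0 * num 3 q), dir q 0 * dir q 0, dir q 0 * (q 0 2 * dir q 1 - dir q 2 * q 0 1)]

/-- The vector `(0, 0, 1, 0, m, 0)` scaled by a positive factor. -/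
def pf (q : LineQ) : E6 := ![0, 0, dir q 0 * dir q 0, 0, dir q 0 * dir q 1, 0]

lemma pa_dot_pb {q q' : LineQ} (h : dir q 0 ≠ 0) (h' : dir q' 0 ≠ 0) :
    pa q ⬝ᵥ pb q' = (dir q 0 ^ 2 * dir q' 0 ^ 2) *
      ((par 3 q - par 3 q') * (par 0 q - par 0 q') - (par 2 q - par 2 q') * (par 1 q - par 1 q')) := by
  simp only [pa, pb, par, num, dotProduct, Fin.sum_univ_six]
  simp
  field_simp
  ring

lemma pf_dot_pb {q q' : LineQ} (h : dir q 0 ≠ 0) (h' : dir q' 0 ≠ 0) :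
    pf q ⬝ᵥ pb q' = (dir q 0 ^ 2 * dir q' 0 ^ 2) * (par 0 q - par 0 q') := by
  simp only [pf, pb, par, num, dotProduct, Fin.sum_univ_six]
  simp
  field_simp
  ring

lemma above_iff_par {q q' : LineQ} (h : dir q 0 ≠ 0) (h' : dir q' 0 ≠ 0) :
    Above q q' ↔ ∃ x : ℝ, par 0 q * x + par 1 q = par 0 q' * x + par 1 q' ∧
      par 2 q' * x + par 3 q' < par 2 q * x + par 3 q := by
  have e1 : ∀ {q : LineQ}, dir q 0 ≠ 0 → ∀ τ : ℝ,
      q 0 1 + τ * dir q 1 = par 0 q * (q 0 0 + τ * dir q 0) + par 1 q := by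
    intro q h τ; simp [par, num]; field_simp; ring
  have e2 : ∀ {q : LineQ}, dir q 0 ≠ 0 → ∀ τ : ℝ,
      q 0 2 + τ * dir q 2 = par 2 q * (q 0 0 + τ * dir q 0) + par 3 q := by
    intro q h τ; simp [par, num]; field_simp; ring
  constructor
  · rintro ⟨τ, τ', h1, h2, h3⟩
    refine ⟨q 0 0 + τ * dir q 0, ?_, ?_⟩
    · rw [← e1 h, h1, ← e1 h', h2]
    · rw [← e2 h, h1, ← e2 h']
      exact h3
  · rintro ⟨x, h2, h3⟩
    refine ⟨(x - q 0 0) / dir q 0, (x - q' 0 0) / dir q' 0, ?_, ?_, ?_⟩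
    · field_simp; ring
    · rw [e1 h, e1 h', div_mul_cancel₀ _ h, div_mul_cancel₀ _ h']
      simpa using h2
    · rw [e2 h, e2 h', div_mul_cancel₀ _ h, div_mul_cancel₀ _ h']
      simpa using h3

/-- Passing above, for lines that are not parallel in projection. -/
def Bd (q q' : LineQ) : Prop := (par 0 q < par 0 q' ∧ pa q ⬝ᵥ pb q' < 0) ∨
  (par 0 q' < par 0 q ∧ (-pa q) ⬝ᵥ pb q' < 0)

lemma above_iff {q q' : LineQ} (h : dir q 0 ≠ 0) (h' : dir q' 0 ≠ 0) :
    Above q q' ↔ (par 0 q = par 0 q' ∧ par 1 q = par 1 q' ∧ (par 2 q ≠ par 2 q' ∨ par 3 q' < par 3 q)) ∨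
      Bd q q' := by
  rw [above_iff_par h h', Bd, neg_dotProduct, pa_dot_pb h h']
  have hpos : 0 < dir q 0 ^ 2 * dir q' 0 ^ 2 := by positivity
  have hneg : ∀ w : ℝ, dir q 0 ^ 2 * dir q' 0 ^ 2 * w < 0 ↔ w < 0 := fun w =>
    ⟨fun h => by by_contra hw; exact absurd h (not_lt.2 (mul_nonneg hpos.le (not_lt.1 hw))),
      fun h => mul_neg_of_pos_of_neg hpos h⟩
  rw [neg_lt_zero, hneg, mul_pos_iff_of_pos_left hpos]
  generalize par 0 q = m, par 1 q = c, par 2 q = s, par 3 q = d, par 0 q' = m', par 1 q' = c',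
    par 2 q' = s', par 3 q' = d'
  have hgen : m ≠ m' → ∀ x, m * x + c = m' * x + c' →
      (d - d') * (m - m') - (s - s') * (c - c') = (m - m') * ((s * x + d) - (s' * x + d')) := by
    intro _ x hx
    have : c - c' = - ((m - m') * x) := by linarith
    rw [this]; ring
  have hex : m ≠ m' → ∃ x, m * x + c = m' * x + c' := by
    intro hm
    have : m - m' ≠ 0 := sub_ne_zero.2 hm
    refine ⟨(c' - c) / (m - m'), ?_⟩
    field_simp
    ring
  rcases lt_trichotomy m m' with hm | rfl | hm
  · obtain ⟨x, hx⟩ := hex hm.ne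
    simp only [hm.ne, hm, hm.le.not_gt, false_and, false_or, or_false, true_and]
    constructor
    · rintro ⟨y, hy, h1⟩
      rw [hgen hm.ne y hy]
      exact mul_neg_of_neg_of_pos (by linarith) (by linarith)
    · intro h1
      rw [hgen hm.ne x hx] at h1
      refine ⟨x, hx, ?_⟩
      by_contra h2
      have := mul_nonneg_of_nonpos_of_nonpos (sub_nonpos.2 hm.le) (sub_nonpos.2 (not_lt.1 h2))
      linarith
  · simp only [lt_irrefl, false_and, or_false, true_and, add_right_inj]
    constructor
    · rintro ⟨x, hc, h1⟩
      refine ⟨hc, ?_⟩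
      by_cases hs : s = s'
      · subst hs; right; linarith
      · exact Or.inl hs
    · rintro ⟨hc, h1⟩
      by_cases hs : s = s'
      · subst hs
        exact ⟨0, hc, by simpa using h1⟩
      · have : s - s' ≠ 0 := sub_ne_zero.2 hs
        refine ⟨(d' - d + 1) / (s - s'), hc, ?_⟩
        have : (s - s') * ((d' - d + 1) / (s - s')) = d' - d + 1 := by field_simp
        linarith
  · obtain ⟨x, hx⟩ := hex hm.ne'
    simp only [hm.ne', hm, hm.le.not_gt, false_and, false_or, or_false, true_and]
    constructor
    · rintro ⟨y, hy, h1⟩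
      rw [hgen hm.ne' y hy]
      exact mul_pos (by linarith) (by linarith)
    · intro h1
      rw [hgen hm.ne' x hx] at h1
      refine ⟨x, hx, ?_⟩
      have := (mul_pos_iff_of_pos_left (sub_pos.2 hm)).1 h1
      linarith

end LT

namespace LT

open Matrix Finset Code

set_option linter.unusedSectionVars false
set_option linter.unusedVariables false
set_option linter.unusedSimpArgs false

/-! ### Divide and conquer by the slope of the projection -/

lemma Known.congr {X : Type*} {p p' : X → Prop} {S : Set X} (h : Known p S)
    (hp : ∀ x ∈ S, (p' x ↔ p x)) : Known p' S :=
  ⟨h.choose, fun x hx => (hp x hx).trans (h.choose_spec x hx)⟩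

lemma Dec.or {X : Type*} {P : (X → ℝ) → Prop} {p p' : X → Prop} {h h' : ℕ} {S : Set X}
    (H : Dec P (Known p) h S) (H' : ∀ S' ⊆ S, Dec P (Known p') h' S') :
    Dec P (Known fun x => p x ∨ p' x) (h + h') S := by
  refine H.bind_sub fun S' hS' hk => (H' S' hS').imp fun S'' hS'' hk' => ?_
  obtain ⟨b, hb⟩ := hk
  obtain ⟨b', hb'⟩ := hk'
  exact ⟨b || b', fun x hx => by simp [hb x (hS'' hx), hb' x hx]⟩

/-- The conclusion of `core_pert`, for families of lines: red lines of smaller slope, and blue lines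
of larger slope. -/
def Cross (C : ℝ) : Prop := ∀ (σ ι κ : Type) (l : ℕ) (A f : ι → (σ → ℝ) → E6)
    (B : κ → (σ → ℝ) → E6) (hA : ∀ i k, PolyLE l fun x => A i x k)
    (hf : ∀ i k, PolyLE l fun x => f i x k) (hB : ∀ i k, PolyLE l fun x => B i x k)
    (t : ℕ) (R : Finset ι) (U : Finset κ) (hR : R.card ≤ t) (hU : U.card ≤ t) (S : Set (σ → ℝ))
    (hS : ∀ x ∈ S, ∀ i ∈ R, ∀ j ∈ U, 0 < f i x ⬝ᵥ B j x),
    Dec (PolyLE (l * 40)) (Known fun x => ∃ i ∈ R, ∃ j ∈ U, A i x ⬝ᵥ B j x < 0)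
      ⌊C * (t : ℝ) ^ ((4 : ℝ) / 3)⌋₊ S

section lines
variable {σ ι : Type} [DecidableEq ι] {q : ι → (σ → ℝ) → LineQ}

lemma poly_dir (hq : ∀ i a c, PolyLE 1 fun x => q i x a c) (i : ι) (c : Fin 3) :
    PolyLE 1 fun x => dir (q i x) c := (hq i 1 c).sub (hq i 0 c)

lemma poly_num (hq : ∀ i a c, PolyLE 1 fun x => q i x a c) (i : ι) (k : Fin 4) :
    PolyLE 2 fun x => num k (q i x) := by
  have hd := poly_dir hq i
  fin_cases k
  · exact (hd 1).mono (by norm_num)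
  · exact ((hq i 0 1).mul (hd 0)).sub ((hd 1).mul (hq i 0 0))
  · exact (hd 2).mono (by norm_num)
  · exact ((hq i 0 2).mul (hd 0)).sub ((hd 2).mul (hq i 0 0))

lemma poly_pa (hq : ∀ i a c, PolyLE 1 fun x => q i x a c) (i : ι) (k : Fin 6) :
    PolyLE 3 fun x => pa (q i x) k := by
  have hd := poly_dir hq i
  have hn := poly_num hq i
  fin_cases k
  · exact ((hd 0).mul (hd 2)).mono (by norm_num)
  · exact (hd 0).mul (hn 1)
  · exact (hd 0).mul (hn 3)
  · exact ((hd 0).mul (hd 1)).mono (by norm_num)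
  · exact (hd 0).mul (((hq i 0 2).mul (hd 1)).sub ((hd 2).mul (hq i 0 1)))
  · exact ((hd 0).mul (hd 0)).mono (by norm_num)

lemma poly_pb (hq : ∀ i a c, PolyLE 1 fun x => q i x a c) (i : ι) (k : Fin 6) :
    PolyLE 3 fun x => pb (q i x) k := by
  have h := poly_pa hq i
  fin_cases k
  · exact h 1
  · exact h 0
  · exact (h 3).neg
  · exact (h 2).neg
  · exact h 5
  · exact h 4

lemma poly_pf (hq : ∀ i a c, PolyLE 1 fun x => q i x a c) (i : ι) (k : Fin 6) :
    PolyLE 3 fun x => pf (q i x) k := by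
  have h := poly_pa hq i
  fin_cases k
  · exact PolyLE.const 0
  · exact PolyLE.const 0
  · exact h 5
  · exact PolyLE.const 0
  · exact h 3
  · exact PolyLE.const 0

lemma dec_cross {C : ℝ} (hC : Cross C) (hq : ∀ i a c, PolyLE 1 fun x => q i x a c)
    {t : ℕ} {R U : Finset ι} (hR : R.card ≤ t) (hU : U.card ≤ t) {S : Set (σ → ℝ)}
    (hS : ∀ x ∈ S, ∀ i, dir (q i x) 0 ≠ 0)
    (h : (∀ x ∈ S, ∀ i ∈ R, ∀ j ∈ U, par 0 (q i x) < par 0 (q j x)) ∨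
      (∀ x ∈ S, ∀ i ∈ R, ∀ j ∈ U, par 0 (q j x) < par 0 (q i x))) :
    Dec (PolyLE 120) (Known fun x => ∃ i ∈ R, ∃ j ∈ U, Bd (q i x) (q j x))
      ⌊C * (t : ℝ) ^ ((4 : ℝ) / 3)⌋₊ S := by
  rcases h with h | h
  · refine (hC σ ι ι 3 (fun i x => pa (q i x)) (fun i x => - pf (q i x)) (fun i x => pb (q i x))
      (poly_pa hq) (fun i k => (poly_pf hq i k).neg) (poly_pb hq) t R U hR hU S ?_).imp ?_
    · intro x hx i hi j hj
      rw [neg_dotProduct, pf_dot_pb (hS x hx i) (hS x hx j), ← mul_neg]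
      have := h x hx i hi j hj
      have := sq_pos_of_ne_zero (hS x hx i)
      have := sq_pos_of_ne_zero (hS x hx j)
      exact mul_pos (by positivity) (by linarith)
    · intro S' hS' hk
      refine hk.congr fun x hx => ?_
      refine exists_congr fun i => and_congr_right fun hi => exists_congr fun j =>
        and_congr_right fun hj => ?_
      have := h x (hS' hx) i hi j hj
      simp [Bd, this, this.le.not_gt]
  · refine (hC σ ι ι 3 (fun i x => - pa (q i x)) (fun i x => pf (q i x)) (fun i x => pb (q i x))
      (fun i k => (poly_pa hq i k).neg) (poly_pf hq) (poly_pb hq) t R U hR hU S ?_).imp ?_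
    · intro x hx i hi j hj
      rw [pf_dot_pb (hS x hx i) (hS x hx j)]
      have := h x hx i hi j hj
      have := sq_pos_of_ne_zero (hS x hx i)
      have := sq_pos_of_ne_zero (hS x hx j)
      exact mul_pos (by positivity) (by linarith)
    · intro S' hS' hk
      refine hk.congr fun x hx => ?_
      refine exists_congr fun i => and_congr_right fun hi => exists_congr fun j =>
        and_congr_right fun hj => ?_
      have := h x (hS' hx) i hi j hj
      simp [Bd, this, this.le.not_gt]

lemma rho_bounds : (5 / 2 : ℝ) ≤ (2 : ℝ) ^ ((4 : ℝ) / 3) ∧ (2 : ℝ) ^ ((4 : ℝ) / 3) ≤ 3 := by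
  have h : ((2 : ℝ) ^ ((4 : ℝ) / 3)) ^ 3 = 16 := by
    rw [← Real.rpow_natCast, ← Real.rpow_mul (by norm_num)]
    norm_num
  have h0 : (0 : ℝ) ≤ (2 : ℝ) ^ ((4 : ℝ) / 3) := by positivity
  constructor
  · refine le_of_pow_le_pow_left₀ (n := 3) (by norm_num) h0 ?_
    rw [h]; norm_num
  · refine le_of_pow_le_pow_left₀ (n := 3) (by norm_num) (by norm_num) ?_
    rw [h]; norm_num

lemma rho_pow (K : ℕ) : ((2 ^ K : ℕ) : ℝ) ^ ((4 : ℝ) / 3) = ((2 : ℝ) ^ ((4 : ℝ) / 3)) ^ K := by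
  rw [Nat.cast_pow, ← Real.rpow_natCast, ← Real.rpow_natCast, ← Real.rpow_mul (by norm_num),
    ← Real.rpow_mul (by norm_num), mul_comm]
  norm_num

/-- Lines sorted by slope are split into halves of small and of large slope; pairs across the halves
are a problem on vectors of `ℝ⁶`. The number of subproblems doubles at each level while `2 ^ (4/3)`
exceeds `2`, so the sum of the costs over all levels is dominated by a geometric series. -/
lemma dec_divide {C : ℝ} (hC0 : 0 ≤ C) (hC : Cross C) (hq : ∀ i a c, PolyLE 1 fun x => q i x a c)
    (Rd Bl : Finset ι) : ∀ (K : ℕ) (F : Finset ι), F.card ≤ 2 ^ K → ∀ S : Set (σ → ℝ),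
    (∀ x ∈ S, ∀ i, dir (q i x) 0 ≠ 0) → Sorted (fun i x => par 0 (q i x)) F S →
    Dec (PolyLE 120) (Known fun x => ∃ i ∈ F ∩ Rd, ∃ j ∈ F ∩ Bl, Bd (q i x) (q j x))
      ⌊24 * C * ((2 : ℝ) ^ ((4 : ℝ) / 3)) ^ K⌋₊ S := by
  intro K
  induction K with
  | zero =>
    intro F hF S _ _
    refine Dec.done _ _ ⟨false, fun x _ => ?_⟩
    simp only [Bool.false_eq_true, iff_false]
    rintro ⟨i, hi, j, hj, hb⟩
    have : i = j := card_le_one.1 (by simpa using hF) i (mem_inter.1 hi).1 j (mem_inter.1 hj).1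
    subst this
    simp [Bd] at hb
  | succ K ih =>
    intro F hF S hS hs
    rcases S.eq_empty_or_nonempty with rfl | ⟨x0, hx0⟩
    · exact Dec.done _ _ ⟨false, by simp⟩
    rcases F.eq_empty_or_nonempty with rfl | hFn
    · exact Dec.done _ _ ⟨false, by simp⟩
    obtain ⟨m, hm, hL, hU⟩ := exists_median (fun i => par 0 (q i x0)) hFn
    set L := F.filter fun b => par 0 (q b x0) < par 0 (q m x0) with hLd
    set U := F.filter fun b => par 0 (q m x0) < par 0 (q b x0) with hUd
    set G := F.filter fun b => ¬ par 0 (q b x0) < par 0 (q m x0) with hGd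
    set E := F.filter fun b => par 0 (q b x0) = par 0 (q m x0) with hEd
    have hLF : L ⊆ F := filter_subset _ _
    have hUF : U ⊆ F := filter_subset _ _
    have hGF : G ⊆ F := filter_subset _ _
    have hEF : E ⊆ F := filter_subset _ _
    have hcard : ∀ {V W : Finset ι}, V ⊆ F → (V ∩ W).card ≤ 2 ^ (K + 1) := fun hV =>
      (card_le_card (inter_subset_left.trans hV)).trans hF
    have hlt : ∀ {V W : Finset ι}, V ⊆ F → W ⊆ F →
        (∀ i ∈ V, ∀ j ∈ W, par 0 (q i x0) < par 0 (q j x0)) →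
        ∀ x ∈ S, ∀ i ∈ V, ∀ j ∈ W, par 0 (q i x) < par 0 (q j x) := fun hV hW h x hx i hi j hj =>
      ((hs i (hV hi) j (hW hj)).lt_iff hx hx0).2 (h i hi j hj)
    have hLG := hlt hLF hGF fun i hi j hj => by
      have h1 := (mem_filter.1 hi).2
      have h2 := (mem_filter.1 hj).2
      linarith
    have hEU := hlt hEF hUF fun i hi j hj => by
      have h1 := (mem_filter.1 hi).2
      have h2 := (mem_filter.1 hj).2
      linarith
    rw [pow_succ] at hF
    have d1 := ih L (by omega) S hS fun i hi j hj => hs i (hLF hi) j (hLF hj)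
    have d2 : ∀ S' ⊆ S, Dec _ _ _ _ := fun S' hS' => ih U (by omega) S' (fun x hx => hS x (hS' hx))
      fun i hi j hj => (hs i (hUF hi) j (hUF hj)).anti hS'
    have d3 : ∀ S' ⊆ S, Dec _ _ _ _ := fun S' hS' =>
      dec_cross hC hq (hcard (W := Rd) hLF) (hcard (W := Bl) hGF) (fun x hx => hS x (hS' hx))
      (Or.inl fun x hx i hi j hj => hLG x (hS' hx) i (mem_inter.1 hi).1 j (mem_inter.1 hj).1)
    have d4 : ∀ S' ⊆ S, Dec _ _ _ _ := fun S' hS' =>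
      dec_cross hC hq (hcard (W := Rd) hGF) (hcard (W := Bl) hLF) (fun x hx => hS x (hS' hx))
      (Or.inr fun x hx i hi j hj => hLG x (hS' hx) j (mem_inter.1 hj).1 i (mem_inter.1 hi).1)
    have d5 : ∀ S' ⊆ S, Dec _ _ _ _ := fun S' hS' =>
      dec_cross hC hq (hcard (W := Rd) hEF) (hcard (W := Bl) hUF) (fun x hx => hS x (hS' hx))
      (Or.inl fun x hx i hi j hj => hEU x (hS' hx) i (mem_inter.1 hi).1 j (mem_inter.1 hj).1)
    have d6 : ∀ S' ⊆ S, Dec _ _ _ _ := fun S' hS' =>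
      dec_cross hC hq (hcard (W := Rd) hUF) (hcard (W := Bl) hEF) (fun x hx => hS x (hS' hx))
      (Or.inr fun x hx i hi j hj => hEU x (hS' hx) j (mem_inter.1 hj).1 i (mem_inter.1 hi).1)
    refine Dec.imp ((((((d1.or d2).or d3).or d4).or d5).or d6).mono ?_) ?_
    · rw [rho_pow]
      obtain ⟨hr1, hr2⟩ := rho_bounds
      generalize (2 : ℝ) ^ ((4 : ℝ) / 3) = ρ at hr1 hr2
      have hρ : 0 ≤ C * ρ ^ K := mul_nonneg hC0 (by positivity)
      refine Nat.le_floor ?_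
      push_cast
      have f1 := Nat.floor_le (show 0 ≤ 24 * C * ρ ^ K by linarith)
      have f2 := Nat.floor_le (show 0 ≤ C * ρ ^ (K + 1) from mul_nonneg hC0 (by positivity))
      have : C * ρ ^ (K + 1) = (C * ρ ^ K) * ρ := by ring
      have : 24 * C * ρ ^ (K + 1) = 24 * ((C * ρ ^ K) * ρ) := by ring
      nlinarith
    · intro S' hS' hk
      refine hk.congr fun x hx => ?_
      constructor
      · rintro ⟨i, hi, j, hj, hb⟩
        obtain ⟨hiF, hiR⟩ := mem_inter.1 hi
        obtain ⟨hjF, hjB⟩ := mem_inter.1 hj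
        by_cases hiL : i ∈ L <;> by_cases hjL : j ∈ L
        · exact Or.inl (Or.inl (Or.inl (Or.inl (Or.inl
            ⟨i, mem_inter.2 ⟨hiL, hiR⟩, j, mem_inter.2 ⟨hjL, hjB⟩, hb⟩))))
        · have hjG : j ∈ G := mem_filter.2 ⟨hjF, fun h => hjL (mem_filter.2 ⟨hjF, h⟩)⟩
          exact Or.inl (Or.inl (Or.inl (Or.inr
            ⟨i, mem_inter.2 ⟨hiL, hiR⟩, j, mem_inter.2 ⟨hjG, hjB⟩, hb⟩)))
        · have hiG : i ∈ G := mem_filter.2 ⟨hiF, fun h => hiL (mem_filter.2 ⟨hiF, h⟩)⟩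
          exact Or.inl (Or.inl (Or.inr
            ⟨i, mem_inter.2 ⟨hiG, hiR⟩, j, mem_inter.2 ⟨hjL, hjB⟩, hb⟩))
        · have hcase : ∀ i ∈ F, i ∉ L → i ∈ E ∨ i ∈ U := by
            intro i hiF hiL
            have h1 := not_lt.1 fun h => hiL (mem_filter.2 ⟨hiF, h⟩)
            rcases h1.eq_or_lt with h1 | h1
            · exact Or.inl (mem_filter.2 ⟨hiF, h1.symm⟩)
            · exact Or.inr (mem_filter.2 ⟨hiF, h1⟩)
          rcases hcase i hiF hiL with hi' | hi' <;> rcases hcase j hjF hjL with hj' | hj'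
          · have h0 : par 0 (q i x0) = par 0 (q j x0) :=
              (mem_filter.1 hi').2.trans (mem_filter.1 hj').2.symm
            have : par 0 (q i x) = par 0 (q j x) := ((hs i hiF j hjF).eq_iff (hS' hx) hx0).2 h0
            simp [Bd, this] at hb
          · exact Or.inl (Or.inr ⟨i, mem_inter.2 ⟨hi', hiR⟩, j, mem_inter.2 ⟨hj', hjB⟩, hb⟩)
          · exact Or.inr ⟨i, mem_inter.2 ⟨hi', hiR⟩, j, mem_inter.2 ⟨hj', hjB⟩, hb⟩
          · exact Or.inl (Or.inl (Or.inl (Or.inl (Or.inr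
              ⟨i, mem_inter.2 ⟨hi', hiR⟩, j, mem_inter.2 ⟨hj', hjB⟩, hb⟩))))
      · rintro (((((⟨i, hi, j, hj, hb⟩ | ⟨i, hi, j, hj, hb⟩) | ⟨i, hi, j, hj, hb⟩) |
          ⟨i, hi, j, hj, hb⟩) | ⟨i, hi, j, hj, hb⟩) | ⟨i, hi, j, hj, hb⟩) <;>
        exact ⟨i, inter_subset_inter_right (filter_subset _ _) hi, j,
          inter_subset_inter_right (filter_subset _ _) hj, hb⟩

end lines
end LT

namespace LT

open Matrix Finset Code

set_option linter.unusedSectionVars false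
set_option linter.unusedVariables false
set_option linter.unusedSimpArgs false

/-! ### The decision procedure for lines -/

lemma log_le_third {M : ℕ} (hM : 1 ≤ M) :
    ((M * (Nat.log 2 M + 1) : ℕ) : ℝ) ≤ 7 * (M : ℝ) ^ ((4 : ℝ) / 3) := by
  have hM' : (1 : ℝ) ≤ M := by exact_mod_cast hM
  have h1 : ((2 ^ Nat.log 2 M : ℕ) : ℝ) ≤ M := by
    exact_mod_cast Nat.pow_log_le_self 2 (by omega)
  have h2 : (Nat.log 2 M : ℝ) * Real.log 2 ≤ Real.log M := by
    rw [← Real.log_pow]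
    exact Real.log_le_log (by positivity) (by exact_mod_cast h1)
  have h3 := Real.log_le_rpow_div (x := (M : ℝ)) (ε := 1 / 3) (by linarith) (by norm_num)
  have h4 := Real.log_two_gt_d9
  have h5 : (1 : ℝ) ≤ (M : ℝ) ^ ((1 : ℝ) / 3) := Real.one_le_rpow hM' (by norm_num)
  have h6 : (M : ℝ) ^ ((4 : ℝ) / 3) = M * (M : ℝ) ^ ((1 : ℝ) / 3) := by
    rw [show (4 : ℝ) / 3 = 1 + 1 / 3 by norm_num, Real.rpow_add (by linarith), Real.rpow_one]
  have h7 : (Nat.log 2 M : ℝ) ≤ 6 * (M : ℝ) ^ ((1 : ℝ) / 3) := by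
    have : (0 : ℝ) ≤ Nat.log 2 M := Nat.cast_nonneg _
    have h3' : Real.log M ≤ 3 * (M : ℝ) ^ ((1 : ℝ) / 3) := by
      have : (M : ℝ) ^ ((1 : ℝ) / 3) / (1 / 3) = 3 * (M : ℝ) ^ ((1 : ℝ) / 3) := by ring
      linarith
    nlinarith
  rw [h6]
  push_cast
  nlinarith

section lines
variable {σ ι : Type} [DecidableEq ι] {q : ι → (σ → ℝ) → LineQ}

lemma dec_cmp (hq : ∀ i a c, PolyLE 1 fun x => q i x a c) (k : Fin 4) (i j : ι)
    {S : Set (σ → ℝ)} (hS : S ⊆ {x | ∀ i, dir (q i x) 0 ≠ 0}) :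
    Dec (PolyLE 120) (Cmp (fun i x => par k (q i x)) i j) 1 S := by
  have hd := fun i => poly_dir hq i 0
  have hn := fun i => poly_num hq i k
  refine (Dec.ask1 (g := fun x => (num k (q i x) * dir (q j x) 0 - num k (q j x) * dir (q i x) 0) *
    (dir (q i x) 0 * dir (q j x) 0)) ?_).imp ?_
  · exact ((((hn i).mul (hd j)).sub ((hn j).mul (hd i))).mul ((hd i).mul (hd j))).mono (by norm_num)
  · rintro S' hS' ⟨v, hv⟩
    refine ⟨v, fun x hx => ?_⟩
    have hi : dir (q i x) 0 ≠ 0 := hS (hS' hx) i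
    have hj : dir (q j x) 0 ≠ 0 := hS (hS' hx) j
    rw [← hv x hx]
    have e : (num k (q i x) * dir (q j x) 0 - num k (q j x) * dir (q i x) 0) *
        (dir (q i x) 0 * dir (q j x) 0) =
        (par k (q i x) - par k (q j x)) * (dir (q i x) 0 ^ 2 * dir (q j x) 0 ^ 2) := by
      simp only [par]
      field_simp
    have hpos : 0 < dir (q i x) 0 ^ 2 * dir (q j x) 0 ^ 2 := by positivity
    rw [e, sign_mul, sign_pos hpos, mul_one]

/-- Lines none of which is orthogonal to the first axis: pairs with distinct slopes are handled by
`dec_divide`, pairs with parallel projections by sorting the four parameters. -/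
lemma dec_lines_aux {C : ℝ} (hC0 : 0 ≤ C) (hC : Cross C) [Fintype ι]
    (hq : ∀ i a c, PolyLE 1 fun x => q i x a c) (hM : 1 ≤ Fintype.card ι)
    (Rd Bl : Finset ι) : Dec (PolyLE 120)
      (Known fun x => ∃ i ∈ Rd, ∃ j ∈ Bl, Above (q i x) (q j x))
      ⌊(28 + 72 * C) * (Fintype.card ι : ℝ) ^ ((4 : ℝ) / 3)⌋₊ {x | ∀ i, dir (q i x) 0 ≠ 0} := by
  set M := Fintype.card ι with hMd
  set S0 : Set (σ → ℝ) := {x | ∀ i, dir (q i x) 0 ≠ 0} with hS0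
  set k := Nat.log 2 M + 1 with hk
  have hMk : M < 2 ^ k := Nat.lt_pow_succ_log_self (by norm_num) M
  have hsort : ∀ a : Fin 4, ∀ S ⊆ S0, Dec (PolyLE 120)
      (Sorted (fun i x => par a (q i x)) (univ : Finset ι)) (M * k) S := fun a S hS =>
    dec_sort (S0 := S0) (fun i j S hS => dec_cmp hq a i j hS) k univ (by simpa using hMk) hS
  have h1 := Dec.list (P := PolyLE 120) (List.finRange 4)
    (fun a => Sorted (fun i x => par a (q i x)) (univ : Finset ι)) (fun _ => M * k) S0
    (fun a S S' hS h => h.anti hS) fun a _ S hS => hsort a S hS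
  have h2 := h1.bind_sub (G' := Known fun x => ∃ i ∈ Rd, ∃ j ∈ Bl, Above (q i x) (q j x))
    (h' := ⌊24 * C * ((2 : ℝ) ^ ((4 : ℝ) / 3)) ^ k⌋₊) ?_
  · refine h2.mono (Nat.le_floor ?_)
    have e : ((List.finRange 4).map fun _ => M * k).sum = 4 * (M * k) := by
      simp [List.finRange_succ]; ring
    rw [e]
    push_cast
    have f1 := log_le_third hM
    have f2 : 0 ≤ 24 * C * ((2 : ℝ) ^ ((4 : ℝ) / 3)) ^ k := by positivity
    have f3 := Nat.floor_le f2
    have f4 : ((2 : ℝ) ^ ((4 : ℝ) / 3)) ^ k ≤ 3 * (M : ℝ) ^ ((4 : ℝ) / 3) := by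
      rw [← rho_pow]
      have : ((2 ^ k : ℕ) : ℝ) ≤ 2 * M := by
        have := Nat.pow_log_le_self 2 (show M ≠ 0 by omega)
        have : 2 ^ k ≤ 2 * M := by rw [hk, pow_succ]; omega
        exact_mod_cast this
      refine (Real.rpow_le_rpow (Nat.cast_nonneg _) this (by norm_num)).trans ?_
      rw [Real.mul_rpow (by norm_num) (Nat.cast_nonneg _)]
      exact mul_le_mul_of_nonneg_right rho_bounds.2 (by positivity)
    rw [← hk] at f1
    push_cast at f1
    have f5 := mul_le_mul_of_nonneg_left f4 (show 0 ≤ 24 * C by linarith)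
    linarith
  · rintro S' hS' ⟨-, hs⟩
    have hs : ∀ a i j, Cmp (fun i x => par a (q i x)) i j S' := fun a i j =>
      hs a (List.mem_finRange a) i (mem_univ _) j (mem_univ _)
    rcases S'.eq_empty_or_nonempty with rfl | ⟨x0, hx0⟩
    · exact Dec.done _ _ ⟨false, by simp⟩
    refine (dec_divide hC0 hC hq Rd Bl k univ (by simpa using hMk.le) S' (fun x hx => hS' hx)
      fun i _ j _ => hs 0 i j).imp fun S'' hS'' hkn => ?_
    -- the answer for the pairs with parallel projections is determined by the four orders
    have hpar : Known (fun x => ∃ i ∈ Rd, ∃ j ∈ Bl, par 0 (q i x) = par 0 (q j x) ∧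
        par 1 (q i x) = par 1 (q j x) ∧ (par 2 (q i x) ≠ par 2 (q j x) ∨
          par 3 (q j x) < par 3 (q i x))) S'' := by
      classical
      refine ⟨decide (∃ i ∈ Rd, ∃ j ∈ Bl, par 0 (q i x0) = par 0 (q j x0) ∧
        par 1 (q i x0) = par 1 (q j x0) ∧ (par 2 (q i x0) ≠ par 2 (q j x0) ∨
          par 3 (q j x0) < par 3 (q i x0))), fun x hx => ?_⟩
      rw [decide_eq_true_iff]
      refine exists_congr fun i => and_congr_right fun _ => exists_congr fun j =>
        and_congr_right fun _ => ?_
      exact and_congr ((hs 0 i j).eq_iff (hS'' hx) hx0) (and_congr ((hs 1 i j).eq_iff (hS'' hx) hx0)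
        (or_congr (not_congr ((hs 2 i j).eq_iff (hS'' hx) hx0)) ((hs 3 i j).gt_iff (hS'' hx) hx0)))
    obtain ⟨b, hb⟩ := hpar
    obtain ⟨b', hb'⟩ := hkn
    refine ⟨b || b', fun x hx => ?_⟩
    have hx' : ∀ i, dir (q i x) 0 ≠ 0 := hS' (hS'' hx)
    rw [Bool.or_eq_true, ← hb x hx, ← hb' x hx]
    constructor
    · rintro ⟨i, hi, j, hj, h⟩
      rcases (above_iff (hx' i) (hx' j)).1 h with h | h
      · exact Or.inl ⟨i, hi, j, hj, h⟩
      · exact Or.inr ⟨i, by simpa using hi, j, by simpa using hj, h⟩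
    · rintro (⟨i, hi, j, hj, h⟩ | ⟨i, hi, j, hj, h⟩)
      · exact ⟨i, hi, j, hj, (above_iff (hx' i) (hx' j)).2 (Or.inl h)⟩
      · exact ⟨i, (mem_inter.1 hi).2, j, (mem_inter.1 hj).2, (above_iff (hx' i) (hx' j)).2 (Or.inr h)⟩

end lines

/-- The shear `(x, y, z) ↦ (x + ε y, y, z)`. -/
def shear (ε : ℝ) (q : LineQ) : LineQ := fun a c => q a c + if c = 0 then ε * q a 1 else 0

lemma above_shear (ε : ℝ) (q q' : LineQ) : Above (shear ε q) (shear ε q') ↔ Above q q' := by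
  refine exists_congr fun τ => exists_congr fun τ' => ?_
  simp only [shear, dir]
  simp
  intro h1 _
  constructor
  · intro h
    linear_combination h - ε * h1
  · intro h
    linear_combination h + ε * h1

/-- Lines may be orthogonal to the first axis, as long as none is vertical: an infinitesimal shear
removes this degeneracy. -/
lemma dec_lines {C : ℝ} (hC0 : 0 ≤ C) (hC : Cross C) {σ ι : Type} [DecidableEq ι] [Fintype ι]
    (idx : ι → Fin 2 → Fin 3 → σ) (hM : 1 ≤ Fintype.card ι)
    (Rd Bl : Finset ι) : Dec (PolyLE 120)
      (Known fun x : σ → ℝ => ∃ i ∈ Rd, ∃ j ∈ Bl,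
        Above (fun a c => x (idx i a c)) (fun a c => x (idx j a c)))
      (⌊(28 + 72 * C) * (Fintype.card ι : ℝ) ^ ((4 : ℝ) / 3)⌋₊ * 121)
      {x | ∀ i, x (idx i 0 0) ≠ x (idx i 1 0) ∨ x (idx i 0 1) ≠ x (idx i 1 1)} := by
  have H := dec_lines_aux hC0 hC (σ := ι × Fin 2 × Fin 3) (ι := ι)
    (q := fun i y a c => y (i, a, c)) (fun i a c => PolyLE.coord le_rfl _) hM Rd Bl
  let Γ : ι × Fin 2 × Fin 3 → Polynomial (MvPolynomial σ ℝ) := fun t =>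
    Polynomial.C (MvPolynomial.X (idx t.1 t.2.1 t.2.2)) + Polynomial.X *
      Polynomial.C (if t.2.2 = 0 then MvPolynomial.X (idx t.1 t.2.1 1) else 0)
  have hΓ : ∀ t, EpsLE 1 1 (Γ t) := by
    intro t
    refine EpsLE.add (EpsLE.C (by simp)) (((EpsLE.X (k := 1) (l := 0) le_rfl).mul
      (EpsLE.C (k := 0) (l := 1) ?_)).mono (by norm_num) (by norm_num))
    split_ifs <;> simp
  have hz : ∀ x ε i, (fun a c => epsEval Γ x ε (i, a, c)) = shear ε fun a c => x (idx i a c) := by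
    intro x ε i
    ext a c
    by_cases hc : c = 0
    · simp [epsEval, Γ, shear, hc]; ring
    · simp [epsEval, Γ, shear, hc]
  refine Dec.imp_test (Dec.imp (H.limit (k := 1) (l := 1) Γ hΓ _ ?_) ?_) (fun g hg => by simpa using hg)
  · intro x hx
    have : ∀ i, ∀ᶠ ε in nhdsWithin (0 : ℝ) (Set.Ioi 0),
        dir (fun a c => epsEval Γ x ε (i, a, c)) 0 ≠ 0 := by
      intro i
      have e : ∀ ε, dir (fun a c => epsEval Γ x ε (i, a, c)) 0 =
          (x (idx i 1 0) - x (idx i 0 0)) + ε * (x (idx i 1 1) - x (idx i 0 1)) := by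
        intro ε; rw [hz]; simp [shear, dir]; ring
      simp only [e]
      by_cases h0 : x (idx i 0 0) = x (idx i 1 0)
      · have h1 : x (idx i 0 1) ≠ x (idx i 1 1) := (hx i).resolve_left (not_not.2 h0)
        filter_upwards [self_mem_nhdsWithin] with ε hε
        have hε : (0 : ℝ) < ε := hε
        rw [h0, sub_self, zero_add]
        exact mul_ne_zero hε.ne' (sub_ne_zero.2 h1.symm)
      · have hc : Continuous fun ε : ℝ =>
          (x (idx i 1 0) - x (idx i 0 0)) + ε * (x (idx i 1 1) - x (idx i 0 1)) := by fun_prop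
        refine ((hc.continuousAt (x := 0)).eventually_ne ?_).filter_mono nhdsWithin_le_nhds
        simpa [sub_eq_zero] using Ne.symm h0
    exact Filter.eventually_all.2 this
  · rintro S' hS' ⟨T, ⟨b, hb⟩, hT⟩
    refine ⟨b, fun x hx => ?_⟩
    obtain ⟨ε, hε⟩ := (hT x hx).exists
    rw [← hb _ hε]
    simp only [hz, above_shear]

end LT

/-! ### Trees and lines -/

set_option linter.unusedVariables false
namespace LT

/-- A decision scheme for a Boolean question over `ℝ^N` is realised by an actual algebraic
decision tree of the same degree and depth. -/
lemma exists_adt {N D h : ℕ} {p : (Fin N → ℝ) → Prop} {S : Set (Fin N → ℝ)}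
    (H : Dec (PolyLE D) (Known p) h S) :
    ∃ T : ADT N Bool, T.DegLE D ∧ T.depth ≤ h ∧ ∀ x ∈ S, (T.eval x = true ↔ p x) := by
  induction H with
  | done h S hG =>
    obtain ⟨b, hb⟩ := hG
    exact ⟨ADT.leaf b, trivial, Nat.zero_le _, fun x hx => (hb x hx).symm⟩
  | ask h S g hg _ _ _ i1 i2 i3 =>
    obtain ⟨q, hq, hgq⟩ := hg
    obtain ⟨T1, d1, e1, f1⟩ := i1
    obtain ⟨T2, d2, e2, f2⟩ := i2
    obtain ⟨T3, d3, e3, f3⟩ := i3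
    refine ⟨ADT.node q T1 T2 T3, ⟨hq, d1, d2, d3⟩, ?_, fun x hx => ?_⟩
    · simp only [ADT.depth]; omega
    · rw [ADT.eval, ← hgq x]
      split_ifs with h1 h2
      · exact f1 x ⟨hx, h1⟩
      · exact f2 x ⟨hx, h2⟩
      · exact f3 x ⟨hx, lt_of_le_of_ne (not_lt.1 h1) (Ne.symm h2)⟩

lemma above_iff_span (q q' : LineQ) : Above q q' ↔
    ∃ P ∈ (affineSpan ℝ {q 0, q 1} : Set (Fin 3 → ℝ)),
    ∃ Q ∈ (affineSpan ℝ {q' 0, q' 1} : Set (Fin 3 → ℝ)),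
      P 0 = Q 0 ∧ P 1 = Q 1 ∧ Q 2 < P 2 := by
  have key : ∀ (q : LineQ) (r : ℝ) (c : Fin 3),
      AffineMap.lineMap (q 0) (q 1) r c = q 0 c + r * dir q c := by
    intro q r c
    simp [AffineMap.lineMap_apply, dir]; ring
  constructor
  · rintro ⟨τ, τ', h0, h1, h2⟩
    exact ⟨_, AffineMap.lineMap_mem_affineSpan_pair τ (q 0) (q 1), _,
      AffineMap.lineMap_mem_affineSpan_pair τ' (q' 0) (q' 1), by simpa only [key] using h0,
      by simpa only [key] using h1, by simpa only [key] using h2⟩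
  · rintro ⟨P, hP, Q, hQ, h⟩
    obtain ⟨τ, rfl⟩ := mem_affineSpan_pair_iff_exists_lineMap_eq.1 hP
    obtain ⟨τ', rfl⟩ := mem_affineSpan_pair_iff_exists_lineMap_eq.1 hQ
    simp only [key] at h
    exact ⟨τ, τ', h⟩

end LT

/-- **Decision-tree complexity of the line towering problem in `ℝ³`:**
an algebraic decision tree of constant degree and depth `O(n^{4/3})` deciding
whether some red line passes above some blue line. -/
theorem line_towering_decision_tree :
    ∃ (C : ℝ) (D : ℕ), ∀ n : ℕ, 1 ≤ n →
      ∃ T : ADT (12 * n) Bool,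
        T.DegLE D ∧
        (T.depth : ℝ) ≤ C * (n : ℝ) ^ ((4 : ℝ) / 3) ∧
        ∀ x : Fin (12 * n) → ℝ,
          (∀ i : Fin n,
            (redPt n x i 0 0, redPt n x i 0 1) ≠ (redPt n x i 1 0, redPt n x i 1 1)) →
          (∀ i : Fin n,
            (bluePt n x i 0 0, bluePt n x i 0 1) ≠ (bluePt n x i 1 0, bluePt n x i 1 1)) →
          (T.eval x = true ↔ ∃ i j : Fin n,
            ∃ P ∈ (affineSpan ℝ {redPt n x i 0, redPt n x i 1} : Set (Fin 3 → ℝ)),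
            ∃ Q ∈ (affineSpan ℝ {bluePt n x j 0, bluePt n x j 1} : Set (Fin 3 → ℝ)),
              P 0 = Q 0 ∧ P 1 = Q 1 ∧ Q 2 < P 2) := by
  obtain ⟨C, hC0, hC⟩ := LT.core_pert
  refine ⟨121 * ((28 + 72 * C) * 3), 120, fun n hn => ?_⟩
  have hcard : Fintype.card (Fin n ⊕ Fin n) = 2 * n := by simp; ring
  have H := LT.dec_lines hC0 hC (Sum.elim (redIdx n) (blueIdx n)) (by omega)
    (Finset.univ.image Sum.inl) (Finset.univ.image Sum.inr)
  obtain ⟨T, hdeg, hdep, hT⟩ := LT.exists_adt H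
  refine ⟨T, hdeg, ?_, fun x hr hb => ?_⟩
  · refine (Nat.cast_le.2 hdep).trans ?_
    rw [hcard]
    push_cast
    rw [Real.mul_rpow (by norm_num) (by positivity)]
    have h1 := LT.rho_bounds.2
    have h0 : (0 : ℝ) ≤ (n : ℝ) ^ ((4 : ℝ) / 3) := by positivity
    have h2 := Nat.floor_le (a := (28 + 72 * C) * ((2 : ℝ) ^ ((4 : ℝ) / 3) * (n : ℝ) ^ ((4 : ℝ) / 3)))
      (by positivity)
    have h3 : (28 + 72 * C) * ((2 : ℝ) ^ ((4 : ℝ) / 3) * (n : ℝ) ^ ((4 : ℝ) / 3)) ≤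
        (28 + 72 * C) * (3 * (n : ℝ) ^ ((4 : ℝ) / 3)) := by gcongr
    linarith
  · have hx : x ∈ {x : Fin (12 * n) → ℝ | ∀ i,
        x (Sum.elim (redIdx n) (blueIdx n) i 0 0) ≠ x (Sum.elim (redIdx n) (blueIdx n) i 1 0) ∨
        x (Sum.elim (redIdx n) (blueIdx n) i 0 1) ≠ x (Sum.elim (redIdx n) (blueIdx n) i 1 1)} := by
      rintro (i | i)
      · by_contra hcon
        push Not at hcon
        exact hr i (Prod.ext hcon.1 hcon.2)
      · by_contra hcon
        push Not at hcon
        exact hb i (Prod.ext hcon.1 hcon.2)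
    rw [hT x hx]
    simp only [Finset.mem_image, Finset.mem_univ, true_and, exists_exists_eq_and, Sum.elim_inl,
      Sum.elim_inr]
    exact exists_congr fun i => exists_congr fun j => LT.above_iff_span (redPt n x i) (bluePt n x j)
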